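/- arXiv:0810.2570 — 2 statements merged into one kernel-verified Lean document; each statement's English description precedes it below -/
import Mathlib

section
/- Let n ≥ 1 and let Q and Q′ be real normal defining functions of dimension n, defining hypersurfaces M and M′ with complexifications ℳ and ℳ′. Assume M is finitely nondegenerate at 0, and let ℋ = (f,g,f̃,g̃) be an HSPM sending (ℳ,0) into (ℳ′,0). Then at least one of the following holds: (i) ℋ is transversally null (g ≡ 0 and g̃ ≡ 0 near 0) and Q′(f(z,w), f̃(χ,τ), 0) = 0 for all (z,w) and (χ,τ) near 0; or (ii) ∂g/∂w(0,0) ≠ 0, det(∂f/∂z(0,0)) ≠ 0 and det(∂f̃/∂χ(0,0)) ≠ 0 — so that the Jacobians of (f,g) and of (f̃,g̃) at the origin are invertible and ℋ is a biholomorphism near 0 — and moreover M′ is finitely nondegenerate at 0. -/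
open Filter Topology Complex

namespace HSPMpaper

variable {n : ℕ}

/-- Partial derivative of `F` in the `i`-th coordinate direction. -/
noncomputable def pd (i : Fin n) (F : (Fin n → ℂ) → ℂ) : (Fin n → ℂ) → ℂ :=
  fun z => fderiv ℂ F z (Pi.single i 1)

/-- Iterated partial derivative `∂^α` for a multi-index `α`. -/
noncomputable def mpd (α : Fin n → ℕ) (F : (Fin n → ℂ) → ℂ) : (Fin n → ℂ) → ℂ :=
  ((List.ofFn fun i : Fin n => (pd i)^[α i]).foldr (· ∘ ·) id) F

/-- Componentwise complex conjugation on `ℂⁿ`. -/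
def conjV (z : Fin n → ℂ) : Fin n → ℂ := fun i => starRingEnd ℂ (z i)

/-- The conjugate defining function `Q̄(χ,z,τ) = conj (Q (conj χ) (conj z) (conj τ))`. -/
def QBar (Q : (Fin n → ℂ) → (Fin n → ℂ) → ℂ → ℂ) : (Fin n → ℂ) → (Fin n → ℂ) → ℂ → ℂ :=
  fun χ z τ => starRingEnd ℂ (Q (conjV χ) (conjV z) (starRingEnd ℂ τ))

/-- `Q` is a normal defining function (of dimension `n`): holomorphic near the origin of
`ℂⁿ × ℂⁿ × ℂ` and satisfying `Q(0,χ,τ) = τ` and `Q(z,0,τ) = τ` near `0`. -/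
def IsNormalDF (Q : (Fin n → ℂ) → (Fin n → ℂ) → ℂ → ℂ) : Prop :=
  (∀ᶠ p in 𝓝 (0 : (Fin n → ℂ) × (Fin n → ℂ) × ℂ),
      AnalyticAt ℂ (fun q : (Fin n → ℂ) × (Fin n → ℂ) × ℂ => Q q.1 q.2.1 q.2.2) p) ∧
  (∀ᶠ p in 𝓝 (0 : (Fin n → ℂ) × (Fin n → ℂ) × ℂ),
      Q 0 p.2.1 p.2.2 = p.2.2 ∧ Q p.1 0 p.2.2 = p.2.2)

/-- `Q` is a real normal defining function: normal and `Q(z,χ,Q̄(χ,z,w)) = w` near `0`. -/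
def IsRealNormalDF (Q : (Fin n → ℂ) → (Fin n → ℂ) → ℂ → ℂ) : Prop :=
  IsNormalDF Q ∧
  ∀ᶠ p in 𝓝 (0 : (Fin n → ℂ) × (Fin n → ℂ) × ℂ),
    Q p.1 p.2.1 (QBar Q p.2.1 p.1 p.2.2) = p.2.2

/-- `(f,g,f̃,g̃)` is a holomorphic Segre preserving map sending `(ℳ,0)` into `(ℳ',0)`. -/
def IsHSPM (Q Q' : (Fin n → ℂ) → (Fin n → ℂ) → ℂ → ℂ)
    (f : (Fin n → ℂ) → ℂ → Fin n → ℂ) (g : (Fin n → ℂ) → ℂ → ℂ)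
    (ft : (Fin n → ℂ) → ℂ → Fin n → ℂ) (gt : (Fin n → ℂ) → ℂ → ℂ) : Prop :=
  (∀ᶠ p in 𝓝 (0 : (Fin n → ℂ) × ℂ), AnalyticAt ℂ (fun q : (Fin n → ℂ) × ℂ => f q.1 q.2) p) ∧
  (∀ᶠ p in 𝓝 (0 : (Fin n → ℂ) × ℂ), AnalyticAt ℂ (fun q : (Fin n → ℂ) × ℂ => g q.1 q.2) p) ∧
  (∀ᶠ p in 𝓝 (0 : (Fin n → ℂ) × ℂ), AnalyticAt ℂ (fun q : (Fin n → ℂ) × ℂ => ft q.1 q.2) p) ∧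
  (∀ᶠ p in 𝓝 (0 : (Fin n → ℂ) × ℂ), AnalyticAt ℂ (fun q : (Fin n → ℂ) × ℂ => gt q.1 q.2) p) ∧
  f 0 0 = 0 ∧ g 0 0 = 0 ∧ ft 0 0 = 0 ∧ gt 0 0 = 0 ∧
  ∀ᶠ p in 𝓝 (0 : (Fin n → ℂ) × (Fin n → ℂ) × ℂ),
    g p.1 (Q p.1 p.2.1 p.2.2) =
      Q' (f p.1 (Q p.1 p.2.1 p.2.2)) (ft p.2.1 p.2.2) (gt p.2.1 p.2.2)

/-- `M` is of finite type at `0`: `(z,χ) ↦ Q(z,χ,0)` does not vanish identically near `0`. -/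
def FiniteType (Q : (Fin n → ℂ) → (Fin n → ℂ) → ℂ → ℂ) : Prop :=
  ¬ ∀ᶠ p in 𝓝 (0 : (Fin n → ℂ) × (Fin n → ℂ)), Q p.1 p.2 0 = 0

/-- Jacobian matrix of `z ↦ f(z,0)` at `z`. -/
noncomputable def jacz (f : (Fin n → ℂ) → ℂ → Fin n → ℂ) (z : Fin n → ℂ) :
    Matrix (Fin n) (Fin n) ℂ :=
  Matrix.of fun i j => pd j (fun z' => f z' 0 i) z

/-- `ℋ` is Segre transversal to `ℳ'` at `0`: `∂g/∂w(0,0) ≠ 0`. -/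
noncomputable def SegreTransversal (g : (Fin n → ℂ) → ℂ → ℂ) : Prop :=
  deriv (fun w => g 0 w) 0 ≠ 0

/-- `ℋ` is totally Segre nondegenerate at `0`. -/
def TotallySegreNondeg (f ft : (Fin n → ℂ) → ℂ → Fin n → ℂ) : Prop :=
  (¬ ∀ᶠ z in 𝓝 (0 : Fin n → ℂ), (jacz f z).det = 0) ∧
  (¬ ∀ᶠ χ in 𝓝 (0 : Fin n → ℂ), (jacz ft χ).det = 0)

/-- `ℋ` is transversally null: `g ≡ 0` and `g̃ ≡ 0` near `0`. -/
def TransversallyNull (g gt : (Fin n → ℂ) → ℂ → ℂ) : Prop :=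
  (∀ᶠ p in 𝓝 (0 : (Fin n → ℂ) × ℂ), g p.1 p.2 = 0) ∧
  (∀ᶠ p in 𝓝 (0 : (Fin n → ℂ) × ℂ), gt p.1 p.2 = 0)

/-- The `k`-th coordinate direction in `ℂⁿ × ℂ`. -/
noncomputable def dirCT (n : ℕ) (k : Fin (n + 1)) : (Fin n → ℂ) × ℂ :=
  if h : (k : ℕ) < n then (Pi.single ⟨k, h⟩ 1, 0) else (0, 1)

/-- `M` is holomorphically nondegenerate at `0`: for some `K`, the map
`(χ,τ) ↦ (∂_z^α Q(0,χ,τ))_{|α| ≤ K}` has generic rank `n+1`. -/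
def HolNondeg (Q : (Fin n → ℂ) → (Fin n → ℂ) → ℂ → ℂ) : Prop :=
  ∃ K : ℕ, ∃ A : Fin (n + 1) → Fin n → ℕ, (∀ j, (∑ i, A j i) ≤ K) ∧
    ¬ ∀ᶠ p in 𝓝 (0 : (Fin n → ℂ) × ℂ),
      (Matrix.of fun j k : Fin (n + 1) =>
        fderiv ℂ (fun q : (Fin n → ℂ) × ℂ => mpd (A j) (fun z => Q z q.1 q.2) 0) p
          (dirCT n k)).det = 0

/-- `M` is of class `𝒞` at `0`: for some `K`, the map
`χ ↦ (∂_z^α Q(0,χ,0))_{|α| ≤ K}` has generic rank `n`. -/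
def ClassC (Q : (Fin n → ℂ) → (Fin n → ℂ) → ℂ → ℂ) : Prop :=
  ∃ K : ℕ, ∃ A : Fin n → Fin n → ℕ, (∀ j, (∑ i, A j i) ≤ K) ∧
    ¬ ∀ᶠ χ in 𝓝 (0 : Fin n → ℂ),
      (Matrix.of fun j k : Fin n =>
        pd k (fun χ' => mpd (A j) (fun z => Q z χ' 0) 0) χ).det = 0

/-- `M` is finitely nondegenerate at `0`: for some `K`, the vectors
`∂_χ ∂_z^α Q(0,0,0)`, `|α| ≤ K`, span `ℂⁿ`. -/
def FinNondeg (Q : (Fin n → ℂ) → (Fin n → ℂ) → ℂ → ℂ) : Prop :=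
  ∃ K : ℕ, Submodule.span ℂ
    {v : Fin n → ℂ | ∃ α : Fin n → ℕ, (∑ i, α i) ≤ K ∧
      v = fun i => pd i (fun χ => mpd α (fun z => Q z χ 0) 0) 0} = ⊤

/-- Full Jacobian matrix of `(z,w) ↦ (f(z,w), g(z,w))` at `p ∈ ℂⁿ × ℂ`. -/
noncomputable def jacFull (f : (Fin n → ℂ) → ℂ → Fin n → ℂ) (g : (Fin n → ℂ) → ℂ → ℂ)
    (p : (Fin n → ℂ) × ℂ) : Matrix (Fin (n + 1)) (Fin (n + 1)) ℂ :=
  Matrix.of fun i k =>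
    fderiv ℂ (fun q : (Fin n → ℂ) × ℂ => (Fin.snoc (f q.1 q.2) (g q.1 q.2) : Fin (n + 1) → ℂ) i) p (dirCT n k)

/-- The degree-`d` homogeneous term of the Taylor series of `φ` at `0`. -/
noncomputable def homogTerm (d : ℕ) (φ : (Fin n → ℂ) → ℂ) : (Fin n → ℂ) → ℂ :=
  fun z => iteratedFDeriv ℂ d φ 0 (fun _ => z) / (d.factorial : ℂ)

/-- The order of vanishing of `φ` at `0`. -/
noncomputable def vanishOrder (φ : (Fin n → ℂ) → ℂ) : ℕ :=
  sInf {d | homogTerm d φ ≠ 0}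

/-!
A function `q (z, p)` on `E × P` is viewed as a family of graphs `w = q (z, p)` over `E`, indexed by
the parameter `p = (χ, τ)`; finite nondegeneracy says that no `v ≠ 0` satisfies
`∂_p q (z, 0) v = 0` for all small `z`. With `F = (f, g)` and `φ = (f̃, g̃)`, the function
`Φ (z, w, y) = g (z, w) - q' (f (z, w), y)` vanishes at `(z, q (z, p), φ p)`.

Suppose `det ∂φ` vanishes identically. At each `p` some `v ≠ 0` is killed by `∂φ`, while
`∂_p q (z, p) v ≠ 0` for generic `z`, so differentiating `Φ (z, q (z, p), φ p) = 0` along `v` shows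
that `∂_w Φ` vanishes at the same points as `Φ`. By induction all `∂_w`-derivatives do, hence
`g (z, w) = q' (f (z, w), φ p)` for independent `z`, `w`, `p`, and the normalization of `q` and `q'`
forces `g = 0` and `g̃ = 0`. By reality, conjugation exchanges the roles of `F` and `φ`; so
otherwise neither `det ∂F` nor `det ∂φ` vanishes identically.

In that case, where `∂F (z, q (z, p))` is invertible, the differentiated identity shows that any `v`
killed by `∂φ` at `p` satisfies `∂_p q (z, p) v = 0`. For each small `p ≠ 0` this happens for some
`z`, and then for all `z` by the identity theorem, so `v = 0` by nondegeneracy. Thus `det ∂φ` has no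
zeros near `0` other than possibly `0` itself; but a holomorphic function of `n + 1 > 1` variables
has no isolated zeros, so `det ∂φ (0) ≠ 0`.
-/

section StarConjugation

variable {𝕜 E F : Type*} [NontriviallyNormedField 𝕜] [StarRing 𝕜]
  [NormedAddCommGroup E] [NormedSpace 𝕜 E] [StarAddMonoid E] [StarModule 𝕜 E] [NormedStarGroup E]
  [NormedAddCommGroup F] [NormedSpace 𝕜 F] [StarAddMonoid F] [StarModule 𝕜 F] [NormedStarGroup F]

/-- The conjugate `m ↦ star (p (star m))` of a continuous multilinear map. -/
noncomputable def starConj {k : ℕ} (p : ContinuousMultilinearMap 𝕜 (fun _ : Fin k => E) F) :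
    ContinuousMultilinearMap 𝕜 (fun _ : Fin k => E) F :=
  MultilinearMap.mkContinuous
    { toFun := fun m => star (p (star m))
      map_update_add' := fun m i x y => by
        simp only [← Function.update_star, star_add, p.map_update_add]
      map_update_smul' := fun m i c x => by
        simp only [← Function.update_star, star_smul, p.map_update_smul, star_star] }
    ‖p‖ fun m => by
      simpa only [norm_star, Pi.star_apply, MultilinearMap.coe_mk] using p.le_opNorm (star m)

theorem analyticAt_star_star {f : E → F} {x : E} (hf : AnalyticAt 𝕜 f x) :
    AnalyticAt 𝕜 (star ∘ f ∘ star) (star x) := by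
  obtain ⟨p, r, hp⟩ := hf
  refine ⟨fun k => starConj (p k), r, hp.r_le.trans ?_, hp.r_pos, fun {y} hy => ?_⟩
  · exact FormalMultilinearSeries.radius_le_of_le fun k =>
      MultilinearMap.mkContinuous_norm_le _ (norm_nonneg _) _
  · have hy' : star y ∈ Metric.eball (0 : E) r := by
      simpa only [mem_eball_zero_iff, enorm_eq_nnnorm, nnnorm_star] using hy
    simpa only [Function.comp_apply, star_add, star_star] using! (hp.hasSum hy').star

end StarConjugation

section Zeros

theorem eqOn_zero_of_mul_eqOn_zero {E : Type*} [NormedAddCommGroup E] [NormedSpace ℂ E]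
    {f g : E → ℂ} {U : Set E} (hf : AnalyticOnNhd ℂ f U) (hg : AnalyticOnNhd ℂ g U)
    (hU : IsOpen U) (hUc : IsPreconnected U) (hfg : ∀ z ∈ U, f z * g z = 0)
    {z₀ : E} (hz₀ : z₀ ∈ U) (hgz₀ : g z₀ ≠ 0) : Set.EqOn f 0 U := by
  refine hf.eqOn_zero_of_preconnected_of_eventuallyEq_zero hUc hz₀ ?_
  filter_upwards [hU.mem_nhds hz₀, (hg z₀ hz₀).continuousAt.eventually_ne hgz₀] with z hz hgz
  exact (mul_eq_zero.1 (hfg z hz)).resolve_right hgz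

theorem le_norm_center_of_le_norm_sphere {f : ℂ → ℂ} {c : ℂ} {r C : ℝ} (hr : 0 < r) (hC : 0 < C)
    (hf : DifferentiableOn ℂ f (Metric.closedBall c r)) (hf0 : ∀ z ∈ Metric.closedBall c r, f z ≠ 0)
    (hfC : ∀ z ∈ Metric.sphere c r, C ≤ ‖f z‖) : C ≤ ‖f c‖ := by
  have hinv : DiffContOnCl ℂ f⁻¹ (Metric.ball c r) := by
    refine DiffContOnCl.inv (DifferentiableOn.diffContOnCl ?_) ?_ <;> rwa [closure_ball c hr.ne']
  have hle : ‖f⁻¹ c‖ ≤ C⁻¹ := by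
    refine norm_le_of_forall_mem_frontier_norm_le Metric.isBounded_ball hinv (fun z hz => ?_)
      (subset_closure (Metric.mem_ball_self hr))
    rw [frontier_ball c hr.ne'] at hz
    rw [Pi.inv_apply, norm_inv]
    exact inv_anti₀ hC (hfC z hz)
  rw [Pi.inv_apply, norm_inv] at hle
  exact (inv_le_inv₀ (norm_pos_iff.2 (hf0 c (Metric.mem_closedBall_self hr.le))) hC).1 hle

theorem frequently_eq_zero_of_analyticAt_prod {d : ℂ × ℂ → ℂ} (hd : AnalyticAt ℂ d 0)
    (h0 : d 0 = 0) : ∃ᶠ p in 𝓝[≠] (0 : ℂ × ℂ), d p = 0 := by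
  intro hne
  obtain ⟨r, hr, hball⟩ := Metric.nhds_basis_closedBall.eventually_iff.1
    (hd.eventually_analyticAt.and (eventually_nhdsWithin_iff.1 hne))
  have hmem {x y : ℂ} (hx : x ∈ Metric.closedBall 0 r) (hy : y ∈ Metric.closedBall 0 r) :
      (x, y) ∈ Metric.closedBall (0 : ℂ × ℂ) r := by
    rw [mem_closedBall_zero_iff] at hx hy ⊢
    exact max_le hx hy
  have hsub : Metric.sphere (0 : ℂ) r ×ˢ Metric.closedBall (0 : ℂ) r ⊆ Metric.closedBall 0 r :=
    fun p hp => hmem (Metric.sphere_subset_closedBall hp.1) hp.2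
  obtain ⟨C, hC, hdC⟩ : ∃ C > 0, ∀ p ∈ Metric.sphere (0 : ℂ) r ×ˢ Metric.closedBall (0 : ℂ) r,
      C ≤ ‖d p‖ := by
    refine ((isCompact_sphere _ _).prod (isCompact_closedBall _ _)).exists_forall_le'
      (fun p hp => (hball (hsub hp)).1.continuousAt.norm.continuousWithinAt) fun p hp => ?_
    refine norm_pos_iff.2 ((hball (hsub hp)).2 fun hp0 => hr.ne ?_)
    simpa [show p = 0 from hp0] using hp.1
  have hlow : ∀ᶠ y in 𝓝[≠] (0 : ℂ), C ≤ ‖d (0, y)‖ := by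
    filter_upwards [nhdsWithin_le_nhds (Metric.closedBall_mem_nhds (0 : ℂ) hr),
      self_mem_nhdsWithin] with y hy hy0
    refine le_norm_center_of_le_norm_sphere (f := fun x => d (x, y)) hr hC (fun x hx => ?_)
      (fun x hx => (hball (hmem hx hy)).2 fun h => hy0 (congrArg Prod.snd h))
      fun x hx => hdC _ ⟨hx, hy⟩
    exact ((hball (hmem hx hy)).1.differentiableAt.comp (f := fun x => (x, y)) x
      (by fun_prop)).differentiableWithinAt
  have hlim : Tendsto (fun y : ℂ => ‖d (0, y)‖) (𝓝[≠] 0) (𝓝 ‖d (0, 0)‖) :=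
    (hd.continuousAt.comp (f := fun y : ℂ => ((0 : ℂ), y)) (x := 0)
      (by fun_prop)).norm.tendsto.mono_left nhdsWithin_le_nhds
  refine hC.not_ge ((ge_of_tendsto hlim hlow).trans_eq ?_)
  rw [Prod.mk_zero_zero, h0, norm_zero]

theorem frequently_eq_zero_of_one_lt_finrank {X : Type*} [NormedAddCommGroup X] [NormedSpace ℂ X]
    (hX : 1 < Module.finrank ℂ X) {d : X → ℂ} (hd : AnalyticAt ℂ d 0) (h0 : d 0 = 0) :
    ∃ᶠ p in 𝓝[≠] (0 : X), d p = 0 := by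
  have : Nontrivial X := Module.nontrivial_of_finrank_pos (zero_lt_one.trans hX)
  obtain ⟨u, hu⟩ := exists_ne (0 : X)
  obtain ⟨v, huv⟩ := exists_linearIndependent_pair_of_one_lt_finrank hX hu
  let L : ℂ × ℂ →L[ℂ] X := (ContinuousLinearMap.toSpanSingleton ℂ u).coprod
    (ContinuousLinearMap.toSpanSingleton ℂ v)
  have hL : ∀ p, L p = 0 → p = 0 := fun p hp =>
    Prod.ext_iff.2 (LinearIndependent.pair_iff.1 huv p.1 p.2 (by simpa [L] using hp))
  have hlim : Tendsto L (𝓝[≠] 0) (𝓝[≠] 0) := by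
    refine tendsto_nhdsWithin_iff.2 ⟨?_, ?_⟩
    · simpa only [map_zero] using (L.continuous.tendsto 0).mono_left nhdsWithin_le_nhds
    · filter_upwards [self_mem_nhdsWithin] with p hp hp0 using hp (hL p hp0)
  refine hlim.frequently (frequently_eq_zero_of_analyticAt_prod (d := d ∘ L) ?_ ?_)
  · exact hd.comp_of_eq (L.analyticAt 0) (map_zero L)
  · rwa [Function.comp_apply, map_zero]

end Zeros

theorem analyticAt_det_fderiv {X : Type*} [NormedAddCommGroup X] [NormedSpace ℂ X]
    [FiniteDimensional ℂ X] {F : X → X} {x : X} (hF : AnalyticAt ℂ F x) :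
    AnalyticAt ℂ (fun y => (fderiv ℂ F y).det) x := by
  have : CompleteSpace X := FiniteDimensional.complete ℂ X
  let b := Module.finBasis ℂ X
  simp only [ContinuousLinearMap.det, ← LinearMap.det_toMatrix b, Matrix.det_apply']
  refine Finset.analyticAt_fun_sum _ fun σ _ => analyticAt_const.fun_mul
    (Finset.analyticAt_fun_prod _ fun i _ => ?_)
  simp only [LinearMap.toMatrix_apply]
  exact ((b.coord (σ i)).toContinuousLinearMap.analyticAt _).comp
    (((ContinuousLinearMap.apply ℂ X (b i)).analyticAt _).comp hF.fderiv)

section DirectionalDerivatives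

variable {X X' Y : Type*} [NormedAddCommGroup X] [NormedSpace ℂ X] [NormedAddCommGroup X']
  [NormedSpace ℂ X'] [NormedAddCommGroup Y] [NormedSpace ℂ Y]

/-- The derivative of `F` in the constant direction `v`, as a function of the base point, so that
it can be iterated. -/
noncomputable def dirDeriv (v : X) (F : X → Y) (x : X) : Y := fderiv ℂ F x v

/-- The iterated directional derivative `∂_{v₁} ⋯ ∂_{vₖ} F` along a list `[v₁, …, vₖ]`; it compares
the derivatives `mpd α` with Taylor coefficients. -/
noncomputable def iterDirDeriv (l : List X) (F : X → Y) : X → Y := l.foldr dirDeriv F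

theorem iterDirDeriv_cons (v : X) (l : List X) (F : X → Y) :
    iterDirDeriv (v :: l) F = dirDeriv v (iterDirDeriv l F) := rfl

theorem iterDirDeriv_append (l l' : List X) (F : X → Y) :
    iterDirDeriv (l ++ l') F = iterDirDeriv l (iterDirDeriv l' F) := List.foldr_append

theorem iterDirDeriv_replicate (k : ℕ) (v : X) (F : X → Y) :
    iterDirDeriv (List.replicate k v) F = (dirDeriv v)^[k] F := by
  induction k with
  | zero => rfl
  | succ k ih => rw [List.replicate_succ, iterDirDeriv_cons, ih, Function.iterate_succ_apply']

theorem dirDeriv_congr {F G : X → Y} {x : X} (h : F =ᶠ[𝓝 x] G) (v : X) :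
    dirDeriv v F =ᶠ[𝓝 x] dirDeriv v G :=
  h.fderiv.mono fun _ hy => DFunLike.congr_fun hy v

theorem iterDirDeriv_congr {F G : X → Y} {x : X} (h : F =ᶠ[𝓝 x] G) (l : List X) :
    iterDirDeriv l F =ᶠ[𝓝 x] iterDirDeriv l G := by
  induction l with
  | nil => exact h
  | cons v l ih => exact dirDeriv_congr ih v

theorem iterDirDeriv_zero (l : List X) : iterDirDeriv l (0 : X → Y) = 0 := by
  induction l with
  | nil => rfl
  | cons v l ih =>
    funext x
    rw [iterDirDeriv_cons, ih, dirDeriv, fderiv_zero]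
    rfl

variable [CompleteSpace Y]

theorem analyticAt_dirDeriv {F : X → Y} {x : X} (hF : AnalyticAt ℂ F x) (v : X) :
    AnalyticAt ℂ (dirDeriv v F) x :=
  ((ContinuousLinearMap.apply ℂ Y v).analyticAt _).comp hF.fderiv

theorem analyticAt_iterDirDeriv {F : X → Y} {x : X} (hF : AnalyticAt ℂ F x) (l : List X) :
    AnalyticAt ℂ (iterDirDeriv l F) x := by
  induction l with
  | nil => exact hF
  | cons v l ih => exact analyticAt_dirDeriv ih v

theorem dirDeriv_comm {F : X → Y} {x : X} (hF : AnalyticAt ℂ F x) (u v : X) :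
    dirDeriv u (dirDeriv v F) x = dirDeriv v (dirDeriv u F) x := by
  have happly (v u : X) : dirDeriv u (dirDeriv v F) x = fderiv ℂ (fderiv ℂ F) x u v :=
    DFunLike.congr_fun (hF.fderiv.differentiableAt.hasFDerivAt.clm_apply
      (hasFDerivAt_const v x)).fderiv u |>.trans (by simp)
  rw [happly, happly]
  exact (hF.contDiffAt (n := ⊤)).isSymmSndFDerivAt_of_omega u v

theorem iterDirDeriv_perm {l l' : List X} (hl : l.Perm l') {F : X → Y} {x : X}
    (hF : AnalyticAt ℂ F x) : iterDirDeriv l F =ᶠ[𝓝 x] iterDirDeriv l' F := by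
  induction hl with
  | nil => rfl
  | cons v _ ih => exact dirDeriv_congr ih v
  | swap u v l =>
    filter_upwards [(analyticAt_iterDirDeriv hF l).eventually_analyticAt] with y hy
      using dirDeriv_comm hy v u
  | trans _ _ ih ih' => exact ih.trans ih'

theorem iterDirDeriv_comp_affine {F : X → Y} (L : X' →L[ℂ] X) (c : X) {x : X'}
    (hF : AnalyticAt ℂ F (L x + c)) (l : List X') :
    iterDirDeriv l (fun x' => F (L x' + c)) =ᶠ[𝓝 x]
      fun x' => iterDirDeriv (l.map L) F (L x' + c) := by
  induction l with
  | nil => rfl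
  | cons v l ih =>
    have han : ∀ᶠ y in 𝓝 x, AnalyticAt ℂ (iterDirDeriv (l.map L) F) (L y + c) :=
      (by fun_prop : Continuous fun y => L y + c).continuousAt.eventually
        (analyticAt_iterDirDeriv hF _).eventually_analyticAt
    filter_upwards [dirDeriv_congr ih v, han] with y hy hany
    exact hy.trans (DFunLike.congr_fun
      (hany.differentiableAt.hasFDerivAt.comp y (L.hasFDerivAt.add_const c)).fderiv v)

theorem iterDirDeriv_comp_prodMk_left {F : X × X' → Y} {x : X} {c : X'}
    (hF : AnalyticAt ℂ F (x, c)) (l : List X) :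
    iterDirDeriv l (fun x => F (x, c)) x =
      iterDirDeriv (l.map (ContinuousLinearMap.inl ℂ X X')) F (x, c) := by
  simpa using (iterDirDeriv_comp_affine (.inl ℂ X X') (0, c) (by simpa using hF) l).self_of_nhds

theorem iteratedFDeriv_eq_iterDirDeriv {F : X → Y} {x : X} (hF : AnalyticAt ℂ F x) {k : ℕ}
    (m : Fin k → X) : iteratedFDeriv ℂ k F x m = iterDirDeriv (List.ofFn m) F x := by
  induction k generalizing x with
  | zero => rw [iteratedFDeriv_zero_apply, List.ofFn_zero]; rfl
  | succ k ih =>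
    have hdiff : DifferentiableAt ℂ (iteratedFDeriv ℂ k F) x :=
      (hF.contDiffAt (n := ⊤)).differentiableAt_iteratedFDeriv (WithTop.coe_lt_top _)
    have hcongr : (fun y => iteratedFDeriv ℂ k F y (Fin.tail m)) =ᶠ[𝓝 x]
        iterDirDeriv (List.ofFn (Fin.tail m)) F := by
      filter_upwards [hF.eventually_analyticAt] with y hy using ih hy _
    rw [iteratedFDeriv_succ_apply_left, List.ofFn_succ, iterDirDeriv_cons]
    calc fderiv ℂ (iteratedFDeriv ℂ k F) x (m 0) (Fin.tail m)
        = dirDeriv (m 0) (fun y => iteratedFDeriv ℂ k F y (Fin.tail m)) x :=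
          (fderiv_continuousMultilinear_apply_const_apply hdiff _ _).symm
      _ = dirDeriv (m 0) (iterDirDeriv (List.ofFn (Fin.tail m)) F) x :=
          (dirDeriv_congr hcongr (m 0)).self_of_nhds

theorem eventually_eq_zero_of_iterDirDeriv_eq_zero {ι : Type*} (b : Module.Basis ι ℂ X)
    {F : X → Y} {x : X} (hF : AnalyticAt ℂ F x) (h : ∀ l : List ι, iterDirDeriv (l.map b) F x = 0) :
    F =ᶠ[𝓝 x] 0 := by
  have hzero (k : ℕ) : iteratedFDeriv ℂ k F x = 0 :=
    ContinuousMultilinearMap.toMultilinearMap_injective <|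
      Module.Basis.ext_multilinear (fun _ => b) fun m => by
        refine (iteratedFDeriv_eq_iterDirDeriv hF (b ∘ m)).trans ?_
        rw [← List.map_ofFn, h]
        rfl
  obtain ⟨p, r, hp⟩ := hF
  filter_upwards [Metric.eball_mem_nhds x hp.r_pos] with y hy
  have hsum := hp.hasSum_iteratedFDeriv (y := y - x) (by simpa [edist_eq_enorm_sub] using hy)
  simpa [hzero] using hsum.unique (by simp [hzero])

theorem eventually_add_smul_eq_zero {F : X → Y} {x v : X}
    (hF : AnalyticAt ℂ F x) (h : ∀ k, (dirDeriv v)^[k] F x = 0) :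
    ∀ᶠ s : ℂ in 𝓝 0, F (x + s • v) = 0 := by
  let L := ContinuousLinearMap.toSpanSingleton ℂ v
  have hx : L 0 + x = x := by rw [map_zero, zero_add]
  have hF' : AnalyticAt ℂ F (L 0 + x) := hx.symm ▸ hF
  have hline : AnalyticAt ℂ (fun s => F (L s + x)) 0 :=
    hF'.comp_of_eq ((L.analyticAt 0).add analyticAt_const) rfl
  refine (eventually_eq_zero_of_iterDirDeriv_eq_zero (Module.Basis.singleton Unit ℂ) hline
    fun l => ?_).mono fun s hs => by simpa [L, add_comm] using hs
  have hl : (l.map (Module.Basis.singleton Unit ℂ)).map L = List.replicate l.length v := by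
    simp [L]
  rw [(iterDirDeriv_comp_affine L x hF' _).self_of_nhds, hl, iterDirDeriv_replicate]
  simpa only [hx] using h l.length

end DirectionalDerivatives

section SegreFamily

variable {E E' P P' Y : Type*}
  [NormedAddCommGroup E] [NormedSpace ℂ E] [NormedAddCommGroup E'] [NormedSpace ℂ E']
  [NormedAddCommGroup P] [NormedSpace ℂ P] [NormedAddCommGroup P'] [NormedSpace ℂ P']
  [NormedAddCommGroup Y] [NormedSpace ℂ Y]

/-- A normalized family of graphs `w = q (z, p)`, the *Segre varieties*, parametrized
holomorphically by `p`; the graph of parameter `0` is the hyperplane `w = 0`. A normal defining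
function `Q` is such a family with `p = (χ, τ)`. -/
structure IsSegreFamily (q : E × P → ℂ) : Prop where
  analyticAt : AnalyticAt ℂ q 0
  eventually_apply_zero : ∀ᶠ z in 𝓝 (0 : E), q (z, 0) = 0

/-- Nondegeneracy of a family `q` at `p = 0`: no direction `v` in the parameter space is
annihilated by the covectors `∂_p q (z, 0)` for all `z` near `0`. For a normal defining function
this is finite nondegeneracy. -/
def IsSegreNondeg (q : E × P → ℂ) : Prop :=
  ∀ v : P, (∀ᶠ z in 𝓝 (0 : E), fderiv ℂ q (z, 0) (0, v) = 0) → v = 0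

theorem IsSegreFamily.apply_zero {q : E × P → ℂ} (hq : IsSegreFamily q) : q 0 = 0 :=
  hq.eventually_apply_zero.self_of_nhds

theorem IsSegreFamily.tendsto_zero {q : E × P → ℂ} (hq : IsSegreFamily q) :
    Tendsto q (𝓝 0) (𝓝 0) := by
  simpa only [hq.apply_zero] using hq.analyticAt.continuousAt.tendsto

theorem eventually_analyticAt_prodMk_zero {q : E × P → ℂ} (hq : AnalyticAt ℂ q 0) :
    ∀ᶠ z in 𝓝 (0 : E), AnalyticAt ℂ q (z, 0) :=
  (Continuous.prodMk_left (0 : P)).continuousAt.eventually hq.eventually_analyticAt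

theorem hasFDerivAt_comp_prodMk_right {q : E × P → Y} {z : E} {p : P}
    (hq : DifferentiableAt ℂ q (z, p)) :
    HasFDerivAt (fun p' => q (z, p')) (fderiv ℂ q (z, p) ∘L .inr ℂ E P) p :=
  hq.hasFDerivAt.comp p (hasFDerivAt_prodMk_right z p)

theorem hasFDerivAt_comp_prodMk_left {q : E × P → Y} {z : E} {p : P}
    (hq : DifferentiableAt ℂ q (z, p)) :
    HasFDerivAt (fun z' => q (z', p)) (fderiv ℂ q (z, p) ∘L .inl ℂ E P) z :=
  hq.hasFDerivAt.comp z (hasFDerivAt_prodMk_left z p)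

theorem exists_finset_forall_eq_zero [FiniteDimensional ℂ P] {ι : Type*} {ℓ : ι → P →ₗ[ℂ] ℂ}
    {N : Set ι} (hℓ : ∀ v, (∀ i ∈ N, ℓ i v = 0) → v = 0) :
    ∃ t : Finset ι, ↑t ⊆ N ∧ ∀ v, (∀ i ∈ t, ℓ i v = 0) → v = 0 := by
  classical
  obtain ⟨s, hs, hker⟩ := CompleteLattice.WellFoundedGT.isSupFiniteCompact (Submodule ℂ P)ᵒᵈ
    ((fun i => LinearMap.ker (ℓ i)) '' N)
  obtain ⟨t, ht, rfl⟩ := Finset.subset_set_image_iff.1 hs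
  have hle : ∀ i ∈ N, t.inf (fun i => LinearMap.ker (ℓ i)) ≤ LinearMap.ker (ℓ i) := fun i hi =>
    ((le_sSup (Set.mem_image_of_mem _ hi)).trans_eq (hker.trans (Finset.sup_image _ _ _)) :)
  exact ⟨t, ht, fun v hv => hℓ v fun i hi => hle i hi (Submodule.mem_finsetInf.2 hv)⟩

/-- The differential at `p` of the finite sample `p ↦ (q (z, p))_{z ∈ t}` of a family. -/
noncomputable def sampleFDeriv (q : E × P → ℂ) (t : Finset E) (p : P) : P →L[ℂ] t → ℂ :=
  .pi fun z => fderiv ℂ q (z, p) ∘L .inr ℂ E P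

theorem injective_sampleFDeriv_iff {q : E × P → ℂ} {t : Finset E} {p : P} :
    Function.Injective (sampleFDeriv q t p) ↔
      ∀ v, (∀ z ∈ t, fderiv ℂ q (z, p) (0, v) = 0) → v = 0 := by
  rw [injective_iff_map_eq_zero]
  simp [sampleFDeriv, funext_iff]

theorem IsSegreNondeg.exists_finset [FiniteDimensional ℂ P] {q : E × P → ℂ}
    (h : IsSegreNondeg q) {U N : Set E} (hq : ∀ z ∈ U, AnalyticAt ℂ q (z, 0))
    (hU : IsPreconnected U) (hU0 : U ∈ 𝓝 0) (hN : IsOpen N) (hNU : N ⊆ U) (hNne : N.Nonempty) :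
    ∃ t : Finset E, ↑t ⊆ N ∧ Function.Injective (sampleFDeriv q t 0) := by
  simp only [injective_sampleFDeriv_iff]
  refine exists_finset_forall_eq_zero
    (ℓ := fun z => ((fderiv ℂ q (z, 0) ∘L .inr ℂ E P : P →L[ℂ] ℂ) : P →ₗ[ℂ] ℂ)) fun v hv => h v ?_
  have han : AnalyticOnNhd ℂ (fun z => fderiv ℂ q (z, 0) (0, v)) U := fun z hz =>
    ((ContinuousLinearMap.apply ℂ ℂ ((0 : E), v)).analyticAt _).comp
      ((hq z hz).fderiv.comp_of_eq (analyticAt_id.prod analyticAt_const) rfl)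
  obtain ⟨z, hz⟩ := hNne
  have hzero : (fun z => fderiv ℂ q (z, 0) (0, v)) =ᶠ[𝓝 z] 0 := by
    filter_upwards [hN.mem_nhds hz] with z' hz' using hv z' hz'
  exact (han.eqOn_zero_of_preconnected_of_eventuallyEq_zero hU (hNU hz) hzero).eventuallyEq_of_mem
    hU0

theorem eventually_injective_sampleFDeriv [FiniteDimensional ℂ P] {q : E × P → ℂ} {t : Finset E}
    (hq : ∀ z ∈ t, AnalyticAt ℂ q (z, 0)) (ht : Function.Injective (sampleFDeriv q t 0)) :
    ∀ᶠ p in 𝓝 0, Function.Injective (sampleFDeriv q t p) := by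
  have hcont : ContinuousAt (sampleFDeriv q t) 0 := by
    refine (ContinuousLinearMap.piEquivL ℂ P fun _ : t => ℂ).continuous.continuousAt.comp
      (f := fun p (z : t) => fderiv ℂ q (z, p) ∘L .inr ℂ E P) (continuousAt_pi.2 fun z => ?_)
    have hz : ContinuousAt (fun p : P => fderiv ℂ q (z, p)) 0 :=
      (hq z z.2).fderiv.continuousAt.comp (f := fun p : P => ((z : E), p)) (by fun_prop)
    exact hz.clm_comp continuousAt_const
  exact hcont.eventually (ContinuousLinearMap.isOpen_injective.mem_nhds ht)

theorem eventually_exists_apply_ne_zero [FiniteDimensional ℂ P] {q : E × P → ℂ} {t : Finset E}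
    (hq : ∀ z ∈ t, AnalyticAt ℂ q (z, 0)) (ht : Function.Injective (sampleFDeriv q t 0)) :
    ∀ᶠ p in 𝓝[≠] 0, ∃ z ∈ t, q (z, p) ≠ 0 := by
  have hderiv : HasFDerivAt (fun p (z : t) => q (z, p)) (sampleFDeriv q t 0) 0 :=
    hasFDerivAt_pi.2 fun z => hasFDerivAt_comp_prodMk_right (hq z z.2).differentiableAt
  obtain ⟨C, -, hC⟩ := (sampleFDeriv q t 0 : P →ₗ[ℂ] t → ℂ).exists_antilipschitzWith
    (LinearMap.ker_eq_bot.2 ht)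
  filter_upwards [hderiv.eventually_ne (c := 0) ⟨C, hC⟩] with p hp
  obtain ⟨z, hz⟩ := Function.ne_iff.1 hp
  exact ⟨z, z.2, hz⟩

theorem IsSegreNondeg.eventually_exists_fderiv_ne_zero [FiniteDimensional ℂ P] {q : E × P → ℂ}
    (h : IsSegreNondeg q) (hq : AnalyticAt ℂ q 0) {U : Set E} (hU : U ∈ 𝓝 0) :
    ∀ᶠ p in 𝓝 0, ∀ v ≠ 0, ∃ z ∈ U, fderiv ℂ q (z, p) (0, v) ≠ 0 := by
  obtain ⟨r, hr, hball⟩ :=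
    Metric.eventually_nhds_iff_ball.1 ((eventually_analyticAt_prodMk_zero hq).and hU)
  obtain ⟨t, htU, ht⟩ := h.exists_finset (fun z hz => (hball z hz).1)
    (convex_ball _ _).isPreconnected (Metric.ball_mem_nhds 0 hr) Metric.isOpen_ball subset_rfl
    ⟨0, Metric.mem_ball_self hr⟩
  filter_upwards [eventually_injective_sampleFDeriv (fun z hz => (hball z (htU hz)).1) ht]
    with p hp v hv
  by_contra! hcon
  exact hv (injective_sampleFDeriv_iff.1 hp v fun z hz => hcon z (hball z (htU hz)).2)

theorem dirDeriv_eq_zero_of_eq_zero_on_graph {U : Set E} {V : Set P} (hU : IsOpen U)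
    (hUc : IsPreconnected U) (hV : IsOpen V) {q : E × P → ℂ} {φ : P → Y} {Ψ : E × ℂ × Y → ℂ}
    (hq : ∀ z ∈ U, ∀ p ∈ V, AnalyticAt ℂ q (z, p)) (hφ : ∀ p ∈ V, DifferentiableAt ℂ φ p)
    (hker : ∀ p ∈ V, ∃ v, fderiv ℂ φ p v = 0 ∧ ∃ z ∈ U, fderiv ℂ q (z, p) (0, v) ≠ 0)
    (hΨ : ∀ z ∈ U, ∀ p ∈ V, AnalyticAt ℂ Ψ (z, q (z, p), φ p))
    (hzero : ∀ z ∈ U, ∀ p ∈ V, Ψ (z, q (z, p), φ p) = 0) :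
    ∀ z ∈ U, ∀ p ∈ V, dirDeriv (0, 1, 0) Ψ (z, q (z, p), φ p) = 0 := by
  intro z hz p hp
  obtain ⟨v, hv, z₀, hz₀, hz₀v⟩ := hker p hp
  have han : AnalyticOnNhd ℂ (fun z => dirDeriv (0, 1, 0) Ψ (z, q (z, p), φ p)) U := fun z hz =>
    (analyticAt_dirDeriv (hΨ z hz p hp) _).comp_of_eq (analyticAt_id.prod
      (((hq z hz p hp).comp_of_eq (analyticAt_id.prod analyticAt_const) rfl).prod
        analyticAt_const)) rfl
  have hqv : AnalyticOnNhd ℂ (fun z => fderiv ℂ q (z, p) (0, v)) U := fun z hz =>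
    (analyticAt_dirDeriv (hq z hz p hp) (0, v)).comp_of_eq (analyticAt_id.prod analyticAt_const) rfl
  refine eqOn_zero_of_mul_eqOn_zero han hqv hU hUc (fun z hz => ?_) hz₀ hz₀v hz
  have hcurve := hasFDerivAt_comp_prodMk_right (hq z hz p hp).differentiableAt
  have hΨd := (hΨ z hz p hp).differentiableAt.hasFDerivAt.comp p
    ((hasFDerivAt_const z p).prodMk (hcurve.prodMk (hφ p hp).hasFDerivAt))
  have hΨ0 : (fun p => Ψ (z, q (z, p), φ p)) =ᶠ[𝓝 p] fun _ => 0 := by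
    filter_upwards [hV.mem_nhds hp] with p' hp' using hzero z hz p' hp'
  have hsplit : ((0, fderiv ℂ q (z, p) (0, v), 0) : E × ℂ × Y) =
      fderiv ℂ q (z, p) (0, v) • (0, 1, 0) := by simp
  have := DFunLike.congr_fun (hΨd.unique ((hasFDerivAt_const 0 p).congr_of_eventuallyEq hΨ0)) v
  simpa [hv, hsplit, dirDeriv, mul_comm, -Prod.smul_mk] using this

theorem eq_zero_of_eq_zero_on_graph {U : Set E} {V : Set P} {W : Set ℂ} (hU : IsOpen U)
    (hUc : IsPreconnected U) (hV : IsOpen V) (hW : IsPreconnected W) {q : E × P → ℂ} {φ : P → Y}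
    {Φ : E × ℂ × Y → ℂ} (hq : ∀ z ∈ U, ∀ p ∈ V, AnalyticAt ℂ q (z, p) ∧ q (z, p) ∈ W)
    (hφ : ∀ p ∈ V, DifferentiableAt ℂ φ p)
    (hker : ∀ p ∈ V, ∃ v, fderiv ℂ φ p v = 0 ∧ ∃ z ∈ U, fderiv ℂ q (z, p) (0, v) ≠ 0)
    (hΦ : ∀ z ∈ U, ∀ w ∈ W, ∀ p ∈ V, AnalyticAt ℂ Φ (z, w, φ p))
    (hzero : ∀ z ∈ U, ∀ p ∈ V, Φ (z, q (z, p), φ p) = 0) :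
    ∀ z ∈ U, ∀ w ∈ W, ∀ p ∈ V, Φ (z, w, φ p) = 0 := by
  have hiter (k : ℕ) : ∀ z ∈ U, ∀ p ∈ V, (dirDeriv (0, 1, 0))^[k] Φ (z, q (z, p), φ p) = 0 := by
    induction k with
    | zero => exact hzero
    | succ k ih =>
      rw [Function.iterate_succ_apply']
      refine dirDeriv_eq_zero_of_eq_zero_on_graph hU hUc hV (fun z hz p hp => (hq z hz p hp).1)
        hφ hker (fun z hz p hp => ?_) ih
      rw [← iterDirDeriv_replicate]
      exact analyticAt_iterDirDeriv (hΦ z hz _ (hq z hz p hp).2 p hp) _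
  intro z hz w hw p hp
  have hline : ∀ᶠ s : ℂ in 𝓝 0, Φ ((z, q (z, p), φ p) + s • (0, 1, 0)) = 0 :=
    eventually_add_smul_eq_zero (hΦ z hz _ (hq z hz p hp).2 p hp) fun k => hiter k z hz p hp
  have hlim : Tendsto (fun w => w - q (z, p)) (𝓝 (q (z, p))) (𝓝 0) :=
    tendsto_sub_nhds_zero_iff.2 tendsto_id
  have han : AnalyticOnNhd ℂ (fun w => Φ (z, w, φ p)) W := fun w hw =>
    (hΦ z hz w hw p hp).comp_of_eq (analyticAt_const.prod (analyticAt_id.prod analyticAt_const)) rfl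
  refine han.eqOn_zero_of_preconnected_of_eventuallyEq_zero hW (hq z hz p hp).2 ?_ hw
  filter_upwards [hlim.eventually hline] with w hw
  simpa using hw

theorem IsSegreNondeg.eventually_eq_zero_of_eq_zero_on_graph [FiniteDimensional ℂ P]
    [CompleteSpace Y] {q : E × P → ℂ} (h : IsSegreNondeg q) (hq : IsSegreFamily q) {φ : P → Y}
    (hφ : AnalyticAt ℂ φ 0) (hφ0 : φ 0 = 0)
    (hker : ∀ᶠ p in 𝓝 0, ∃ v ≠ 0, fderiv ℂ φ p v = 0) {Φ : E × ℂ × Y → ℂ}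
    (hΦ : AnalyticAt ℂ Φ 0) (hzero : ∀ᶠ x in 𝓝 (0 : E × P), Φ (x.1, q x, φ x.2) = 0) :
    ∀ᶠ x in 𝓝 (0 : E × ℂ × P), Φ (x.1, x.2.1, φ x.2.2) = 0 := by
  have hlim : Tendsto (fun x : E × ℂ × P => (x.1, x.2.1, φ x.2.2)) (𝓝 0) (𝓝 0) :=
    (continuousAt_fst.prodMk (continuousAt_snd.fst.prodMk
      (hφ.continuousAt.comp_of_eq continuousAt_snd.snd rfl))).tendsto.trans_eq (by simp [hφ0])
  obtain ⟨r, hr, hΦr⟩ := Metric.eventually_nhds_iff_ball.1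
    (hlim.eventually hΦ.eventually_analyticAt)
  obtain ⟨ρ, hρ, hqρ⟩ := Metric.eventually_nhds_iff_ball.1 <|
    (eventually_mem_set.2 (Metric.ball_mem_nhds (0 : E × P) hr)).and <|
      hq.analyticAt.eventually_analyticAt.and <|
      (hq.tendsto_zero.eventually (Metric.ball_mem_nhds 0 hr)).and hzero
  obtain ⟨δ, hδ, hφδ⟩ := Metric.eventually_nhds_iff_ball.1 <|
    (eventually_mem_set.2 (Metric.ball_mem_nhds (0 : P) hρ)).and <| hφ.eventually_analyticAt.and <|
      hker.and (h.eventually_exists_fderiv_ne_zero hq.analyticAt (Metric.ball_mem_nhds 0 hρ))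
  simp only [← Prod.mk_zero_zero, ← ball_prod_same, Prod.forall, Set.mem_prod, and_imp]
    at hΦr hqρ
  have hsub (p : P) (hp : p ∈ Metric.ball 0 δ) := (hφδ p hp).1
  have hzero' := eq_zero_of_eq_zero_on_graph Metric.isOpen_ball
    (convex_ball (0 : E) ρ).isPreconnected Metric.isOpen_ball (convex_ball (0 : ℂ) r).isPreconnected
    (fun z hz p hp => ⟨(hqρ z p hz (hsub p hp)).2.1, (hqρ z p hz (hsub p hp)).2.2.1⟩)
    (fun p hp => (hφδ p hp).2.1.differentiableAt)
    (fun p hp => (hφδ p hp).2.2.1.imp fun v hv => ⟨hv.2, (hφδ p hp).2.2.2 v hv.1⟩)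
    (fun z hz w hw p hp => hΦr z w p (hqρ z p hz (hsub p hp)).1.1 hw
      (hqρ z p hz (hsub p hp)).1.2)
    (fun z hz p hp => (hqρ z p hz (hsub p hp)).2.2.2)
  filter_upwards [prod_mem_nhds (Metric.ball_mem_nhds (0 : E) hρ) (prod_mem_nhds
    (Metric.ball_mem_nhds (0 : ℂ) hr) (Metric.ball_mem_nhds (0 : P) hδ))] with x hx
    using hzero' x.1 hx.1 x.2.1 hx.2.1 x.2.2 hx.2.2

/-- `(F, φ)` maps every Segre variety of `q` into a Segre variety of `q'`, the variety of parameter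
`p` into that of parameter `φ p`. A holomorphic Segre preserving map `(f, g, f̃, g̃)` is the case
`F = (f, g)`, `φ = (f̃, g̃)`. -/
structure IsSegreMap (q : E × P → ℂ) (q' : E' × P' → ℂ) (F : E × ℂ → E' × ℂ) (φ : P → P') :
    Prop where
  analyticAt : AnalyticAt ℂ F 0
  analyticAt_param : AnalyticAt ℂ φ 0
  map_zero : F 0 = 0
  param_zero : φ 0 = 0
  eventually_eq : ∀ᶠ x in 𝓝 (0 : E × P), (F (x.1, q x)).2 = q' ((F (x.1, q x)).1, φ x.2)

theorem IsSegreMap.tendsto_map {q : E × P → ℂ} {q' : E' × P' → ℂ} {F : E × ℂ → E' × ℂ} {φ : P → P'}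
    (hF : IsSegreMap q q' F φ) : Tendsto F (𝓝 0) (𝓝 0) := by
  simpa only [hF.map_zero] using hF.analyticAt.continuousAt.tendsto

theorem IsSegreMap.tendsto_param {q : E × P → ℂ} {q' : E' × P' → ℂ} {F : E × ℂ → E' × ℂ}
    {φ : P → P'} (hF : IsSegreMap q q' F φ) : Tendsto φ (𝓝 0) (𝓝 0) := by
  simpa only [hF.param_zero] using hF.analyticAt_param.continuousAt.tendsto

theorem IsSegreMap.eventually_snd_apply_zero {q : E × P → ℂ} {q' : E' × P' → ℂ}
    {F : E × ℂ → E' × ℂ} {φ : P → P'} (hF : IsSegreMap q q' F φ) (hq : IsSegreFamily q)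
    (hq' : IsSegreFamily q') : ∀ᶠ z in 𝓝 (0 : E), (F (z, 0)).2 = 0 := by
  have hP : Tendsto (fun z : E => (z, (0 : P))) (𝓝 0) (𝓝 0) :=
    (Continuous.prodMk_left (0 : P)).tendsto 0
  have hw : Tendsto (fun z : E => (z, (0 : ℂ))) (𝓝 0) (𝓝 0) :=
    (Continuous.prodMk_left (0 : ℂ)).tendsto 0
  filter_upwards [hP.eventually hF.eventually_eq, hq.eventually_apply_zero,
    (hF.tendsto_map.comp hw).fst_nhds.eventually hq'.eventually_apply_zero] with z hz hqz hz'
  rw [hqz, hF.param_zero] at hz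
  exact hz.trans hz'

theorem det_eq_zero_iff_exists_ne_zero {X : Type*} [NormedAddCommGroup X] [NormedSpace ℂ X]
    [FiniteDimensional ℂ X] {T : X →L[ℂ] X} : T.det = 0 ↔ ∃ v ≠ 0, T v = 0 := by
  rw [ContinuousLinearMap.det, LinearMap.det_eq_zero_iff_ker_ne_bot, Submodule.ne_bot_iff]
  simp [and_comm]

theorem IsSegreMap.eventually_snd_eq [FiniteDimensional ℂ P] [CompleteSpace P'] {q : E × P → ℂ}
    {q' : E' × P' → ℂ} {F : E × ℂ → E' × ℂ} {φ : P → P'} (hF : IsSegreMap q q' F φ)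
    (h : IsSegreNondeg q) (hq : IsSegreFamily q) (hq' : IsSegreFamily q')
    (hker : ∀ᶠ p in 𝓝 0, ∃ v ≠ 0, fderiv ℂ φ p v = 0) :
    ∀ᶠ x in 𝓝 (0 : E × ℂ × P),
      (F (x.1, x.2.1)).2 = q' ((F (x.1, x.2.1)).1, φ x.2.2) := by
  have hFan : AnalyticAt ℂ (fun x : E × ℂ × P' => F (x.1, x.2.1)) 0 :=
    hF.analyticAt.comp_of_eq (analyticAt_fst.prod (analyticAt_fst.comp analyticAt_snd)) rfl
  have hΦ : AnalyticAt ℂ (fun x : E × ℂ × P' =>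
      (F (x.1, x.2.1)).2 - q' ((F (x.1, x.2.1)).1, x.2.2)) 0 := by
    refine (analyticAt_snd.comp hFan).sub (hq'.analyticAt.comp_of_eq
      ((analyticAt_fst.comp hFan).prod (analyticAt_snd.comp analyticAt_snd)) ?_)
    exact congrArg (fun y => (y.1, (0 : P'))) hF.map_zero
  have hzero := h.eventually_eq_zero_of_eq_zero_on_graph hq hF.analyticAt_param hF.param_zero hker
    hΦ (hF.eventually_eq.mono fun x hx => sub_eq_zero.2 hx)
  exact hzero.mono fun x hx => sub_eq_zero.1 hx

theorem IsSegreMap.eventually_snd_eq_zero [FiniteDimensional ℂ P] [CompleteSpace P']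
    {q : E × P → ℂ} {q' : E' × P' → ℂ} {F : E × ℂ → E' × ℂ} {φ : P → P'}
    (hF : IsSegreMap q q' F φ) (h : IsSegreNondeg q) (hq : IsSegreFamily q)
    (hq' : IsSegreFamily q') (hker : ∀ᶠ p in 𝓝 0, ∃ v ≠ 0, fderiv ℂ φ p v = 0) :
    ∀ᶠ y in 𝓝 0, (F y).2 = 0 := by
  have hlim : Tendsto (fun y : E × ℂ => (y.1, y.2, (0 : P))) (𝓝 0) (𝓝 0) :=
    (by fun_prop : Continuous fun y : E × ℂ => (y.1, y.2, (0 : P))).tendsto 0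
  filter_upwards [hlim.eventually (hF.eventually_snd_eq h hq hq' hker),
    hF.tendsto_map.fst_nhds.eventually hq'.eventually_apply_zero] with y hy hy'
  rw [hy, hF.param_zero, hy']

theorem fderiv_segre_identity {q : E × P → ℂ} {q' : E' × P' → ℂ} {F : E × ℂ → E' × ℂ} {φ : P → P'}
    {z : E} {p : P} (hq : DifferentiableAt ℂ q (z, p)) (hφ : DifferentiableAt ℂ φ p)
    (hF : DifferentiableAt ℂ F (z, q (z, p)))
    (hq' : DifferentiableAt ℂ q' ((F (z, q (z, p))).1, φ p))
    (heq : ∀ᶠ x in 𝓝 (z, p), (F (x.1, q x)).2 = q' ((F (x.1, q x)).1, φ x.2)) (a : E) (v : P) :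
    (fderiv ℂ F (z, q (z, p)) (a, fderiv ℂ q (z, p) (a, v))).2 =
      fderiv ℂ q' ((F (z, q (z, p))).1, φ p)
        ((fderiv ℂ F (z, q (z, p)) (a, fderiv ℂ q (z, p) (a, v))).1, fderiv ℂ φ p v) := by
  have hgraph := hF.hasFDerivAt.comp (z, p) (hasFDerivAt_fst.prodMk hq.hasFDerivAt)
  have hright := hq'.hasFDerivAt.comp (z, p)
    (hgraph.fst.prodMk (hφ.hasFDerivAt.comp (z, p) hasFDerivAt_snd))
  exact DFunLike.congr_fun ((hgraph.snd.congr_of_eventuallyEq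
    (heq.mono fun x hx => hx.symm)).unique hright) (a, v)

theorem fderiv_eq_zero_of_segre_identity {q : E × P → ℂ} {q' : E' × P' → ℂ} {F : E × ℂ → E' × ℂ}
    {φ : P → P'} {z : E} {p : P} (hq : DifferentiableAt ℂ q (z, p))
    (hφ : DifferentiableAt ℂ φ p) (hF : DifferentiableAt ℂ F (z, q (z, p)))
    (hq' : DifferentiableAt ℂ q' ((F (z, q (z, p))).1, φ p))
    (heq : ∀ᶠ x in 𝓝 (z, p), (F (x.1, q x)).2 = q' ((F (x.1, q x)).1, φ x.2))
    (hsurj : Function.Surjective (fderiv ℂ F (z, q (z, p)))) {v : P} (hv : fderiv ℂ φ p v = 0) :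
    fderiv ℂ q (z, p) (0, v) = 0 := by
  obtain ⟨⟨a, b⟩, hab⟩ := hsurj (0, 1)
  by_contra hne
  let s := (b - fderiv ℂ q (z, p) (a, 0)) / fderiv ℂ q (z, p) (0, v)
  have hs : fderiv ℂ q (z, p) (a, s • v) = b := by
    have hsplit : ((a, s • v) : E × P) = (a, 0) + s • (0, v) := by simp
    rw [hsplit, map_add, map_smul, smul_eq_mul, div_mul_cancel₀ _ hne, add_sub_cancel]
  have hid := fderiv_segre_identity hq hφ hF hq' heq a (s • v)
  rw [hs, hab, map_smul, hv, smul_zero, Prod.mk_zero_zero, map_zero] at hid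
  exact one_ne_zero hid

theorem eventually_ne_zero_slice {J : E × ℂ → ℂ} {z : E} {W : Set ℂ} (hW : IsPreconnected W)
    (hW0 : 0 ∈ W) (hJ : ∀ w ∈ W, AnalyticAt ℂ J (z, w)) (hne : ∃ w ∈ W, J (z, w) ≠ 0) :
    ∀ᶠ w in 𝓝[≠] 0, J (z, w) ≠ 0 := by
  have han : AnalyticOnNhd ℂ (fun w => J (z, w)) W := fun w hw =>
    (hJ w hw).comp_of_eq (analyticAt_const.prod analyticAt_id) rfl
  refine (han 0 hW0).eventually_eq_zero_or_eventually_ne_zero.resolve_left fun hzero => ?_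
  obtain ⟨w, hw, hwne⟩ := hne
  exact hwne (han.eqOn_zero_of_preconnected_of_eventuallyEq_zero hW hW0 hzero hw)

theorem isOpen_setOf_exists_apply_ne_zero {X Z : Type*} [TopologicalSpace X] [TopologicalSpace Z]
    {J : X × Z → ℂ} {U : Set X} {W : Set Z} (hU : IsOpen U)
    (hJ : ∀ x ∈ U, ∀ w ∈ W, ContinuousAt J (x, w)) :
    IsOpen {x ∈ U | ∃ w ∈ W, J (x, w) ≠ 0} := by
  refine isOpen_iff_mem_nhds.2 fun x ⟨hx, w, hw, hxw⟩ => inter_mem (hU.mem_nhds hx) ?_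
  have hcont : ContinuousAt (fun x => J (x, w)) x := (hJ x hx w hw).comp_of_eq (by fun_prop) rfl
  exact (hcont.eventually_ne hxw).mono fun x' hx' => ⟨w, hw, hx'⟩

theorem IsSegreNondeg.eventually_exists_ne_zero_on_graph [FiniteDimensional ℂ P] {q : E × P → ℂ}
    (h : IsSegreNondeg q) (hq : IsSegreFamily q) {J : E × ℂ → ℂ} (hJ : AnalyticAt ℂ J 0)
    (hJne : ∃ᶠ x in 𝓝 0, J x ≠ 0) {U : Set E} (hU : U ∈ 𝓝 0) :
    ∀ᶠ p in 𝓝[≠] 0, ∃ z ∈ U, J (z, q (z, p)) ≠ 0 := by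
  obtain ⟨r, hr, hJr⟩ := Metric.eventually_nhds_iff_ball.1 hJ.eventually_analyticAt
  obtain ⟨ρ, hρ, hρU⟩ := Metric.eventually_nhds_iff_ball.1 <|
    (eventually_mem_set.2 (Metric.ball_mem_nhds (0 : E) hr)).and <| (eventually_mem_set.2 hU).and <|
      (eventually_analyticAt_prodMk_zero hq.analyticAt).and hq.eventually_apply_zero
  simp only [← Prod.mk_zero_zero, ← ball_prod_same, Prod.forall, Set.mem_prod, and_imp] at hJr
  let N : Set E := {z ∈ Metric.ball 0 ρ | ∃ w ∈ Metric.ball (0 : ℂ) r, J (z, w) ≠ 0}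
  have hN : IsOpen N := isOpen_setOf_exists_apply_ne_zero Metric.isOpen_ball
    fun z hz w hw => (hJr z w (hρU z hz).1 hw).continuousAt
  have hNne : N.Nonempty := by
    obtain ⟨x, hx, hxr⟩ := (hJne.and_eventually (prod_mem_nhds (Metric.ball_mem_nhds (0 : E) hρ)
      (Metric.ball_mem_nhds (0 : ℂ) hr))).exists
    exact ⟨x.1, hxr.1, x.2, hxr.2, hx⟩
  obtain ⟨t, htN, ht⟩ := h.exists_finset (fun z hz => (hρU z hz).2.2.1)
    (convex_ball _ _).isPreconnected (Metric.ball_mem_nhds 0 hρ) hN (Set.sep_subset _ _) hNne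
  have hsample : ∀ᶠ p in 𝓝[≠] (0 : P), ∀ z ∈ t, q (z, p) ≠ 0 → J (z, q (z, p)) ≠ 0 := by
    refine nhdsWithin_le_nhds ((eventually_all_finset t).2 fun z hz => ?_)
    obtain ⟨hzρ, hJz⟩ := htN hz
    have hqz : Tendsto (fun p => q (z, p)) (𝓝 0) (𝓝 0) := by
      have := (hρU z hzρ).2.2.1.continuousAt.comp (f := fun p => (z, p)) (by fun_prop)
      simpa [ContinuousAt, Function.comp_def, (hρU z hzρ).2.2.2] using this
    exact hqz.eventually (eventually_nhdsWithin_iff.1 (eventually_ne_zero_slice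
      (convex_ball _ _).isPreconnected (Metric.mem_ball_self hr)
      (fun w hw => hJr z w (hρU z hzρ).1 hw) hJz))
  filter_upwards [hsample, eventually_exists_apply_ne_zero
    (fun z hz => (hρU z (htN hz).1).2.2.1) ht] with p hp ⟨z, hz, hzp⟩
  exact ⟨z, (hρU z (htN hz).1).2.1, hp z hz hzp⟩

theorem eqOn_fderiv_zero_of_segre_identity [FiniteDimensional ℂ E] {q q' : E × P → ℂ}
    {F : E × ℂ → E × ℂ} {φ : P → P} {U : Set E} {p : P} (hU : IsOpen U) (hUc : IsPreconnected U)
    (hq : ∀ z ∈ U, AnalyticAt ℂ q (z, p)) (hφ : DifferentiableAt ℂ φ p)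
    (hF : ∀ z ∈ U, AnalyticAt ℂ F (z, q (z, p)))
    (hq' : ∀ z ∈ U, DifferentiableAt ℂ q' ((F (z, q (z, p))).1, φ p))
    (heq : ∀ z ∈ U, ∀ᶠ x in 𝓝 (z, p), (F (x.1, q x)).2 = q' ((F (x.1, q x)).1, φ x.2))
    (hdet : ∃ z ∈ U, (fderiv ℂ F (z, q (z, p))).det ≠ 0) {v : P} (hv : fderiv ℂ φ p v = 0) :
    Set.EqOn (fun z => fderiv ℂ q (z, p) (0, v)) 0 U := by
  have : CompleteSpace E := FiniteDimensional.complete ℂ E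
  obtain ⟨z₀, hz₀, hJz₀⟩ := hdet
  refine eqOn_zero_of_mul_eqOn_zero (fun z hz => ?_)
    (g := fun z => (fderiv ℂ F (z, q (z, p))).det) (fun z hz => ?_) hU hUc (fun z hz => ?_) hz₀ hJz₀
  · exact ((ContinuousLinearMap.apply ℂ ℂ ((0 : E), v)).analyticAt _).comp
      ((hq z hz).fderiv.comp_of_eq (analyticAt_id.prod analyticAt_const) rfl)
  · exact (analyticAt_det_fderiv (hF z hz)).comp_of_eq (analyticAt_id.prod
      ((hq z hz).comp_of_eq (analyticAt_id.prod analyticAt_const) rfl)) rfl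
  · refine mul_eq_zero.2 (or_iff_not_imp_right.2 fun hJz => ?_)
    exact fderiv_eq_zero_of_segre_identity (hq z hz).differentiableAt hφ (hF z hz).differentiableAt
      (hq' z hz) (heq z hz)
      (ContinuousLinearMap.toContinuousLinearEquivOfDetNeZero _ hJz).surjective hv

theorem IsSegreMap.tendsto_graph {q : E × P → ℂ} {q' : E' × P' → ℂ} {F : E × ℂ → E' × ℂ}
    {φ : P → P'} (hF : IsSegreMap q q' F φ) (hq : IsSegreFamily q) :
    Tendsto (fun x : E × P => (x.1, q x)) (𝓝 0) (𝓝 0) ∧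
      Tendsto (fun x : E × P => ((F (x.1, q x)).1, φ x.2)) (𝓝 0) (𝓝 0) := by
  have hfst : Tendsto (Prod.fst : E × P → E) (𝓝 0) (𝓝 0) := continuousAt_fst
  have hsnd : Tendsto (Prod.snd : E × P → P) (𝓝 0) (𝓝 0) := continuousAt_snd
  have hgraph := hfst.prodMk_nhds hq.tendsto_zero
  exact ⟨hgraph, (hF.tendsto_map.comp hgraph).fst_nhds.prodMk_nhds (hF.tendsto_param.comp hsnd)⟩

theorem IsSegreMap.eventually_regular [CompleteSpace E'] {q : E × P → ℂ} {q' : E' × P' → ℂ}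
    {F : E × ℂ → E' × ℂ} {φ : P → P'} (hF : IsSegreMap q q' F φ) (hq : IsSegreFamily q)
    (hq' : IsSegreFamily q') :
    ∀ᶠ x in 𝓝 (0 : E × P), AnalyticAt ℂ q x ∧ AnalyticAt ℂ F (x.1, q x) ∧
      AnalyticAt ℂ q' ((F (x.1, q x)).1, φ x.2) ∧
      ∀ᶠ y in 𝓝 x, (F (y.1, q y)).2 = q' ((F (y.1, q y)).1, φ y.2) :=
  hq.analyticAt.eventually_analyticAt.and <|
    ((hF.tendsto_graph hq).1.eventually hF.analyticAt.eventually_analyticAt).and <|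
      ((hF.tendsto_graph hq).2.eventually hq'.analyticAt.eventually_analyticAt).and
        hF.eventually_eq.eventually_nhds

theorem IsSegreMap.det_fderiv_param_ne_zero [FiniteDimensional ℂ E] [FiniteDimensional ℂ P]
    (hP : 1 < Module.finrank ℂ P) {q q' : E × P → ℂ} {F : E × ℂ → E × ℂ} {φ : P → P}
    (hF : IsSegreMap q q' F φ) (h : IsSegreNondeg q) (hq : IsSegreFamily q)
    (hq' : IsSegreFamily q') (hdet : ∃ᶠ x in 𝓝 0, (fderiv ℂ F x).det ≠ 0) :
    (fderiv ℂ φ 0).det ≠ 0 := by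
  have : CompleteSpace E := FiniteDimensional.complete ℂ E
  have : CompleteSpace P := FiniteDimensional.complete ℂ P
  obtain ⟨ρ, hρ, hreg⟩ := Metric.eventually_nhds_iff_ball.1 (hF.eventually_regular hq hq')
  simp only [← Prod.mk_zero_zero, ← ball_prod_same, Prod.forall, Set.mem_prod, and_imp] at hreg
  have hU := Metric.ball_mem_nhds (0 : E) hρ
  have hne : ∀ᶠ p in 𝓝[≠] 0, (fderiv ℂ φ p).det ≠ 0 := by
    filter_upwards [h.eventually_exists_ne_zero_on_graph hq (analyticAt_det_fderiv hF.analyticAt)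
        hdet hU, nhdsWithin_le_nhds (Metric.ball_mem_nhds (0 : P) hρ),
      nhdsWithin_le_nhds (h.eventually_exists_fderiv_ne_zero hq.analyticAt hU),
      nhdsWithin_le_nhds hF.analyticAt_param.eventually_analyticAt] with p hJ hp hinj hφ hzero
    obtain ⟨v, hv, hφv⟩ := det_eq_zero_iff_exists_ne_zero.1 hzero
    obtain ⟨z, hz, hzv⟩ := hinj v hv
    exact hzv (eqOn_fderiv_zero_of_segre_identity Metric.isOpen_ball
      (convex_ball _ _).isPreconnected (fun z hz => (hreg z p hz hp).1) hφ.differentiableAt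
      (fun z hz => (hreg z p hz hp).2.1) (fun z hz => (hreg z p hz hp).2.2.1.differentiableAt)
      (fun z hz => (hreg z p hz hp).2.2.2) hJ hφv hz)
  intro h0
  exact frequently_eq_zero_of_one_lt_finrank hP (analyticAt_det_fderiv hF.analyticAt_param) h0 hne

theorem IsSegreFamily.eventually_fderiv_inl_eq_zero {q : E × P → ℂ} (hq : IsSegreFamily q) :
    ∀ᶠ z in 𝓝 (0 : E), ∀ a, fderiv ℂ q (z, 0) (a, 0) = 0 := by
  filter_upwards [eventually_analyticAt_prodMk_zero hq.analyticAt,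
    hq.eventually_apply_zero.eventually_nhds] with z hz hzero a
  exact DFunLike.congr_fun ((hasFDerivAt_comp_prodMk_left hz.differentiableAt).unique
    ((hasFDerivAt_const 0 z).congr_of_eventuallyEq hzero)) a

theorem IsSegreMap.isSegreNondeg_target [CompleteSpace E'] {q : E × P → ℂ}
    {q' : E' × P' → ℂ} {F : E × ℂ → E' × ℂ} {φ : P → P'}
    (hF : IsSegreMap q q' F φ) (h : IsSegreNondeg q) (hq : IsSegreFamily q)
    (hq' : IsSegreFamily q') (htrans : (fderiv ℂ F 0 (0, 1)).2 ≠ 0)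
    (hsurj : Function.Surjective (fderiv ℂ φ 0)) : IsSegreNondeg q' := by
  intro v' hv'
  obtain ⟨v, rfl⟩ := hsurj v'
  suffices hv : ∀ᶠ z in 𝓝 (0 : E), fderiv ℂ q (z, 0) (0, v) = 0 by
    rw [h v hv, ContinuousLinearMap.map_zero]
  have hz : Tendsto (fun z : E => (z, (0 : P))) (𝓝 0) (𝓝 0) :=
    (Continuous.prodMk_left (0 : P)).tendsto 0
  have hw : Tendsto (fun z : E => (z, (0 : ℂ))) (𝓝 0) (𝓝 0) :=
    (Continuous.prodMk_left (0 : ℂ)).tendsto 0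
  have hFz : Tendsto (fun z : E => (F (z, 0)).1) (𝓝 0) (𝓝 0) :=
    (hF.tendsto_map.comp hw).fst_nhds
  have htrans' : ∀ᶠ z in 𝓝 (0 : E), (fderiv ℂ F (z, 0) (0, 1)).2 ≠ 0 := by
    have hcont : ContinuousAt (fun y => (fderiv ℂ F y (0, 1)).2) 0 :=
      (hF.analyticAt.fderiv.continuousAt.clm_apply continuousAt_const).snd
    exact hw.eventually (hcont.eventually_ne htrans)
  filter_upwards [hz.eventually (hF.eventually_regular hq hq'), hq.eventually_apply_zero,
    hFz.eventually hv', hFz.eventually hq'.eventually_fderiv_inl_eq_zero, htrans']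
    with z ⟨hqz, hFz, hq'z, heq⟩ hqz0 hv'z hinl hne
  have hid := fderiv_segre_identity hqz.differentiableAt hF.analyticAt_param.differentiableAt
    hFz.differentiableAt hq'z.differentiableAt heq 0 v
  rw [hqz0, hF.param_zero] at hid
  have hleft : (fderiv ℂ F (z, 0) (0, fderiv ℂ q (z, 0) (0, v))).2 =
      fderiv ℂ q (z, 0) (0, v) * (fderiv ℂ F (z, 0) (0, 1)).2 := by
    rw [← smul_eq_mul, ← Prod.smul_snd, ← map_smul, Prod.smul_mk, smul_zero, smul_eq_mul, mul_one]
  have hright (a : E') : fderiv ℂ q' ((F (z, 0)).1, 0) (a, fderiv ℂ φ 0 v) = 0 := by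
    rw [← Prod.fst_add_snd (a, fderiv ℂ φ 0 v), map_add, hinl, hv'z, add_zero]
  rw [hleft, hright] at hid
  exact (mul_eq_zero.1 hid).resolve_right hne

end SegreFamily

theorem fderiv_iterDirDeriv_param {E P Y : Type*} [NormedAddCommGroup E] [NormedSpace ℂ E]
    [NormedAddCommGroup P] [NormedSpace ℂ P] [NormedAddCommGroup Y] [NormedSpace ℂ Y]
    [CompleteSpace Y] {q : E × P → Y} {z : E} {p : P} (hq : AnalyticAt ℂ q (z, p)) (l : List E)
    (v : P) : fderiv ℂ (fun p => iterDirDeriv l (fun z => q (z, p)) z) p v =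
      iterDirDeriv l (fun z => fderiv ℂ q (z, p) (0, v)) z := by
  let L := ContinuousLinearMap.inl ℂ E P
  have hslice : (fun p' => iterDirDeriv l (fun z => q (z, p')) z) =ᶠ[𝓝 p]
      fun p' => iterDirDeriv (l.map L) q (z, p') := by
    filter_upwards [(Continuous.prodMk_right z).continuousAt.eventually hq.eventually_analyticAt]
      with p' hp' using iterDirDeriv_comp_prodMk_left hp' l
  calc fderiv ℂ (fun p => iterDirDeriv l (fun z => q (z, p)) z) p v
      = fderiv ℂ (fun p => iterDirDeriv (l.map L) q (z, p)) p v := by rw [hslice.fderiv_eq]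
    _ = iterDirDeriv ((0, v) :: l.map L) q (z, p) :=
      DFunLike.congr_fun (hasFDerivAt_comp_prodMk_right
        (analyticAt_iterDirDeriv hq (l.map L)).differentiableAt).fderiv v
    _ = iterDirDeriv (l.map L ++ [(0, v)]) q (z, p) :=
      (iterDirDeriv_perm (List.perm_append_singleton _ _).symm hq).self_of_nhds
    _ = iterDirDeriv (l.map L) (dirDeriv (0, v) q) (z, p) :=
      congrFun (iterDirDeriv_append _ _ q) (z, p)
    _ = iterDirDeriv l (fun z => fderiv ℂ q (z, p) (0, v)) z :=
      (iterDirDeriv_comp_prodMk_left (analyticAt_dirDeriv hq (0, v)) l).symm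

section FiniteNondegeneracy

/-- The multi-index `α` written out as a list of coordinates, each `i` occurring `α i` times, in the
order of the factors of `mpd α`. -/
def multiIndexList (α : Fin n → ℕ) : List (Fin n) :=
  (List.finRange n).flatMap fun i => List.replicate (α i) i

theorem foldr_map_iterate_pd (α : Fin n → ℕ) (F : (Fin n → ℂ) → ℂ) (l : List (Fin n)) :
    ((l.map fun i => (pd i)^[α i]).foldr (· ∘ ·) id) F =
      iterDirDeriv ((l.flatMap fun i => List.replicate (α i) i).map (Pi.basisFun ℂ (Fin n))) F := by
  induction l with
  | nil => rfl
  | cons i l ih =>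
    rw [List.map_cons, List.foldr_cons, Function.comp_apply, ih, List.flatMap_cons, List.map_append,
      iterDirDeriv_append, List.map_replicate, iterDirDeriv_replicate, Pi.basisFun_apply]
    rfl

theorem mpd_eq_iterDirDeriv (α : Fin n → ℕ) (F : (Fin n → ℂ) → ℂ) :
    mpd α F = iterDirDeriv ((multiIndexList α).map (Pi.basisFun ℂ (Fin n))) F := by
  rw [mpd, List.ofFn_eq_map, foldr_map_iterate_pd, multiIndexList]

theorem perm_multiIndexList_count (l : List (Fin n)) :
    l.Perm (multiIndexList fun i => l.count i) := by
  refine List.perm_iff_count.2 fun j => ?_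
  simp only [multiIndexList, List.count_flatMap, Function.comp_def, List.count_replicate,
    beq_iff_eq]
  rw [← List.ofFn_eq_map, List.sum_ofFn, Finset.sum_ite_eq' Finset.univ j,
    if_pos (Finset.mem_univ j)]

theorem eventuallyEq_zero_iff_forall_mpd_eq_zero {F : (Fin n → ℂ) → ℂ} {z : Fin n → ℂ}
    (hF : AnalyticAt ℂ F z) : F =ᶠ[𝓝 z] 0 ↔ ∀ α, mpd α F z = 0 := by
  refine ⟨fun h α => ?_, fun h => ?_⟩
  · rw [mpd_eq_iterDirDeriv, (iterDirDeriv_congr h _).self_of_nhds, iterDirDeriv_zero,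
      Pi.zero_apply]
  · refine eventually_eq_zero_of_iterDirDeriv_eq_zero (Pi.basisFun ℂ (Fin n)) hF fun l => ?_
    rw [(iterDirDeriv_perm ((perm_multiIndexList_count l).map _) hF).self_of_nhds,
      ← mpd_eq_iterDirDeriv, h]

theorem span_eq_top_iff_forall_dotProduct {K ι : Type*} [Field K] [Fintype ι] {S : Set (ι → K)} :
    Submodule.span K S = ⊤ ↔ ∀ u, (∀ s ∈ S, s ⬝ᵥ u = 0) → u = 0 := by
  classical
  refine ⟨fun h u hu => dotProduct_eq_zero u fun w => ?_, fun h => ?_⟩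
  · have hle : Submodule.span K S ≤ LinearMap.ker (dotProductBilin K K u) :=
      Submodule.span_le.2 fun s hs => by simpa [dotProduct_comm] using hu s hs
    exact hle (h ▸ Submodule.mem_top)
  · by_contra hS
    obtain ⟨φ, hφ0, hφ⟩ := Submodule.exists_le_ker_of_lt_top _ (lt_top_iff_ne_top.2 hS)
    have hdot (s : ι → K) : s ⬝ᵥ (fun i => φ (Pi.single i 1)) = φ s := by
      conv_rhs => rw [pi_eq_sum_univ' s]
      simp [dotProduct]
    refine hφ0 (LinearMap.ext fun s => ?_)
    rw [← hdot, h _ fun s hs => (hdot s).trans (hφ (Submodule.subset_span hs)), dotProduct_zero]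
    rfl

theorem exists_span_setOf_le_eq_top_iff {K ι V : Type*} [Field K] [AddCommGroup V] [Module K V]
    [FiniteDimensional K V] {w : ι → ℕ} {s : ι → V} :
    (∃ k, Submodule.span K {v | ∃ i, w i ≤ k ∧ v = s i} = ⊤) ↔
      Submodule.span K (Set.range s) = ⊤ := by
  let S : ℕ →o Submodule K V :=
    ⟨fun k => Submodule.span K {v | ∃ i, w i ≤ k ∧ v = s i},
      fun k l hkl => Submodule.span_mono fun v ⟨i, hi, hv⟩ => ⟨i, hi.trans hkl, hv⟩⟩
  have hsup : iSup S = Submodule.span K (Set.range s) := by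
    refine le_antisymm (iSup_le fun k => Submodule.span_mono ?_) (Submodule.span_le.2 ?_)
    · rintro _ ⟨i, -, rfl⟩
      exact Set.mem_range_self i
    · rintro _ ⟨i, rfl⟩
      exact le_iSup S (w i) (Submodule.subset_span ⟨i, le_rfl, rfl⟩)
  refine ⟨fun ⟨k, hk⟩ => ?_, fun h => ?_⟩
  · exact top_unique (hk.symm.le.trans ((le_iSup S k).trans hsup.le))
  · exact ⟨_, (WellFoundedGT.iSup_eq_monotonicSequenceLimit S).symm.trans (hsup.trans h)⟩

variable {Q : (Fin n → ℂ) → (Fin n → ℂ) → ℂ → ℂ}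

theorem IsNormalDF.isSegreFamily (hQ : IsNormalDF Q) : IsSegreFamily ↿Q where
  analyticAt := hQ.1.self_of_nhds
  eventually_apply_zero :=
    ((Continuous.prodMk_left (0 : (Fin n → ℂ) × ℂ)).tendsto 0).eventually
      (hQ.2.mono fun _ hp => hp.2)

theorem IsNormalDF.analyticAt_slice (hQ : IsNormalDF Q) :
    AnalyticAt ℂ (fun x : (Fin n → ℂ) × (Fin n → ℂ) => Q x.1 x.2 0) 0 :=
  hQ.isSegreFamily.analyticAt.comp_of_eq
    (analyticAt_fst.prod (analyticAt_snd.prod analyticAt_const)) rfl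

theorem IsNormalDF.finNondeg_iff_slice (hQ : IsNormalDF Q) :
    FinNondeg Q ↔ IsSegreNondeg fun x : (Fin n → ℂ) × (Fin n → ℂ) => Q x.1 x.2 0 := by
  have hdot (α : Fin n → ℕ) (u : Fin n → ℂ) :
      (fun i => pd i (fun χ => mpd α (fun z => Q z χ 0) 0) 0) ⬝ᵥ u = mpd α (fun z =>
        fderiv ℂ (fun x : (Fin n → ℂ) × (Fin n → ℂ) => Q x.1 x.2 0) (z, 0) (0, u)) 0 := by
    rw [mpd_eq_iterDirDeriv, ← fderiv_iterDirDeriv_param hQ.analyticAt_slice]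
    conv_rhs => rw [pi_eq_sum_univ' u]
    simp only [dotProduct, pd, mpd_eq_iterDirDeriv, map_sum, map_smul, smul_eq_mul, mul_comm]
  have han (u : Fin n → ℂ) : AnalyticAt ℂ (fun z =>
      fderiv ℂ (fun x : (Fin n → ℂ) × (Fin n → ℂ) => Q x.1 x.2 0) (z, 0) (0, u)) 0 :=
    (analyticAt_dirDeriv hQ.analyticAt_slice (0, u)).comp_of_eq
      (analyticAt_id.prod analyticAt_const) rfl
  rw [FinNondeg, exists_span_setOf_le_eq_top_iff, span_eq_top_iff_forall_dotProduct]
  simp only [Set.forall_mem_range, hdot, ← eventuallyEq_zero_iff_forall_mpd_eq_zero (han _)]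
  rfl

theorem IsNormalDF.isSegreNondeg_iff_slice (hQ : IsNormalDF Q) :
    IsSegreNondeg ↿Q ↔ IsSegreNondeg fun x : (Fin n → ℂ) × (Fin n → ℂ) => Q x.1 x.2 0 := by
  have hslice : ∀ᶠ z in 𝓝 (0 : Fin n → ℂ), ∀ u,
      fderiv ℂ (fun x : (Fin n → ℂ) × (Fin n → ℂ) => Q x.1 x.2 0) (z, 0) (0, u) =
        fderiv ℂ ↿Q (z, 0) (0, u, 0) := by
    filter_upwards [eventually_analyticAt_prodMk_zero hQ.isSegreFamily.analyticAt] with z hz u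
    exact DFunLike.congr_fun (hz.differentiableAt.hasFDerivAt.comp
      (f := fun x : (Fin n → ℂ) × (Fin n → ℂ) => (x.1, x.2, (0 : ℂ))) (z, 0)
      (hasFDerivAt_fst.prodMk (hasFDerivAt_snd.prodMk (hasFDerivAt_const _ _)))).fderiv (0, u)
  have htransverse (v : (Fin n → ℂ) × ℂ) : fderiv ℂ ↿Q (0, 0) (0, v) = v.2 := by
    have hsnd : (fun p => ↿Q (0, p)) =ᶠ[𝓝 0] Prod.snd :=
      ((Continuous.prodMk_right (0 : Fin n → ℂ)).tendsto (0 : (Fin n → ℂ) × ℂ)).eventually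
        (hQ.2.mono fun _ hp => hp.1)
    exact DFunLike.congr_fun ((hasFDerivAt_comp_prodMk_right
      hQ.isSegreFamily.analyticAt.differentiableAt).unique
        (hasFDerivAt_snd.congr_of_eventuallyEq hsnd)) v
  refine ⟨fun h u hu => ?_, fun h v hv => ?_⟩
  · refine congrArg Prod.fst (h (u, 0) ?_)
    filter_upwards [hu, hslice] with z hz hzu using (hzu u).symm.trans hz
  · have hv2 : v.2 = 0 := (htransverse v).symm.trans hv.self_of_nhds
    refine Prod.ext (h v.1 ?_) hv2
    filter_upwards [hv, hslice] with z hz hzu using (hzu v.1).trans (hv2 ▸ hz)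

theorem IsNormalDF.finNondeg_iff (hQ : IsNormalDF Q) : FinNondeg Q ↔ IsSegreNondeg ↿Q :=
  hQ.finNondeg_iff_slice.trans hQ.isSegreNondeg_iff_slice.symm

end FiniteNondegeneracy

section SegrePreservingMaps

/-- The map `(z, w) ↦ (f (z, w), g (z, w))` of `ℂⁿ × ℂ` with components `f` and `g`. -/
def pairMap (f : (Fin n → ℂ) → ℂ → Fin n → ℂ) (g : (Fin n → ℂ) → ℂ → ℂ) (y : (Fin n → ℂ) × ℂ) :
    (Fin n → ℂ) × ℂ :=
  (f y.1 y.2, g y.1 y.2)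

variable {Q Q' : (Fin n → ℂ) → (Fin n → ℂ) → ℂ → ℂ} {f ft : (Fin n → ℂ) → ℂ → Fin n → ℂ}
  {g gt : (Fin n → ℂ) → ℂ → ℂ}

theorem IsHSPM.isSegreMap (h : IsHSPM Q Q' f g ft gt) :
    IsSegreMap ↿Q ↿Q' (pairMap f g) (pairMap ft gt) := by
  obtain ⟨hf, hg, hft, hgt, hf0, hg0, hft0, hgt0, heq⟩ := h
  exact ⟨hf.self_of_nhds.prod hg.self_of_nhds, hft.self_of_nhds.prod hgt.self_of_nhds,
    Prod.ext hf0 hg0, Prod.ext hft0 hgt0, heq⟩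

theorem qBar_apply (Q : (Fin n → ℂ) → (Fin n → ℂ) → ℂ → ℂ) (χ z : Fin n → ℂ) (τ : ℂ) :
    QBar Q χ z τ = star (Q (star χ) (star z) (star τ)) :=
  rfl

theorem uncurry_qBar (Q : (Fin n → ℂ) → (Fin n → ℂ) → ℂ → ℂ) : ↿(QBar Q) = star ∘ ↿Q ∘ star :=
  rfl

theorem tendsto_star_zero {X : Type*} [AddMonoid X] [StarAddMonoid X] [TopologicalSpace X]
    [ContinuousStar X] : Tendsto (star : X → X) (𝓝 0) (𝓝 0) :=
  continuous_star.tendsto' 0 0 (star_zero X)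

theorem IsNormalDF.qBar (hQ : IsNormalDF Q) : IsNormalDF (QBar Q) := by
  refine ⟨?_, ?_⟩
  · have han : AnalyticAt ℂ ↿(QBar Q) 0 := by
      simpa only [uncurry_qBar, star_zero] using analyticAt_star_star hQ.isSegreFamily.analyticAt
    exact han.eventually_analyticAt
  · filter_upwards [tendsto_star_zero.eventually hQ.2] with p hp
    rw [qBar_apply, qBar_apply, star_zero]
    exact ⟨star_eq_iff_star_eq.2 hp.1.symm, star_eq_iff_star_eq.2 hp.2.symm⟩

theorem IsSegreNondeg.star_star {E P : Type*} [NormedAddCommGroup E] [NormedSpace ℂ E]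
    [StarAddMonoid E] [StarModule ℂ E] [ContinuousStar E] [NormedAddCommGroup P] [NormedSpace ℂ P]
    [StarAddMonoid P] [StarModule ℂ P] [ContinuousStar P] {q : E × P → ℂ} (h : IsSegreNondeg q)
    (hq : AnalyticAt ℂ q 0) : IsSegreNondeg (star ∘ q ∘ star) := by
  intro v hv
  refine star_eq_zero.1 (h (star v) ?_)
  filter_upwards [tendsto_star_zero.eventually hv, eventually_analyticAt_prodMk_zero hq]
    with z hz hqz
  have hderiv := hqz.differentiableAt.hasFDerivAt.star_star
  rw [Prod.star_def, star_zero] at hderiv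
  rw [hderiv.fderiv] at hz
  simpa [Prod.star_def] using hz

theorem IsRealNormalDF.eventually_involution (hQ : IsRealNormalDF Q) :
    ∀ᶠ x in 𝓝 (0 : (Fin n → ℂ) × (Fin n → ℂ) × ℂ),
      QBar Q x.1 x.2.1 (Q x.2.1 x.1 x.2.2) = x.2.2 := by
  filter_upwards [tendsto_star_zero.eventually hQ.2] with x hx
  simp only [qBar_apply, Prod.fst_star, Prod.snd_star, _root_.star_star] at hx ⊢
  rw [hx, _root_.star_star]

theorem IsHSPM.dual (hQ : IsRealNormalDF Q) (hQ' : IsRealNormalDF Q') (h : IsHSPM Q Q' f g ft gt) :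
    IsHSPM (QBar Q) (QBar Q') ft gt f g := by
  have hS := h.isSegreMap
  obtain ⟨hf, hg, hft, hgt, hf0, hg0, hft0, hgt0, heq⟩ := h
  refine ⟨hft, hgt, hf, hg, hft0, hgt0, hf0, hg0, ?_⟩
  let C := Fin n → ℂ
  have hχ : Tendsto (fun x : C × C × ℂ => x.1) (𝓝 0) (𝓝 0) := continuousAt_fst
  have hz : Tendsto (fun x : C × C × ℂ => x.2.1) (𝓝 0) (𝓝 0) := continuousAt_snd.fst.tendsto
  have hτ : Tendsto (fun x : C × C × ℂ => x.2.2) (𝓝 0) (𝓝 0) := continuousAt_snd.snd.tendsto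
  have hgraph := hχ.prodMk_nhds hQ.1.qBar.isSegreFamily.tendsto_zero
  have hF := hS.tendsto_map.comp (hz.prodMk_nhds hτ)
  have hφ := hS.tendsto_param.comp hgraph
  filter_upwards [(hz.prodMk_nhds hgraph).eventually heq,
    (hz.prodMk_nhds (hχ.prodMk_nhds hτ)).eventually hQ.2,
    (hφ.fst_nhds.prodMk_nhds (hF.fst_nhds.prodMk_nhds hφ.snd_nhds)).eventually
      hQ'.eventually_involution] with ⟨χ, z, τ⟩ hmap hreal hinv
  have hg : g z (Q z χ (QBar Q χ z τ)) = Q' (f z (Q z χ (QBar Q χ z τ)))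
      (ft χ (QBar Q χ z τ)) (gt χ (QBar Q χ z τ)) := hmap
  rw [show Q z χ (QBar Q χ z τ) = τ from hreal] at hg
  exact (congrArg (QBar Q' _ _) hg |>.trans hinv).symm

section Jacobian

/-- The basis `dirCT n` of `ℂⁿ × ℂ`, with respect to which the coordinates of `(z, w)` are those
of `z` followed by `w`. -/
noncomputable def dirCTBasis (n : ℕ) : Module.Basis (Fin (n + 1)) ℂ ((Fin n → ℂ) × ℂ) :=
  .ofEquivFun
    { toFun := fun y => Fin.snoc (α := fun _ => ℂ) y.1 y.2
      invFun := fun c => (Fin.init c, c (Fin.last n))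
      left_inv := fun y => by simp
      right_inv := fun c => by simp
      map_add' := fun x y => by
        ext i
        refine Fin.lastCases ?_ (fun i => ?_) i <;> simp
      map_smul' := fun a y => by
        ext i
        refine Fin.lastCases ?_ (fun i => ?_) i <;> simp }

theorem dirCT_castSucc (i : Fin n) : dirCT n i.castSucc = (Pi.single i 1, 0) := by
  simp [dirCT]

theorem dirCT_last : dirCT n (Fin.last n) = (0, 1) := by
  simp [dirCT]

theorem dirCTBasis_repr (y : (Fin n → ℂ) × ℂ) :
    ⇑((dirCTBasis n).repr y) = Fin.snoc (α := fun _ => ℂ) y.1 y.2 :=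
  rfl

theorem dirCTBasis_apply (k : Fin (n + 1)) : dirCTBasis n k = dirCT n k := by
  refine (dirCTBasis n).repr.injective (DFunLike.ext' ?_)
  rw [Module.Basis.repr_self, dirCTBasis_repr]
  refine Fin.lastCases ?_ (fun k => ?_) k
  · ext i
    refine Fin.lastCases ?_ (fun i => ?_) i <;> simp [dirCT_last]
  · ext i
    refine Fin.lastCases ?_ (fun i => ?_) i <;>
      simp [dirCT_castSucc, Finsupp.single_apply, Pi.single_apply, eq_comm]

theorem det_jacFull {p : (Fin n → ℂ) × ℂ} (h : DifferentiableAt ℂ (pairMap f g) p) :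
    (jacFull f g p).det = (fderiv ℂ (pairMap f g) p).det := by
  rw [ContinuousLinearMap.det, ← LinearMap.det_toMatrix (dirCTBasis n)]
  congr 1
  ext i k
  rw [LinearMap.toMatrix_apply, dirCTBasis_apply, dirCTBasis_repr, jacFull, Matrix.of_apply]
  refine Fin.lastCases ?_ (fun i => ?_) i
  · simp only [Fin.snoc_last]
    exact DFunLike.congr_fun h.hasFDerivAt.snd.fderiv (dirCT n k)
  · simp only [Fin.snoc_castSucc]
    exact DFunLike.congr_fun (hasFDerivAt_pi'.1 h.hasFDerivAt.fst i).fderiv (dirCT n k)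

theorem det_eq_mul_of_row_last {R : Type*} [CommRing R] {M : Matrix (Fin (n + 1)) (Fin (n + 1)) R}
    (h : ∀ j : Fin n, M (Fin.last n) j.castSucc = 0) :
    M.det = (M.submatrix Fin.castSucc Fin.castSucc).det * M (Fin.last n) (Fin.last n) := by
  rw [Matrix.det_succ_row M (Fin.last n), Fin.sum_univ_castSucc, Finset.sum_eq_zero, zero_add]
  · simp [mul_comm]
  · simp [h]

theorem snd_fderiv_pairMap_zero (h : DifferentiableAt ℂ (pairMap f g) 0) :
    (fderiv ℂ (pairMap f g) 0 (0, 1)).2 = deriv (fun w => g 0 w) 0 := by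
  simpa using! (hasFDerivAt_comp_prodMk_right (z := 0) (p := 0) h).snd.hasDerivAt.deriv.symm

theorem det_jacFull_zero (h : DifferentiableAt ℂ (pairMap f g) 0)
    (hg : ∀ᶠ z in 𝓝 0, g z 0 = 0) :
    (jacFull f g 0).det = (jacz f 0).det * deriv (fun w => g 0 w) 0 := by
  have hgd : DifferentiableAt ℂ (fun y : (Fin n → ℂ) × ℂ => g y.1 y.2) (0, 0) := h.snd
  have hfd (i : Fin n) : DifferentiableAt ℂ (fun y : (Fin n → ℂ) × ℂ => f y.1 y.2 i) (0, 0) :=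
    differentiableAt_pi.1 h.fst i
  have hrow (j : Fin n) : jacFull f g 0 (Fin.last n) j.castSucc = 0 := by
    have hslice : HasFDerivAt (fun z => g z 0) (0 : (Fin n → ℂ) →L[ℂ] ℂ) 0 :=
      (hasFDerivAt_const (0 : ℂ) 0).congr_of_eventuallyEq hg
    simpa [jacFull, dirCT_castSucc] using!
      DFunLike.congr_fun ((hasFDerivAt_comp_prodMk_left hgd).unique hslice) (Pi.single j 1)
  have hlast : jacFull f g 0 (Fin.last n) (Fin.last n) = deriv (fun w => g 0 w) 0 := by
    rw [← snd_fderiv_pairMap_zero h, jacFull, Matrix.of_apply, dirCT_last]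
    simp only [Fin.snoc_last]
    exact DFunLike.congr_fun h.hasFDerivAt.snd.fderiv (0, 1)
  have hsub : (jacFull f g 0).submatrix Fin.castSucc Fin.castSucc = jacz f 0 := by
    ext i j
    simpa [jacFull, jacz, pd, dirCT_castSucc] using!
      (DFunLike.congr_fun (hasFDerivAt_comp_prodMk_left (hfd i)).fderiv (Pi.single j 1)).symm
  rw [det_eq_mul_of_row_last hrow, hsub, hlast]

theorem det_jacz_ne_zero_and_segreTransversal (h : DifferentiableAt ℂ (pairMap f g) 0)
    (hg : ∀ᶠ z in 𝓝 0, g z 0 = 0) (hdet : (jacFull f g 0).det ≠ 0) :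
    (jacz f 0).det ≠ 0 ∧ SegreTransversal g :=
  mul_ne_zero_iff.1 (det_jacFull_zero h hg ▸ hdet)

theorem eventually_det_fderiv_pairMap_eq_zero (h : AnalyticAt ℂ (pairMap f g) 0)
    (hg : ∀ᶠ p in 𝓝 (0 : (Fin n → ℂ) × ℂ), g p.1 p.2 = 0) :
    ∀ᶠ p in 𝓝 0, (fderiv ℂ (pairMap f g) p).det = 0 := by
  filter_upwards [h.eventually_analyticAt, hg.eventually_nhds] with p hp hgp
  rw [← det_jacFull hp.differentiableAt]
  refine Matrix.det_eq_zero_of_row_eq_zero (Fin.last n) fun k => ?_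
  have hgp' : (fun y : (Fin n → ℂ) × ℂ => g y.1 y.2) =ᶠ[𝓝 p] fun _ => 0 := hgp
  simp [jacFull, hgp'.fderiv_eq]

end Jacobian

theorem IsHSPM.transversallyNull_of_det_eq_zero (h : IsHSPM Q Q' f g ft gt) (hQ : IsNormalDF Q)
    (hQ' : IsNormalDF Q') (hM : IsSegreNondeg ↿Q)
    (hdet : ∀ᶠ p in 𝓝 0, (fderiv ℂ (pairMap ft gt) p).det = 0) :
    TransversallyNull g gt ∧
      ∀ᶠ p in 𝓝 (0 : ((Fin n → ℂ) × ℂ) × ((Fin n → ℂ) × ℂ)),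
        Q' (f p.1.1 p.1.2) (ft p.2.1 p.2.2) 0 = 0 := by
  have hS := h.isSegreMap
  have hker := hdet.mono fun _ => det_eq_zero_iff_exists_ne_zero.1
  have heq := hS.eventually_snd_eq hM hQ.isSegreFamily hQ'.isSegreFamily hker
  have hg : ∀ᶠ y in 𝓝 (0 : (Fin n → ℂ) × ℂ), g y.1 y.2 = 0 :=
    hS.eventually_snd_eq_zero hM hQ.isSegreFamily hQ'.isSegreFamily hker
  have hgt : ∀ᶠ y in 𝓝 (0 : (Fin n → ℂ) × ℂ), gt y.1 y.2 = 0 := by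
    have hzero : Tendsto (fun y : (Fin n → ℂ) × ℂ => ((0 : Fin n → ℂ), (0 : ℂ), y)) (𝓝 0) (𝓝 0) :=
      (by fun_prop : Continuous _).tendsto' _ _ rfl
    have hφ : Tendsto (fun y => ((0 : Fin n → ℂ), pairMap ft gt y)) (𝓝 0) (𝓝 0) :=
      tendsto_const_nhds.prodMk_nhds hS.tendsto_param
    filter_upwards [hzero.eventually heq, hφ.eventually hQ'.2] with y hy hnormal
    rw [Prod.mk_zero_zero, hS.map_zero] at hy
    exact hnormal.1.symm.trans hy.symm
  have hassoc : Tendsto (fun p : ((Fin n → ℂ) × ℂ) × ((Fin n → ℂ) × ℂ) => (p.1.1, p.1.2, p.2))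
      (𝓝 0) (𝓝 0) := (by fun_prop : Continuous _).tendsto' _ _ rfl
  refine ⟨⟨hg, hgt⟩, ?_⟩
  filter_upwards [hassoc.eventually heq, continuousAt_fst.eventually hg,
    continuousAt_snd.eventually hgt] with p hp hgp hgtp
  have hQ'p : g p.1.1 p.1.2 = Q' (f p.1.1 p.1.2) (ft p.2.1 p.2.2) (gt p.2.1 p.2.2) := hp
  rw [← hgtp, ← hQ'p, hgp, hgtp]

theorem IsHSPM.eventually_apply_zero (h : IsHSPM Q Q' f g ft gt) (hQ : IsNormalDF Q)
    (hQ' : IsNormalDF Q') : ∀ᶠ z in 𝓝 0, g z 0 = 0 :=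
  h.isSegreMap.eventually_snd_apply_zero hQ.isSegreFamily hQ'.isSegreFamily

theorem IsHSPM.det_jacFull_param_ne_zero (h : IsHSPM Q Q' f g ft gt) (hn : 1 ≤ n)
    (hQ : IsNormalDF Q) (hQ' : IsNormalDF Q') (hM : IsSegreNondeg ↿Q)
    (hdet : ¬∀ᶠ p in 𝓝 0, (fderiv ℂ (pairMap f g) p).det = 0) :
    (jacFull ft gt 0).det ≠ 0 := by
  have hdim : 1 < Module.finrank ℂ ((Fin n → ℂ) × ℂ) := by simpa using! hn
  rw [det_jacFull h.isSegreMap.analyticAt_param.differentiableAt]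
  exact h.isSegreMap.det_fderiv_param_ne_zero hdim hM hQ.isSegreFamily hQ'.isSegreFamily
    (not_eventually.1 hdet)

theorem IsHSPM.finNondeg_target (h : IsHSPM Q Q' f g ft gt) (hQ : IsNormalDF Q)
    (hQ' : IsNormalDF Q') (hM : IsSegreNondeg ↿Q) (hg : SegreTransversal g)
    (hdet : (jacFull ft gt 0).det ≠ 0) : FinNondeg Q' := by
  have hS := h.isSegreMap
  rw [det_jacFull hS.analyticAt_param.differentiableAt] at hdet
  refine hQ'.finNondeg_iff.2 (hS.isSegreNondeg_target hM hQ.isSegreFamily hQ'.isSegreFamily ?_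
    (ContinuousLinearMap.toContinuousLinearEquivOfDetNeZero _ hdet).surjective)
  rwa [snd_fderiv_pairMap_zero hS.analyticAt.differentiableAt]

end SegrePreservingMaps

/-- Theorem 1.4: if `M` is finitely nondegenerate at `0`, then either `ℋ` is
transversally null with `Q'(f, f̃, 0) ≡ 0`, or `∂g/∂w(0) ≠ 0`, `det f_z(0) ≠ 0`,
`det f̃_χ(0) ≠ 0` (so `ℋ` is a biholomorphism near `0`) and `M'` is finitely nondegenerate. -/
theorem statement3 (n : ℕ) (hn : 1 ≤ n)
    (Q Q' : (Fin n → ℂ) → (Fin n → ℂ) → ℂ → ℂ)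
    (hQ : IsRealNormalDF Q) (hQ' : IsRealNormalDF Q')
    (hM : FinNondeg Q)
    (f ft : (Fin n → ℂ) → ℂ → Fin n → ℂ) (g gt : (Fin n → ℂ) → ℂ → ℂ)
    (hH : IsHSPM Q Q' f g ft gt) :
    (TransversallyNull g gt ∧
      ∀ᶠ p in 𝓝 (0 : ((Fin n → ℂ) × ℂ) × ((Fin n → ℂ) × ℂ)),
        Q' (f p.1.1 p.1.2) (ft p.2.1 p.2.2) 0 = 0) ∨
    (SegreTransversal g ∧ (jacz f 0).det ≠ 0 ∧ (jacz ft 0).det ≠ 0 ∧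
      (jacFull f g 0).det ≠ 0 ∧ (jacFull ft gt 0).det ≠ 0 ∧
      FinNondeg Q') := by
  have hnd := hQ.1.finNondeg_iff.1 hM
  have hndBar : IsSegreNondeg ↿(QBar Q) := hnd.star_star hQ.1.isSegreFamily.analyticAt
  have hS := hH.isSegreMap
  have hD := hH.dual hQ hQ'
  by_cases hφ : ∀ᶠ p in 𝓝 0, (fderiv ℂ (pairMap ft gt) p).det = 0
  · exact Or.inl (hH.transversallyNull_of_det_eq_zero hQ.1 hQ'.1 hnd hφ)
  have hF : ¬∀ᶠ p in 𝓝 0, (fderiv ℂ (pairMap f g) p).det = 0 := fun hF =>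
    hφ <| eventually_det_fderiv_pairMap_eq_zero hS.analyticAt_param
      (hD.transversallyNull_of_det_eq_zero hQ.1.qBar hQ'.1.qBar hndBar hF).1.1
  have hdetφ := hH.det_jacFull_param_ne_zero hn hQ.1 hQ'.1 hnd hF
  have hdetF := hD.det_jacFull_param_ne_zero hn hQ.1.qBar hQ'.1.qBar hndBar hφ
  obtain ⟨hf, hg⟩ := det_jacz_ne_zero_and_segreTransversal hS.analyticAt.differentiableAt
    (hH.eventually_apply_zero hQ.1 hQ'.1) hdetF
  obtain ⟨hft, -⟩ := det_jacz_ne_zero_and_segreTransversal hS.analyticAt_param.differentiableAt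
    (hD.eventually_apply_zero hQ.1.qBar hQ'.1.qBar) hdetφ
  exact Or.inr ⟨hg, hf, hft, hdetF, hdetφ, hH.finNondeg_target hQ.1 hQ'.1 hnd hg hdetφ⟩

end HSPMpaper
end

section
/- Let n ≥ 1 and let Q and Q′ be real normal defining functions of dimension n, defining hypersurfaces M and M′ with complexifications ℳ and ℳ′. Assume M′ is finitely nondegenerate at 0, and let ℋ = (f,g,f̃,g̃) be an HSPM sending (ℳ,0) into (ℳ′,0) which is totally Segre nondegenerate at 0. Let φ(z) := det(∂f/∂z(z,0)) and ψ(χ) := det(∂f̃/∂χ(χ,0)) (both not identically zero near 0), let j₀ and k₀ be their orders of vanishing at 0, and let p be the degree-j₀ homogeneous term of the Taylor series of φ at 0 and q the degree-k₀ homogeneous term of the Taylor series of ψ at 0. Then j₀ = k₀ and there is a nonzero constant c ∈ ℂ with p(z) = c · conj(q(conj z)) for all z ∈ ℂ^n. -/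
open Filter Topology Complex

namespace HSPMpaper

variable {n : ℕ}

/-! Differentiating the mapping equation along `ℳ` gives `S · d_{χ,τ} Q = d Q' ∘ (df̃, dg̃)` with
the scalar `S = g_w - Q'_z f_w`. Evaluating it on the field spanning the kernel of `df̃` along
`τ = 0` yields `S · A = u · (det f̃_χ · g̃_τ)` with `u` a unit. The second factor on the right
depends only on `χ`, while `S(·, 0) = g_w(·, 0) ≢ 0`; hence `S` is a unit.

Writing the `χ`-part of the identity at `n` points `z₁, …, zₙ` gives
`∏ S(zᵢ, χ) · det (∂_χ Q(zᵢ, χ, 0)) = Δ · det f̃_χ(χ, 0)`, where finite nondegeneracy of `M'` makes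
`Δ(·, 0) ≢ 0`. The determinant of the `∂_χ Q(zᵢ, χ, 0)` does not involve the map, so after fixing
generic points the germs of `det f̃_χ(·, 0)` for two maps from `ℳ` to `ℳ'` differ by a unit, and
their lowest order terms are proportional. Because `M` and `M'` are real, exchanging and conjugating
the components of an HSPM gives another HSPM, whose `det f̃_χ` is the conjugate of `det f_z`. -/

section Germs

variable {E F G : Type*} [NormedAddCommGroup E] [NormedSpace ℂ E]
  [NormedAddCommGroup F] [NormedSpace ℂ F] [NormedAddCommGroup G] [NormedSpace ℂ G]

theorem eventually_zero_comp {X Y : Type*} [TopologicalSpace X] [TopologicalSpace Y] [Zero X]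
    [Zero Y] {e : X → Y} (he : ContinuousAt e 0) (he0 : e 0 = 0) {P : Y → Prop}
    (h : ∀ᶠ y in 𝓝 0, P y) : ∀ᶠ x in 𝓝 0, P (e x) :=
  he.eventually (he0.symm ▸ h)

theorem frequently_of_zero_comp {X Y : Type*} [TopologicalSpace X] [TopologicalSpace Y] [Zero X]
    [Zero Y] {e : X → Y} (he : ContinuousAt e 0) (he0 : e 0 = 0) {P : Y → Prop}
    (h : ∃ᶠ x in 𝓝 0, P (e x)) : ∃ᶠ y in 𝓝 0, P y :=
  fun hy => h (eventually_zero_comp he he0 hy)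

theorem frequently_ne_zero_of_mul {a b : E → ℂ} (ha : AnalyticAt ℂ a 0) (hb : AnalyticAt ℂ b 0)
    (ha0 : ∃ᶠ x in 𝓝 0, a x ≠ 0) (hb0 : ∃ᶠ x in 𝓝 0, b x ≠ 0) :
    ∃ᶠ x in 𝓝 0, a x * b x ≠ 0 := by
  intro hab
  obtain ⟨r, hr, hball⟩ := Metric.eventually_nhds_iff_ball.1
    ((ha.eventually_analyticAt.and hb.eventually_analyticAt).and hab)
  obtain ⟨p, hap, hp⟩ := (ha0.and_eventually (Metric.ball_mem_nhds _ hr)).exists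
  have hbp : b =ᶠ[𝓝 p] 0 := by
    filter_upwards [(hball p hp).1.1.continuousAt.eventually_ne hap,
      Metric.isOpen_ball.mem_nhds hp] with q haq hq
    exact (mul_eq_zero.1 (not_not.1 (hball q hq).2)).resolve_left haq
  have hb_ball : Set.EqOn b 0 (Metric.ball 0 r) :=
    AnalyticOnNhd.eqOn_zero_of_preconnected_of_eventuallyEq_zero (fun q hq => (hball q hq).1.2)
      (convex_ball (0 : E) r).isPreconnected hp hbp
  refine hb0 ?_
  filter_upwards [Metric.ball_mem_nhds _ hr] with q hq
  exact not_not.2 (hb_ball hq)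

theorem exists_eq_unit_mul_of_mul_snd_eq {C D : E × F → ℂ} {φ ψ : F → ℂ}
    (hC : AnalyticAt ℂ C 0) (hD : AnalyticAt ℂ D 0) (hC0 : ∃ᶠ x in 𝓝 0, C (x, 0) ≠ 0)
    (hD0 : ∃ᶠ x in 𝓝 0, D (x, 0) ≠ 0) (h : ∀ᶠ p in 𝓝 0, C p * φ p.2 = D p * ψ p.2) :
    ∃ U : F → ℂ, AnalyticAt ℂ U 0 ∧ U 0 ≠ 0 ∧ φ =ᶠ[𝓝 0] fun y => U y * ψ y := by
  have hleft : AnalyticAt ℂ (fun x : E => (x, (0 : F))) 0 := by fun_prop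
  obtain ⟨x, hx, ⟨hCx, hDx⟩, hhx⟩ := ((frequently_ne_zero_of_mul
    (hC.fun_comp_of_eq hleft rfl) (hD.fun_comp_of_eq hleft rfl) hC0 hD0).and_eventually
    (eventually_zero_comp hleft.continuousAt rfl
      ((hC.eventually_analyticAt.and hD.eventually_analyticAt).and h.eventually_nhds))).exists
  obtain ⟨hCx0, hDx0⟩ := mul_ne_zero_iff.1 hx
  have hright : AnalyticAt ℂ (fun y : F => (x, y)) 0 := by fun_prop
  have hCy : AnalyticAt ℂ (fun y => C (x, y)) 0 := hCx.fun_comp_of_eq hright rfl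
  refine ⟨fun y => D (x, y) / C (x, y), (hDx.fun_comp_of_eq hright rfl).fun_div hCy hCx0,
    div_ne_zero hDx0 hCx0, ?_⟩
  filter_upwards [hright.continuousAt.eventually hhx, hCy.continuousAt.eventually_ne hCx0]
    with y hy hCy0
  rw [div_mul_eq_mul_div, eq_div_iff hCy0, mul_comm, hy]

theorem analyticAt_mk_zero {x : E × F} :
    AnalyticAt ℂ (fun p : E × F => (p.1, p.2, (0 : G))) x :=
  analyticAt_fst.prod (analyticAt_snd.prod analyticAt_const)

theorem analyticAt_det {m : ℕ} {A : E → Matrix (Fin m) (Fin m) ℂ} {x : E}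
    (hA : ∀ i j, AnalyticAt ℂ (fun p => A p i j) x) : AnalyticAt ℂ (fun p => (A p).det) x := by
  simp only [Matrix.det_apply']
  exact Finset.analyticAt_fun_sum _ fun σ _ =>
    analyticAt_const.mul (Finset.analyticAt_fun_prod _ fun i _ => hA _ _)

theorem analyticAt_adjugate {m : ℕ} {A : E → Matrix (Fin m) (Fin m) ℂ} {x : E}
    (hA : ∀ i j, AnalyticAt ℂ (fun p => A p i j) x) (i j : Fin m) :
    AnalyticAt ℂ (fun p => (A p).adjugate i j) x := by
  simp only [Matrix.adjugate_apply]
  refine analyticAt_det fun k l => ?_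
  obtain rfl | h := eq_or_ne k j
  · simpa only [Matrix.updateRow_self] using analyticAt_const
  · simpa only [Matrix.updateRow_ne h] using hA k l

theorem analyticAt_fderiv_apply [CompleteSpace F] {a : E → F} {k v : G → E} {x : E} {y : G}
    (ha : AnalyticAt ℂ a x) (hk : AnalyticAt ℂ k y) (hv : AnalyticAt ℂ v y) (hky : k y = x) :
    AnalyticAt ℂ (fun p => fderiv ℂ a (k p) (v p)) y := by
  subst hky
  exact (ContinuousLinearMap.analyticAt_bilinear (ContinuousLinearMap.id ℂ (E →L[ℂ] F)) _).comp₂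
    (ha.fderiv.comp hk) hv

theorem fderiv_apply_comm [CompleteSpace F] {a : E → F} {x : E} (ha : AnalyticAt ℂ a x)
    (u v : E) :
    fderiv ℂ (fun y => fderiv ℂ a y u) x v = fderiv ℂ (fun y => fderiv ℂ a y v) x u := by
  have happly (u v : E) : fderiv ℂ (fun y => fderiv ℂ a y u) x v = fderiv ℂ (fderiv ℂ a) x v u := by
    have h := ha.fderiv.differentiableAt.hasFDerivAt.clm_apply (hasFDerivAt_const u x)
    simpa using congrArg (fun L => L v) h.fderiv
  rw [happly, happly]
  exact (ha.contDiffAt (n := ⊤)).isSymmSndFDerivAt_of_omega _ _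

theorem fderiv_prodMk_left {a : E × F → G} {p : E × F} (ha : DifferentiableAt ℂ a p) (u : E) :
    fderiv ℂ (fun x => a (x, p.2)) p.1 u = fderiv ℂ a p (u, 0) := by
  have h : HasFDerivAt (fun x => a (x, p.2)) _ p.1 :=
    HasFDerivAt.comp p.1 (f := fun x => (x, p.2)) ha.hasFDerivAt (hasFDerivAt_prodMk_left p.1 p.2)
  simpa using congrArg (fun L => L u) h.fderiv

theorem fderiv_prodMk_right {a : E × F → G} {p : E × F} (ha : DifferentiableAt ℂ a p) (v : F) :
    fderiv ℂ (fun y => a (p.1, y)) p.2 v = fderiv ℂ a p (0, v) := by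
  have h : HasFDerivAt (fun y => a (p.1, y)) _ p.2 :=
    HasFDerivAt.comp p.2 (f := fun y => (p.1, y)) ha.hasFDerivAt (hasFDerivAt_prodMk_right p.1 p.2)
  simpa using congrArg (fun L => L v) h.fderiv

theorem clm_apply_eq_sum (L : (Fin n → ℂ) →L[ℂ] E) (v : Fin n → ℂ) :
    L v = ∑ i, v i • L (Pi.single i 1) := by
  conv_lhs => rw [pi_eq_sum_univ' v]
  simp only [map_sum, map_smul]

end Germs

section Conjugation

theorem frequently_star_ne_zero {E F : Type*} [TopologicalSpace E] [AddMonoid E]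
    [StarAddMonoid E] [ContinuousStar E] [AddMonoid F] [StarAddMonoid F] {a : E → F}
    (ha : ∃ᶠ x in 𝓝 0, a x ≠ 0) :
    ∃ᶠ x in 𝓝 0, star (a (star x)) ≠ 0 := by
  intro h
  refine ha ?_
  filter_upwards [eventually_zero_comp continuous_star.continuousAt (star_zero E) h] with x hx
  simpa only [star_star, ne_eq, star_eq_zero] using hx

variable {E F : Type*} [NormedAddCommGroup E] [NormedSpace ℂ E] [StarAddMonoid E]
  [NormedStarGroup E] [StarModule ℂ E] [NormedAddCommGroup F] [NormedSpace ℂ F] [StarAddMonoid F]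
  [NormedStarGroup F] [StarModule ℂ F]

/-- The conjugate `v ↦ star (p (star v₁, …, star vₖ))` of a continuous multilinear map. Conjugating
all coefficients of a power series of `a` gives one of `star ∘ a ∘ star`. -/
noncomputable def conjMultilinear {k : ℕ} (p : ContinuousMultilinearMap ℂ (fun _ : Fin k => E) F) :
    ContinuousMultilinearMap ℂ (fun _ : Fin k => E) F :=
  have hupdate [DecidableEq (Fin k)] (m : Fin k → E) (i : Fin k) (x : E) :
      (fun j => star (Function.update m i x j)) =
        Function.update (fun j => star (m j)) i (star x) :=
    funext fun _ => Function.apply_update (fun _ => star) m i x _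
  MultilinearMap.mkContinuous
    { toFun := fun v => star (p fun i => star (v i))
      map_update_add' := fun m i x y => by
        simp only [hupdate, star_add, ContinuousMultilinearMap.map_update_add]
      map_update_smul' := fun m i (c : ℂ) x => by
        simp only [hupdate, star_smul, ContinuousMultilinearMap.map_update_smul, star_star] }
    ‖p‖ fun m => (norm_star _).trans_le
      ((p.le_opNorm fun i => star (m i)).trans_eq (by simp only [norm_star]))

theorem norm_conjMultilinear_le {k : ℕ}
    (p : ContinuousMultilinearMap ℂ (fun _ : Fin k => E) F) : ‖conjMultilinear p‖ ≤ ‖p‖ := by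
  unfold conjMultilinear
  exact MultilinearMap.mkContinuous_norm_le _ (norm_nonneg _) _

theorem fderiv_star_star_apply (a : E → F) (x v : E) :
    fderiv ℂ (fun y => star (a (star y))) x v = star (fderiv ℂ a (star x) (star v)) := by
  by_cases ha : DifferentiableAt ℂ a (star x)
  · have hconj := ha.hasFDerivAt.star_star
    rw [star_star] at hconj
    exact congrArg (fun L => L v) hconj.fderiv
  · have hconj : ¬ DifferentiableAt ℂ (fun y => star (a (star y))) x := fun h => ha <| by
      simpa [Function.comp_def] using h.star_star
    simp [fderiv_zero_of_not_differentiableAt ha, fderiv_zero_of_not_differentiableAt hconj]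

theorem analyticAt_star_star_s4 {a : E → F} {x y : E} (ha : AnalyticAt ℂ a y) (hxy : star x = y) :
    AnalyticAt ℂ (fun v => star (a (star v))) x := by
  subst hxy
  obtain ⟨p, r, hp⟩ := ha
  refine ⟨fun k => conjMultilinear (p k), r, hp.r_le.trans ?_, hp.r_pos, fun {v} hv => ?_⟩
  · refine ENNReal.le_of_forall_nnreal_lt fun s hs => ?_
    obtain ⟨C, -, hC⟩ := p.norm_mul_pow_le_of_lt_radius hs
    refine FormalMultilinearSeries.le_radius_of_bound _ C fun k => ?_
    exact (mul_le_mul_of_nonneg_right (norm_conjMultilinear_le (p k)) (by positivity)).trans (hC k)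
  · have hv_star : star v ∈ Metric.eball (0 : E) r := by
      simpa [Metric.mem_eball, edist_zero_right, enorm_eq_nnnorm] using hv
    have hsum := (hp.hasSum hv_star).star
    rw [← star_add] at hsum
    exact hsum

end Conjugation

section HomogeneousTerms

variable {φ ψ U : (Fin n → ℂ) → ℂ}

theorem iteratedFDeriv_diag_eq_iteratedDeriv {E F : Type*} [NormedAddCommGroup E]
    [NormedSpace ℂ E] [NormedAddCommGroup F] [NormedSpace ℂ F] [CompleteSpace F] {a : E → F}
    {x : E} (ha : AnalyticAt ℂ a x) (d : ℕ) (v : E) :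
    iteratedFDeriv ℂ d a x (fun _ => v) = iteratedDeriv d (fun t : ℂ => a (x + t • v)) 0 := by
  obtain ⟨p, r, hp⟩ := ha
  have hshift : HasFPowerSeriesOnBall (fun y => a (x + y)) p
      (ContinuousLinearMap.toSpanSingleton ℂ v 0) r := by
    simpa [add_comm] using hp.comp_sub (-x)
  have hline := hshift.compContinuousLinearMap.factorial_smul (1 : ℂ) d
  rw [← iteratedDeriv_eq_iteratedFDeriv] at hline
  rw [← hp.factorial_smul v d]
  simpa [FormalMultilinearSeries.compContinuousLinearMap, Function.comp_def] using hline

theorem homogTerm_eq_iteratedDeriv (hφ : AnalyticAt ℂ φ 0) (d : ℕ) (z : Fin n → ℂ) :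
    homogTerm d φ z = iteratedDeriv d (fun t : ℂ => φ (t • z)) 0 / (d.factorial : ℂ) := by
  simp only [homogTerm, iteratedFDeriv_diag_eq_iteratedDeriv hφ, zero_add]

theorem homogTerm_congr (h : φ =ᶠ[𝓝 0] ψ) (d : ℕ) : homogTerm d φ = homogTerm d ψ := by
  ext z
  rw [homogTerm, homogTerm, (h.iteratedFDeriv ℂ d).self_of_nhds]

theorem vanishOrder_congr (h : φ =ᶠ[𝓝 0] ψ) : vanishOrder φ = vanishOrder ψ := by
  simp only [vanishOrder, homogTerm_congr h]

theorem exists_homogTerm_ne_zero (hφ : AnalyticAt ℂ φ 0) (hφ0 : ∃ᶠ z in 𝓝 0, φ z ≠ 0) :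
    ∃ d, homogTerm d φ ≠ 0 := by
  by_contra! hterms
  obtain ⟨p, r, hp⟩ := hφ
  obtain ⟨z, hφz, hz⟩ := (hφ0.and_eventually (Metric.eball_mem_nhds _ hp.r_pos)).exists
  have hsum := hp.hasSum_iteratedFDeriv hz
  have hterm (d : ℕ) :
      (d.factorial : ℂ)⁻¹ • iteratedFDeriv ℂ d φ 0 (fun _ => z) = 0 := by
    simpa [homogTerm, div_eq_inv_mul] using congrFun (hterms d) z
  simp only [hterm, zero_add] at hsum
  exact hφz (hsum.unique hasSum_zero)

theorem homogTerm_vanishOrder_ne_zero (hφ : AnalyticAt ℂ φ 0) (hφ0 : ∃ᶠ z in 𝓝 0, φ z ≠ 0) :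
    homogTerm (vanishOrder φ) φ ≠ 0 :=
  Nat.sInf_mem (s := {d | homogTerm d φ ≠ 0}) (exists_homogTerm_ne_zero hφ hφ0)

theorem homogTerm_eq_zero_of_lt_vanishOrder {d : ℕ} (hd : d < vanishOrder φ) :
    homogTerm d φ = 0 :=
  not_not.1 (Nat.notMem_of_lt_sInf hd)

theorem homogTerm_mul_of_forall_lt (hU : AnalyticAt ℂ U 0) (hφ : AnalyticAt ℂ φ 0) {d : ℕ}
    {z : Fin n → ℂ} (hlow : ∀ i < d, homogTerm i φ z = 0) :
    homogTerm d (fun v => U v * φ v) z = U 0 * homogTerm d φ z := by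
  have hline {a : (Fin n → ℂ) → ℂ} (ha : AnalyticAt ℂ a 0) :
      AnalyticAt ℂ (fun t : ℂ => a (t • z)) 0 :=
    AnalyticAt.fun_comp (by simpa using ha) (by fun_prop)
  have hleibniz := iteratedDeriv_fun_mul (n := d) (hline hU).contDiffAt (hline hφ).contDiffAt
  rw [Finset.sum_eq_single_of_mem 0 (by simp)] at hleibniz
  · rw [homogTerm_eq_iteratedDeriv (hU.fun_mul hφ), homogTerm_eq_iteratedDeriv hφ, hleibniz]
    simp [mul_div_assoc]
  · intro i hi hi0
    have hlt : d - i < d := by grind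
    have hzero := hlow _ hlt
    rw [homogTerm_eq_iteratedDeriv hφ, div_eq_zero_iff] at hzero
    rw [hzero.resolve_right (Nat.cast_ne_zero.2 (Nat.factorial_ne_zero _)), mul_zero]

theorem forall_lt_homogTerm_eq_zero_of_mul (hU : AnalyticAt ℂ U 0) (hφ : AnalyticAt ℂ φ 0)
    (hU0 : U 0 ≠ 0) {d : ℕ} {z : Fin n → ℂ}
    (hlow : ∀ i < d, homogTerm i (fun v => U v * φ v) z = 0) : ∀ i < d, homogTerm i φ z = 0 := by
  intro i
  induction i using Nat.strong_induction_on with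
  | _ i ih =>
    intro hi
    have hzero := hlow i hi
    rw [homogTerm_mul_of_forall_lt hU hφ fun j hj => ih j hj (hj.trans hi)] at hzero
    exact (mul_eq_zero.1 hzero).resolve_left hU0

theorem vanishOrder_unit_mul (hU : AnalyticAt ℂ U 0) (hφ : AnalyticAt ℂ φ 0) (hU0 : U 0 ≠ 0)
    (hφ0 : ∃ᶠ z in 𝓝 0, φ z ≠ 0) : vanishOrder (fun z => U z * φ z) = vanishOrder φ := by
  refine le_antisymm (Nat.sInf_le fun h => ?_) (not_lt.1 fun hlt => ?_)
  · refine homogTerm_vanishOrder_ne_zero hφ hφ0 (funext fun z => ?_)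
    have hzero := congrFun h z
    rw [homogTerm_mul_of_forall_lt hU hφ fun i hi =>
      congrFun (homogTerm_eq_zero_of_lt_vanishOrder hi) z] at hzero
    exact (mul_eq_zero.1 hzero).resolve_left hU0
  · refine homogTerm_vanishOrder_ne_zero (φ := fun z => U z * φ z) (hU.fun_mul hφ) ?_ ?_
    · exact (hφ0.and_eventually (hU.continuousAt.eventually_ne hU0)).mono fun z hz =>
        mul_ne_zero hz.2 hz.1
    · ext z
      rw [homogTerm_mul_of_forall_lt hU hφ fun i hi =>
        congrFun (homogTerm_eq_zero_of_lt_vanishOrder (hi.trans hlt)) z,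
        homogTerm_eq_zero_of_lt_vanishOrder hlt]
      simp

theorem iteratedDeriv_star_star (u : ℂ → ℂ) (d : ℕ) :
    iteratedDeriv d (star ∘ u ∘ star) = star ∘ iteratedDeriv d u ∘ star := by
  induction d with
  | zero => simp only [iteratedDeriv_zero]
  | succ d ih =>
    rw [iteratedDeriv_succ, iteratedDeriv_succ, ih]
    exact deriv_conj_conj

theorem homogTerm_star_star (hφ : AnalyticAt ℂ φ 0) (d : ℕ) (z : Fin n → ℂ) :
    homogTerm d (fun v => star (φ (star v))) z = star (homogTerm d φ (star z)) := by
  have hline : (fun t : ℂ => star (φ (star (t • z)))) =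
      star ∘ (fun t : ℂ => φ (t • star z)) ∘ star := by
    ext t
    simp only [Function.comp_apply, star_smul]
  rw [homogTerm_eq_iteratedDeriv (analyticAt_star_star_s4 hφ (star_zero _)),
    homogTerm_eq_iteratedDeriv hφ, hline, iteratedDeriv_star_star]
  simp

theorem vanishOrder_star_star (hφ : AnalyticAt ℂ φ 0) :
    vanishOrder (fun v => star (φ (star v))) = vanishOrder φ := by
  have hterm (d : ℕ) :
      homogTerm d (fun v => star (φ (star v))) = 0 ↔ homogTerm d φ = 0 := by
    simp only [funext_iff, homogTerm_star_star hφ, Pi.zero_apply, star_eq_zero]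
    exact (star_involutive.surjective.forall (p := fun z => homogTerm d φ z = 0)).symm
  simp only [vanishOrder, ne_eq, hterm]

theorem continuousAt_homogTerm_slice {E : Type*} [NormedAddCommGroup E] [NormedSpace ℂ E]
    {A : E × (Fin n → ℂ) → ℂ} (hA : AnalyticAt ℂ A 0) (d : ℕ) (w : Fin n → ℂ) :
    ContinuousAt (fun z => homogTerm d (fun χ => A (z, χ)) w) 0 := by
  have hderiv : ContinuousAt (iteratedFDeriv ℂ d A) ((0 : E), (0 : Fin n → ℂ)) :=
    (hA.contDiffAt (n := d)).continuousAt_iteratedFDeriv le_rfl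
  have hcont : ContinuousAt (fun z : E => iteratedFDeriv ℂ d A (z, 0) fun _ => (0, w)) 0 :=
    (hderiv.comp (f := fun z : E => (z, (0 : Fin n → ℂ))) (by fun_prop)).eval_const _
  have heq : (fun z => homogTerm d (fun χ => A (z, χ)) w) =ᶠ[𝓝 0]
      fun z => iteratedFDeriv ℂ d A (z, 0) (fun _ => (0, w)) / (d.factorial : ℂ) := by
    filter_upwards [eventually_zero_comp (e := fun z : E => (z, (0 : Fin n → ℂ))) (by fun_prop) rfl
      hA.eventually_analyticAt] with z hz
    have hslice : AnalyticAt ℂ (fun χ => A (z, χ)) 0 :=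
      hz.comp (f := fun χ : Fin n → ℂ => (z, χ)) (by fun_prop)
    rw [homogTerm_eq_iteratedDeriv hslice, iteratedFDeriv_diag_eq_iteratedDeriv hz]
    simp
  exact (hcont.div_const _).congr heq.symm

theorem slice_mul_homogTerm_eq {E : Type*} [NormedAddCommGroup E] [NormedSpace ℂ E]
    {S A U : E × (Fin n → ℂ) → ℂ} {z : E} (hS : AnalyticAt ℂ S (z, 0))
    (hA : AnalyticAt ℂ A (z, 0)) (hU : AnalyticAt ℂ U (z, 0)) (hφ : AnalyticAt ℂ φ 0)
    (hSA : ∀ᶠ p in 𝓝 (z, 0), S p * A p = U p * φ p.2) (hSz : S (z, 0) ≠ 0) (w : Fin n → ℂ) :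
    S (z, 0) * homogTerm (vanishOrder φ) (fun χ => A (z, χ)) w =
      U (z, 0) * homogTerm (vanishOrder φ) φ w := by
  have hslice {B : E × (Fin n → ℂ) → ℂ} (hB : AnalyticAt ℂ B (z, 0)) :
      AnalyticAt ℂ (fun χ => B (z, χ)) 0 :=
    hB.comp (f := fun χ : Fin n → ℂ => (z, χ)) (by fun_prop)
  have hlowφ (i : ℕ) (hi : i < vanishOrder φ) : homogTerm i φ w = 0 :=
    congrFun (homogTerm_eq_zero_of_lt_vanishOrder hi) w
  have heq : (fun χ => S (z, χ) * A (z, χ)) =ᶠ[𝓝 0] fun χ => U (z, χ) * φ χ :=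
    (ContinuousAt.tendsto (f := fun χ : Fin n → ℂ => (z, χ)) (by fun_prop)).eventually hSA
  have hlowA := forall_lt_homogTerm_eq_zero_of_mul (hslice hS) (hslice hA) hSz
    (d := vanishOrder φ) (z := w) fun i hi => by
      rw [homogTerm_congr heq, homogTerm_mul_of_forall_lt (hslice hU) hφ fun j hj =>
        hlowφ j (hj.trans hi), hlowφ i hi, mul_zero]
  rw [← homogTerm_mul_of_forall_lt (hslice hS) (hslice hA) hlowA, homogTerm_congr heq,
    homogTerm_mul_of_forall_lt (hslice hU) hφ hlowφ]

/- If `S 0 = 0`, then the zero set of `S` would be contained in that of `φ`, which does not depend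
on `z`, against `S (·, 0) ≢ 0`. Comparing lowest order terms in `χ` turns this into a limit. -/
theorem ne_zero_of_mul_eq_unit_mul_snd {E : Type*} [NormedAddCommGroup E] [NormedSpace ℂ E]
    {S A U : E × (Fin n → ℂ) → ℂ} (hS : AnalyticAt ℂ S 0) (hA : AnalyticAt ℂ A 0)
    (hU : AnalyticAt ℂ U 0) (hφ : AnalyticAt ℂ φ 0)
    (hSA : ∀ᶠ p in 𝓝 0, S p * A p = U p * φ p.2) (hU0 : U 0 ≠ 0)
    (hφ0 : ∃ᶠ χ in 𝓝 0, φ χ ≠ 0) (hS0 : ∃ᶠ z in 𝓝 0, S (z, 0) ≠ 0) : S 0 ≠ 0 := by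
  obtain ⟨w, hw⟩ := Function.ne_iff.1 (homogTerm_vanishOrder_ne_zero hφ hφ0)
  have hzero {P : E × (Fin n → ℂ) → Prop} (hP : ∀ᶠ p in 𝓝 0, P p) : ∀ᶠ z in 𝓝 0, P (z, 0) :=
    eventually_zero_comp (e := fun z : E => (z, (0 : Fin n → ℂ))) (by fun_prop) rfl hP
  have hcont {B : E × (Fin n → ℂ) → ℂ} (hB : AnalyticAt ℂ B 0) :
      ContinuousAt (fun z => B (z, 0)) 0 :=
    ContinuousAt.comp (f := fun z : E => (z, (0 : Fin n → ℂ))) hB.continuousAt (by fun_prop)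
  have hfreq : ∃ᶠ z in 𝓝 0, S (z, 0) * homogTerm (vanishOrder φ) (fun χ => A (z, χ)) w =
      U (z, 0) * homogTerm (vanishOrder φ) φ w := by
    refine (hS0.and_eventually ((hzero hS.eventually_analyticAt).and <|
      (hzero hA.eventually_analyticAt).and <| (hzero hU.eventually_analyticAt).and <|
      hzero hSA.eventually_nhds)).mono fun z hz => ?_
    obtain ⟨hSz, hSan, hAan, hUan, hSAz⟩ := hz
    exact slice_mul_homogTerm_eq hSan hAan hUan hφ hSAz hSz w
  have hlimit := tendsto_nhds_unique_of_frequently_eq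
    ((hcont hS).mul (continuousAt_homogTerm_slice hA _ w)).tendsto
    ((hcont hU).mul continuousAt_const).tendsto hfreq
  exact left_ne_zero_of_mul (hlimit.trans_ne (mul_ne_zero hU0 hw))

end HomogeneousTerms

section LinearNondegeneracy

variable {E F : Type*} [NormedAddCommGroup E] [NormedAddCommGroup F]

/-- The germ of `u` at `0` is linearly nondegenerate: its image is not contained in a hyperplane
through the origin. -/
def LinearlyNondegenerate (u : E → Fin n → ℂ) : Prop :=
  ∀ v ≠ 0, ∃ᶠ z in 𝓝 0, u z ⬝ᵥ v ≠ 0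

theorem frequently_comp_ne_zero [NormedSpace ℂ E] [CompleteSpace E] [NormedSpace ℂ F]
    [CompleteSpace F] {a : F → ℂ} {k : E → F} (ha : AnalyticAt ℂ a 0) (hk : AnalyticAt ℂ k 0)
    (hk0 : k 0 = 0) (hsurj : ∃ᶠ z in 𝓝 0, Function.Surjective (fderiv ℂ k z))
    (ha0 : ∃ᶠ x in 𝓝 0, a x ≠ 0) : ∃ᶠ z in 𝓝 0, a (k z) ≠ 0 := by
  intro hak
  obtain ⟨r, hr, hball⟩ := Metric.eventually_nhds_iff_ball.1 ha.eventually_analyticAt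
  obtain ⟨z, hz_surj, hkz, hz_ball, hak_z⟩ := (hsurj.and_eventually
    (hk.eventually_analyticAt.and ((eventually_zero_comp hk.continuousAt hk0
      (Metric.ball_mem_nhds 0 hr)).and hak.eventually_nhds))).exists
  have hmap : map k (𝓝 z) = 𝓝 (k z) :=
    hkz.hasStrictFDerivAt.map_nhds_eq_of_surj (LinearMap.range_eq_top.2 hz_surj)
  have ha_kz : a =ᶠ[𝓝 (k z)] 0 := by
    rw [← hmap]
    exact hak_z.mono fun w hw => not_not.1 hw
  have ha_ball : Set.EqOn a 0 (Metric.ball 0 r) :=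
    AnalyticOnNhd.eqOn_zero_of_preconnected_of_eventuallyEq_zero hball
      (convex_ball (0 : F) r).isPreconnected hz_ball ha_kz
  refine ha0 ?_
  filter_upwards [Metric.ball_mem_nhds 0 hr] with x hx
  exact not_not.2 (ha_ball hx)

theorem LinearlyNondegenerate.comp [NormedSpace ℂ E] [CompleteSpace E] [NormedSpace ℂ F]
    [CompleteSpace F] {u : F → Fin n → ℂ} {k : E → F} (hu : LinearlyNondegenerate u)
    (hu_an : AnalyticAt ℂ u 0) (hk : AnalyticAt ℂ k 0) (hk0 : k 0 = 0)
    (hsurj : ∃ᶠ z in 𝓝 0, Function.Surjective (fderiv ℂ k z)) :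
    LinearlyNondegenerate fun z => u (k z) := fun v hv =>
  frequently_comp_ne_zero (a := fun x => u x ⬝ᵥ v)
    (Finset.analyticAt_fun_sum _ fun i _ => (analyticAt_pi_iff.1 hu_an i).mul analyticAt_const)
    hk hk0 hsurj (hu v hv)

theorem LinearlyNondegenerate.span_image_eq_top {u : E → Fin n → ℂ}
    (hu : LinearlyNondegenerate u) {s : Set E} (hs : s ∈ 𝓝 0) :
    Submodule.span ℂ (u '' s) = ⊤ := by
  by_contra hne
  obtain ⟨ℓ, hℓ, hker⟩ := Submodule.exists_le_ker_of_lt_top _ (lt_top_iff_ne_top.2 hne)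
  have hℓ_eq (w : Fin n → ℂ) : ℓ w = w ⬝ᵥ fun i => ℓ (Pi.single i 1) := by
    simpa [dotProduct] using clm_apply_eq_sum (LinearMap.toContinuousLinearMap ℓ) w
  refine hu (fun i => ℓ (Pi.single i 1)) (fun hzero => hℓ ?_) ?_
  · ext i
    simpa using congrFun hzero i
  · filter_upwards [hs] with z hz
    rw [← hℓ_eq]
    exact not_not.2 (hker (Submodule.subset_span ⟨z, hz, rfl⟩))

theorem LinearlyNondegenerate.frequently_det_ne_zero {u : E → Fin n → ℂ}
    (hu : LinearlyNondegenerate u) :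
    ∃ᶠ zs in 𝓝 (0 : Fin n → E), (Matrix.of fun i => u (zs i)).det ≠ 0 := by
  rw [Filter.frequently_iff]
  intro s hs
  obtain ⟨r, hr, hball⟩ := Metric.nhds_basis_ball.mem_iff.1 hs
  have hspan := hu.span_image_eq_top (Metric.ball_mem_nhds 0 hr)
  obtain ⟨b, hb_mem, -, hb_indep⟩ :=
    Submodule.exists_fun_fin_finrank_span_eq ℂ (u '' Metric.ball 0 r)
  have hcard : Module.finrank ℂ (Submodule.span ℂ (u '' Metric.ball 0 r)) = n := by
    rw [hspan, finrank_top, Module.finrank_fin_fun]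
  choose zs hzs_mem hzs_eq using fun i : Fin n => hb_mem (Fin.cast hcard.symm i)
  refine ⟨zs, hball ?_, ?_⟩
  · rw [mem_ball_zero_iff, pi_norm_lt_iff hr]
    exact fun i => mem_ball_zero_iff.1 (hzs_mem i)
  · have hindep : LinearIndependent ℂ (Matrix.of fun i => u (zs i)).row := by
      have hrows : (Matrix.of fun i => u (zs i)).row = b ∘ Fin.cast hcard.symm := funext hzs_eq
      rw [hrows]
      exact hb_indep.comp _ (Fin.cast_injective _)
    exact ((Matrix.isUnit_iff_isUnit_det _).1
      (Matrix.linearIndependent_rows_iff_isUnit.1 hindep)).ne_zero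

end LinearNondegeneracy

section FiniteNondegeneracy

/-- `Q`, with its three groups of variables combined into one. -/
abbrev uncurry₃ (Q : (Fin n → ℂ) → (Fin n → ℂ) → ℂ → ℂ) : (Fin n → ℂ) × (Fin n → ℂ) × ℂ → ℂ :=
  fun p => Q p.1 p.2.1 p.2.2

/-- The gradient `∂_χ Q`. -/
noncomputable def chiGrad (Q : (Fin n → ℂ) → (Fin n → ℂ) → ℂ → ℂ)
    (p : (Fin n → ℂ) × (Fin n → ℂ) × ℂ) : Fin n → ℂ :=
  fun k => fderiv ℂ (uncurry₃ Q) p (0, Pi.single k 1, 0)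

variable {Q : (Fin n → ℂ) → (Fin n → ℂ) → ℂ → ℂ}

theorem chiGrad_dotProduct (p : (Fin n → ℂ) × (Fin n → ℂ) × ℂ) (v : Fin n → ℂ) :
    chiGrad Q p ⬝ᵥ v = fderiv ℂ (uncurry₃ Q) p (0, v, 0) := by
  have hsum := clm_apply_eq_sum ((fderiv ℂ (uncurry₃ Q) p).comp
    ((ContinuousLinearMap.inr ℂ _ _).comp (ContinuousLinearMap.inl ℂ (Fin n → ℂ) ℂ))) v
  simpa [chiGrad, dotProduct, mul_comm] using hsum.symm

theorem analyticAt_chiGrad {E : Type*} [NormedAddCommGroup E] [NormedSpace ℂ E]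
    {k : E → (Fin n → ℂ) × (Fin n → ℂ) × ℂ} {x : E}
    (hQ : AnalyticAt ℂ (uncurry₃ Q) 0) (hk : AnalyticAt ℂ k x) (hk0 : k x = 0) :
    AnalyticAt ℂ (fun y => chiGrad Q (k y)) x :=
  analyticAt_pi_iff.2 fun _ => analyticAt_fderiv_apply hQ hk analyticAt_const hk0

theorem mpd_induction {P : (((Fin n → ℂ) → ℂ) → (Fin n → ℂ) → ℂ) → Prop} (hid : P id)
    (hpd : ∀ i T, P T → P (pd i ∘ T)) (α : Fin n → ℕ) : P (mpd α) := by
  have hiterate (i : Fin n) {T} (hT : P T) (k : ℕ) : P ((pd i)^[k] ∘ T) := by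
    induction k with
    | zero => exact hT
    | succ k ih =>
      rw [Function.iterate_succ', Function.comp_assoc]
      exact hpd i _ ih
  have hfoldr (l : List (((Fin n → ℂ) → ℂ) → (Fin n → ℂ) → ℂ))
      (hl : ∀ T ∈ l, ∃ i, (pd i)^[α i] = T) : P (l.foldr (· ∘ ·) id) := by
    induction l with
    | nil => exact hid
    | cons T l ih =>
      obtain ⟨i, rfl⟩ := hl T List.mem_cons_self
      exact hiterate i (ih fun S hS => hl S (List.mem_cons_of_mem _ hS)) _
  exact hfoldr _ fun T hT => List.mem_ofFn.1 hT

/- Iterated `z`-derivatives commute with `∂_v` and see only `∂_v K (·, 0)`, which vanishes. -/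
theorem exists_analyticAt_eq_mpd_slice {F : Type*} [NormedAddCommGroup F] [NormedSpace ℂ F]
    {K : (Fin n → ℂ) × F → ℂ} (hK : AnalyticAt ℂ K 0) {v : F}
    (hv : ∀ᶠ z in 𝓝 0, fderiv ℂ K (z, 0) (0, v) = 0) (α : Fin n → ℕ) :
    ∃ L : (Fin n → ℂ) × F → ℂ, AnalyticAt ℂ L 0 ∧
      (∀ᶠ p in 𝓝 0, mpd α (fun z => K (z, p.2)) p.1 = L p) ∧
      ∀ᶠ z in 𝓝 0, fderiv ℂ L (z, 0) (0, v) = 0 := by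
  refine mpd_induction (P := fun T => ∃ L : (Fin n → ℂ) × F → ℂ, AnalyticAt ℂ L 0 ∧
    (∀ᶠ p in 𝓝 0, T (fun z => K (z, p.2)) p.1 = L p) ∧
    ∀ᶠ z in 𝓝 0, fderiv ℂ L (z, 0) (0, v) = 0) ?_ ?_ α
  · exact ⟨K, hK, .of_forall fun _ => rfl, hv⟩
  · rintro j T ⟨L, hL, hTL, hLv⟩
    refine ⟨fun p => fderiv ℂ L p (Pi.single j 1, 0),
      analyticAt_fderiv_apply hL analyticAt_id analyticAt_const rfl, ?_, ?_⟩
    · filter_upwards [hTL.eventually_nhds, hL.eventually_analyticAt] with p hTLp hLp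
      have hslice : T (fun z => K (z, p.2)) =ᶠ[𝓝 p.1] fun z => L (z, p.2) :=
        (ContinuousAt.tendsto (f := fun z => (z, p.2)) (by fun_prop)).eventually hTLp
      rw [Function.comp_apply, pd, hslice.fderiv_eq, fderiv_prodMk_left hLp.differentiableAt]
    · filter_upwards [hLv.eventually_nhds, eventually_zero_comp (e := fun z => (z, (0 : F)))
        (by fun_prop) rfl hL.eventually_analyticAt] with z hz hLz
      have hzero : (fun w => fderiv ℂ L (w, 0) (0, v)) =ᶠ[𝓝 z] fun _ => 0 := hz
      rw [fderiv_apply_comm hLz, ← fderiv_prodMk_left (p := (z, 0)), hzero.fderiv_eq]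
      · simp
      · exact (analyticAt_fderiv_apply hLz analyticAt_id analyticAt_const rfl).differentiableAt

theorem FinNondeg.linearlyNondegenerate_chiGrad (hQ : AnalyticAt ℂ (uncurry₃ Q) 0)
    (hnd : FinNondeg Q) : LinearlyNondegenerate fun z => chiGrad Q (z, 0, 0) := by
  intro v hv hzero
  obtain ⟨k, hspan⟩ := hnd
  let ι : (Fin n → ℂ) × (Fin n → ℂ) →L[ℂ] (Fin n → ℂ) × (Fin n → ℂ) × ℂ :=
    (ContinuousLinearMap.fst ℂ _ _).prod ((ContinuousLinearMap.snd ℂ _ _).prod 0)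
  have hK : AnalyticAt ℂ (uncurry₃ Q ∘ ι) 0 :=
    AnalyticAt.comp (by rwa [map_zero]) (ι.analyticAt 0)
  have hKv : ∀ᶠ z in 𝓝 0, fderiv ℂ (uncurry₃ Q ∘ ι) (z, 0) (0, v) = 0 := by
    filter_upwards [hzero, eventually_zero_comp (e := fun z => (z, 0, 0)) (by fun_prop) rfl
      hQ.eventually_analyticAt] with z hz hQz
    rw [fderiv_comp (z, 0) (show DifferentiableAt ℂ (uncurry₃ Q) (ι (z, 0)) from
      hQz.differentiableAt) ι.differentiableAt, ι.fderiv]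
    exact (chiGrad_dotProduct _ v).symm.trans (not_not.1 hz)
  have horth (w : Fin n → ℂ) : w ⬝ᵥ v = 0 := by
    induction (hspan ▸ Submodule.mem_top : w ∈ Submodule.span ℂ _) using
      Submodule.span_induction with
    | mem w hw =>
      obtain ⟨α, -, rfl⟩ := hw
      obtain ⟨L, hL, hKL, hLv⟩ := exists_analyticAt_eq_mpd_slice hK hKv α
      have hslice : (fun χ => mpd α (fun z => Q z χ 0) 0) =ᶠ[𝓝 0] fun χ => L (0, χ) :=
        eventually_zero_comp (e := fun χ => (0, χ)) (by fun_prop) rfl hKL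
      have hLv0 := hLv.self_of_nhds
      rw [← fderiv_prodMk_right (p := (0, 0)) hL.differentiableAt, clm_apply_eq_sum] at hLv0
      simpa [dotProduct, pd, hslice.fderiv_eq, mul_comm] using hLv0
    | zero => exact zero_dotProduct v
    | add x y _ _ hx hy => rw [add_dotProduct, hx, hy, add_zero]
    | smul c x _ hx => rw [smul_dotProduct, hx, smul_zero]
  exact hv (dotProduct_eq_zero v fun w => (dotProduct_comm v w).trans (horth w))

end FiniteNondegeneracy

section SegreMaps

variable {Q Q' : (Fin n → ℂ) → (Fin n → ℂ) → ℂ → ℂ} {f ft : (Fin n → ℂ) → ℂ → Fin n → ℂ}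
  {g gt : (Fin n → ℂ) → ℂ → ℂ}

theorem IsNormalDF.analyticAt (hQ : IsNormalDF Q) : AnalyticAt ℂ (uncurry₃ Q) 0 :=
  hQ.1.self_of_nhds

theorem IsNormalDF.apply_zero (hQ : IsNormalDF Q) : uncurry₃ Q 0 = 0 := hQ.2.self_of_nhds.1

theorem IsNormalDF.fderiv_zero_left (hQ : IsNormalDF Q) :
    ∀ᶠ q in 𝓝 0, ∀ u, fderiv ℂ (uncurry₃ Q) (0, q) (0, u) = u.2 := by
  have hinclude : ContinuousAt (fun q : (Fin n → ℂ) × ℂ => ((0 : Fin n → ℂ), q)) 0 := by fun_prop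
  filter_upwards [(eventually_zero_comp hinclude rfl hQ.2).eventually_nhds,
    eventually_zero_comp hinclude rfl hQ.analyticAt.eventually_analyticAt] with q hq hQq u
  have hslice : (fun q' => uncurry₃ Q (0, q')) =ᶠ[𝓝 q] Prod.snd := hq.mono fun _ h => h.1
  rw [← fderiv_prodMk_right (p := (0, q)) hQq.differentiableAt, hslice.fderiv_eq, fderiv_snd]
  rfl

theorem IsNormalDF.fderiv_zero_right (hQ : IsNormalDF Q) :
    ∀ᶠ z in 𝓝 0, ∀ v, fderiv ℂ (uncurry₃ Q) (z, 0) (v, 0) = 0 := by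
  have hinclude : ContinuousAt (fun z : Fin n → ℂ => (z, (0 : (Fin n → ℂ) × ℂ))) 0 := by fun_prop
  filter_upwards [(eventually_zero_comp hinclude rfl hQ.2).eventually_nhds,
    eventually_zero_comp hinclude rfl hQ.analyticAt.eventually_analyticAt] with z hz hQz v
  have hslice : (fun z' => uncurry₃ Q (z', 0)) =ᶠ[𝓝 z] fun _ => 0 := hz.mono fun _ h => h.2
  rw [← fderiv_prodMk_left (p := (z, 0)) hQz.differentiableAt, hslice.fderiv_eq]
  simp

theorem jacz_mulVec {z : Fin n → ℂ} (hf : DifferentiableAt ℂ (Function.uncurry f) (z, 0))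
    (v : Fin n → ℂ) : (jacz f z).mulVec v = fderiv ℂ (Function.uncurry f) (z, 0) (v, 0) := by
  have hslice : DifferentiableAt ℂ (fun z' => f z' 0) z :=
    DifferentiableAt.comp z (g := Function.uncurry f) (f := fun z' => (z', 0)) hf (by fun_prop)
  rw [← fderiv_prodMk_left (p := (z, 0)) hf]
  ext i
  have hcomponent (j : Fin n) :
      jacz f z i j = fderiv ℂ (fun z' => f z' 0) z (Pi.single j 1) i := by
    have hi := (hasFDerivAt_pi'.1 hslice.hasFDerivAt i).fderiv
    simpa [jacz, pd] using congrArg (fun L => L (Pi.single j 1)) hi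
  simp [Matrix.mulVec, dotProduct, hcomponent, clm_apply_eq_sum _ v, mul_comm]

theorem surjective_fderiv_of_det_jacz_ne_zero {z : Fin n → ℂ}
    (hf : DifferentiableAt ℂ (Function.uncurry f) (z, 0)) (hdet : (jacz f z).det ≠ 0) :
    Function.Surjective (fderiv ℂ (fun z' => f z' 0) z) := fun w => by
  refine ⟨(jacz f z)⁻¹.mulVec w, ?_⟩
  calc fderiv ℂ (fun z' => f z' 0) z ((jacz f z)⁻¹.mulVec w)
      = (jacz f z).mulVec ((jacz f z)⁻¹.mulVec w) := by
        rw [jacz_mulVec hf]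
        exact fderiv_prodMk_left (p := (z, 0)) hf _
    _ = w := by
        rw [Matrix.mulVec_mulVec, Matrix.mul_nonsing_inv _ (isUnit_iff_ne_zero.2 hdet),
          Matrix.one_mulVec]

theorem analyticAt_jacz (hf : AnalyticAt ℂ (Function.uncurry f) 0) (i j : Fin n) :
    AnalyticAt ℂ (fun z => jacz f z i j) 0 := by
  have hderiv : AnalyticAt ℂ (fun z => fderiv ℂ (Function.uncurry f) (z, 0) (Pi.single j 1, 0)) 0 :=
    analyticAt_fderiv_apply hf (by fun_prop) analyticAt_const rfl
  refine (analyticAt_pi_iff.1 hderiv i).congr ?_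
  filter_upwards [eventually_zero_comp (e := fun z => (z, 0)) (by fun_prop) rfl
    hf.eventually_analyticAt] with z hz
  rw [← jacz_mulVec hz.differentiableAt, Matrix.mulVec_single_one, Matrix.col_apply]

theorem IsHSPM.analyticAt_f (h : IsHSPM Q Q' f g ft gt) :
    AnalyticAt ℂ (Function.uncurry f) 0 := h.1.self_of_nhds

theorem IsHSPM.analyticAt_g (h : IsHSPM Q Q' f g ft gt) :
    AnalyticAt ℂ (Function.uncurry g) 0 := h.2.1.self_of_nhds

theorem IsHSPM.analyticAt_ft (h : IsHSPM Q Q' f g ft gt) :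
    AnalyticAt ℂ (Function.uncurry ft) 0 := h.2.2.1.self_of_nhds

theorem IsHSPM.analyticAt_gt (h : IsHSPM Q Q' f g ft gt) :
    AnalyticAt ℂ (Function.uncurry gt) 0 := h.2.2.2.1.self_of_nhds

theorem IsHSPM.f_zero (h : IsHSPM Q Q' f g ft gt) : f 0 0 = 0 := h.2.2.2.2.1

theorem IsHSPM.g_zero (h : IsHSPM Q Q' f g ft gt) : g 0 0 = 0 := h.2.2.2.2.2.1

theorem IsHSPM.ft_zero (h : IsHSPM Q Q' f g ft gt) : ft 0 0 = 0 := h.2.2.2.2.2.2.1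

theorem IsHSPM.gt_zero (h : IsHSPM Q Q' f g ft gt) : gt 0 0 = 0 := h.2.2.2.2.2.2.2.1

/-- The `(z', χ', τ')`-coordinates of the image under `(f, g, f̃, g̃)` of the point of `ℳ` with
coordinates `(z, χ, τ)`. -/
def segreLift (Q : (Fin n → ℂ) → (Fin n → ℂ) → ℂ → ℂ) (f ft : (Fin n → ℂ) → ℂ → Fin n → ℂ)
    (gt : (Fin n → ℂ) → ℂ → ℂ) (p : (Fin n → ℂ) × (Fin n → ℂ) × ℂ) :
    (Fin n → ℂ) × (Fin n → ℂ) × ℂ :=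
  (f p.1 (uncurry₃ Q p), ft p.2.1 p.2.2, gt p.2.1 p.2.2)

/-- The factor `g_w - Q'_z f_w` by which an HSPM scales the `(χ, τ)`-differential of the defining
functions, as a function of `(z, χ, τ)`. -/
noncomputable def segreFactor (Q Q' : (Fin n → ℂ) → (Fin n → ℂ) → ℂ → ℂ)
    (f : (Fin n → ℂ) → ℂ → Fin n → ℂ) (g : (Fin n → ℂ) → ℂ → ℂ)
    (ft : (Fin n → ℂ) → ℂ → Fin n → ℂ) (gt : (Fin n → ℂ) → ℂ → ℂ)
    (p : (Fin n → ℂ) × (Fin n → ℂ) × ℂ) : ℂ :=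
  fderiv ℂ (Function.uncurry g) (p.1, uncurry₃ Q p) (0, 1) -
    fderiv ℂ (uncurry₃ Q') (segreLift Q f ft gt p)
      (fderiv ℂ (Function.uncurry f) (p.1, uncurry₃ Q p) (0, 1), 0)

theorem IsHSPM.comp_segreLift (h : IsHSPM Q Q' f g ft gt) :
    ∀ᶠ p in 𝓝 0, g p.1 (uncurry₃ Q p) = uncurry₃ Q' (segreLift Q f ft gt p) :=
  h.2.2.2.2.2.2.2.2

theorem IsNormalDF.analyticAt_graph (hQ : IsNormalDF Q) :
    AnalyticAt ℂ (fun p => (p.1, uncurry₃ Q p)) 0 := analyticAt_fst.prod hQ.analyticAt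

theorem IsNormalDF.graph_zero (hQ : IsNormalDF Q) : ((0 : Fin n → ℂ), uncurry₃ Q 0) = 0 := by
  rw [hQ.apply_zero, Prod.mk_zero_zero]

theorem IsHSPM.segreLift_zero (h : IsHSPM Q Q' f g ft gt) (hQ : IsNormalDF Q) :
    segreLift Q f ft gt 0 = 0 := by
  simp only [segreLift, hQ.apply_zero, Prod.fst_zero, Prod.snd_zero, h.f_zero, h.ft_zero,
    h.gt_zero, Prod.mk_zero_zero]

theorem IsHSPM.analyticAt_segreLift (h : IsHSPM Q Q' f g ft gt) (hQ : IsNormalDF Q) :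
    AnalyticAt ℂ (segreLift Q f ft gt) 0 :=
  (h.analyticAt_f.fun_comp_of_eq hQ.analyticAt_graph hQ.graph_zero).prod
    ((h.analyticAt_ft.fun_comp_of_eq analyticAt_snd rfl).prod
      (h.analyticAt_gt.fun_comp_of_eq analyticAt_snd rfl))

theorem IsHSPM.analyticAt_segreFactor (h : IsHSPM Q Q' f g ft gt) (hQ : IsNormalDF Q)
    (hQ' : IsNormalDF Q') : AnalyticAt ℂ (segreFactor Q Q' f g ft gt) 0 :=
  (analyticAt_fderiv_apply h.analyticAt_g hQ.analyticAt_graph analyticAt_const hQ.graph_zero).sub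
    (analyticAt_fderiv_apply hQ'.analyticAt (h.analyticAt_segreLift hQ)
      ((analyticAt_fderiv_apply h.analyticAt_f hQ.analyticAt_graph analyticAt_const
        hQ.graph_zero).prod analyticAt_const) (h.segreLift_zero hQ))

theorem IsHSPM.segreFactor_mul_fderiv (h : IsHSPM Q Q' f g ft gt) (hQ : IsNormalDF Q)
    (hQ' : IsNormalDF Q') : ∀ᶠ p in 𝓝 0, ∀ u,
      segreFactor Q Q' f g ft gt p * fderiv ℂ (uncurry₃ Q) p (0, u) =
        fderiv ℂ (uncurry₃ Q') (segreLift Q f ft gt p)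
          (0, fderiv ℂ (Function.uncurry ft) p.2 u, fderiv ℂ (Function.uncurry gt) p.2 u) := by
  filter_upwards [h.comp_segreLift.eventually_nhds, hQ.analyticAt.eventually_analyticAt,
    eventually_zero_comp hQ.analyticAt_graph.continuousAt hQ.graph_zero
      (h.analyticAt_g.eventually_analyticAt.and h.analyticAt_f.eventually_analyticAt),
    eventually_zero_comp continuousAt_snd rfl
      (h.analyticAt_ft.eventually_analyticAt.and h.analyticAt_gt.eventually_analyticAt),
    eventually_zero_comp (h.analyticAt_segreLift hQ).continuousAt (h.segreLift_zero hQ)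
      hQ'.analyticAt.eventually_analyticAt]
    with p hcomp hQp ⟨hg, hf⟩ ⟨hft, hgt⟩ hQ'p u
  have hgraph : HasFDerivAt (fun q => (q.1, uncurry₃ Q q)) _ p :=
    hasFDerivAt_fst.prodMk hQp.differentiableAt.hasFDerivAt
  have hleft : HasFDerivAt (fun q => g q.1 (uncurry₃ Q q)) _ p :=
    HasFDerivAt.comp p (g := Function.uncurry g) hg.differentiableAt.hasFDerivAt hgraph
  have hlift : HasFDerivAt (segreLift Q f ft gt) _ p :=
    (HasFDerivAt.comp p (g := Function.uncurry f) hf.differentiableAt.hasFDerivAt hgraph).prodMk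
      ((HasFDerivAt.comp p (g := Function.uncurry ft) hft.differentiableAt.hasFDerivAt
        hasFDerivAt_snd).prodMk (HasFDerivAt.comp p (g := Function.uncurry gt)
          hgt.differentiableAt.hasFDerivAt hasFDerivAt_snd))
  have hchain := congrArg (fun L => L (0, u)) ((hleft.congr_of_eventuallyEq
    (EventuallyEq.symm hcomp)).unique (hQ'p.differentiableAt.hasFDerivAt.comp p hlift))
  set d := fderiv ℂ (uncurry₃ Q) p (0, u) with hd
  set L' := fderiv ℂ (uncurry₃ Q') (segreLift Q f ft gt p)
  have hscale : ((0 : Fin n → ℂ), d) = d • ((0 : Fin n → ℂ), (1 : ℂ)) := by simp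
  have hsplit (a : Fin n → ℂ) (b : (Fin n → ℂ) × ℂ) :
      L' (d • a, b) = d * L' (a, 0) + L' (0, b) := by
    rw [← smul_eq_mul, ← map_smul, ← map_add]
    simp
  simp only [ContinuousLinearMap.comp_apply, ContinuousLinearMap.prod_apply,
    ContinuousLinearMap.coe_fst', ContinuousLinearMap.coe_snd', ← hd, hscale, map_smul,
    hsplit, smul_eq_mul] at hchain
  rw [segreFactor, sub_mul, sub_eq_iff_eq_add', mul_comm, hchain, mul_comm _ d]

theorem IsHSPM.gt_eq_zero (h : IsHSPM Q Q' f g ft gt) (hQ : IsNormalDF Q)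
    (hQ' : IsNormalDF Q') : ∀ᶠ χ in 𝓝 0, gt χ 0 = 0 := by
  have hinclude : ContinuousAt (fun χ : Fin n → ℂ => ((0 : Fin n → ℂ), χ, (0 : ℂ))) 0 := by
    fun_prop
  filter_upwards [eventually_zero_comp hinclude rfl h.comp_segreLift,
    eventually_zero_comp hinclude rfl hQ.2, eventually_zero_comp hinclude rfl (eventually_zero_comp
      (h.analyticAt_segreLift hQ).continuousAt (h.segreLift_zero hQ) hQ'.2)]
    with χ hcomp hQχ hQ'χ
  simp only [uncurry₃, segreLift, hQχ.1, h.f_zero, h.g_zero] at hcomp hQ'χ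
  exact (hcomp.trans hQ'χ.1).symm

theorem IsHSPM.fderiv_gt_eq_zero (h : IsHSPM Q Q' f g ft gt) (hQ : IsNormalDF Q)
    (hQ' : IsNormalDF Q') : ∀ᶠ χ in 𝓝 0, ∀ v,
      fderiv ℂ (Function.uncurry gt) (χ, 0) (v, 0) = 0 := by
  filter_upwards [(h.gt_eq_zero hQ hQ').eventually_nhds, eventually_zero_comp
    (e := fun χ => (χ, 0)) (by fun_prop) rfl h.analyticAt_gt.eventually_analyticAt]
    with χ hzero hgt v
  have hslice : (fun χ' => Function.uncurry gt (χ', 0)) =ᶠ[𝓝 χ] fun _ => 0 := hzero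
  rw [← fderiv_prodMk_left (p := (χ, 0)) hgt.differentiableAt, hslice.fderiv_eq]
  simp

end SegreMaps

section SegreDeterminants

variable {Q Q' : (Fin n → ℂ) → (Fin n → ℂ) → ℂ → ℂ} {f ft : (Fin n → ℂ) → ℂ → Fin n → ℂ}
  {g gt : (Fin n → ℂ) → ℂ → ℂ}

theorem IsHSPM.segreFactor_smul_chiGrad (h : IsHSPM Q Q' f g ft gt) (hQ : IsNormalDF Q)
    (hQ' : IsNormalDF Q') : ∀ᶠ p : (Fin n → ℂ) × (Fin n → ℂ) in 𝓝 0,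
      segreFactor Q Q' f g ft gt (p.1, p.2, 0) • chiGrad Q (p.1, p.2, 0) =
        Matrix.vecMul (chiGrad Q' (segreLift Q f ft gt (p.1, p.2, 0))) (jacz ft p.2) := by
  filter_upwards [eventually_zero_comp (e := fun p => (p.1, p.2, 0)) (by fun_prop) rfl
      (h.segreFactor_mul_fderiv hQ hQ'),
    eventually_zero_comp continuousAt_snd rfl (h.fderiv_gt_eq_zero hQ hQ'),
    eventually_zero_comp (e := fun p => (p.2, 0)) (by fun_prop) rfl
      h.analyticAt_ft.eventually_analyticAt] with p hS hgt hft
  refine dotProduct_eq _ _ fun v => ?_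
  rw [smul_dotProduct, smul_eq_mul, chiGrad_dotProduct, ← Matrix.dotProduct_mulVec,
    jacz_mulVec hft.differentiableAt, chiGrad_dotProduct, hS, hgt]

theorem IsHSPM.prod_segreFactor_mul_det_chiGrad (h : IsHSPM Q Q' f g ft gt) (hQ : IsNormalDF Q)
    (hQ' : IsNormalDF Q') : ∀ᶠ p : (Fin n → Fin n → ℂ) × (Fin n → ℂ) in 𝓝 0,
      (∏ i, segreFactor Q Q' f g ft gt (p.1 i, p.2, 0)) *
          (Matrix.of fun i => chiGrad Q (p.1 i, p.2, 0)).det =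
        (Matrix.of fun i => chiGrad Q' (segreLift Q f ft gt (p.1 i, p.2, 0))).det *
          (jacz ft p.2).det := by
  filter_upwards [eventually_all.2 fun i => eventually_zero_comp
    (e := fun p : (Fin n → Fin n → ℂ) × (Fin n → ℂ) => (p.1 i, p.2)) (by fun_prop) rfl
    (h.segreFactor_smul_chiGrad hQ hQ')] with p hp
  rw [← Matrix.det_mul_column, ← Matrix.det_mul]
  exact congrArg Matrix.det (funext fun i => hp i)

theorem IsHSPM.linearlyNondegenerate_chiGrad_segreLift (h : IsHSPM Q Q' f g ft gt)
    (hQ : IsNormalDF Q) (hQ' : IsNormalDF Q') (hM' : FinNondeg Q')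
    (hf : ∃ᶠ z in 𝓝 0, (jacz f z).det ≠ 0) :
    LinearlyNondegenerate fun z => chiGrad Q' (segreLift Q f ft gt (z, 0, 0)) := by
  have hinclude : AnalyticAt ℂ (fun z : Fin n → ℂ => (z, (0 : ℂ))) 0 := by fun_prop
  have hsurj : ∃ᶠ z in 𝓝 0, Function.Surjective (fderiv ℂ (fun z' => f z' 0) z) :=
    (hf.and_eventually (eventually_zero_comp hinclude.continuousAt rfl
      h.analyticAt_f.eventually_analyticAt)).mono fun z hz =>
        surjective_fderiv_of_det_jacz_ne_zero hz.2.differentiableAt hz.1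
  have hpull := (hM'.linearlyNondegenerate_chiGrad hQ'.analyticAt).comp
    (analyticAt_chiGrad hQ'.analyticAt (by fun_prop) rfl)
    (h.analyticAt_f.fun_comp_of_eq hinclude rfl) h.f_zero hsurj
  intro v hv
  refine ((hpull v hv).and_eventually (eventually_zero_comp (e := fun z => (z, 0, 0))
    (by fun_prop) rfl hQ.2)).mono fun z hz => ?_
  simpa [segreLift, uncurry₃, hz.2.2, h.ft_zero, h.gt_zero] using hz.1

theorem IsHSPM.analyticAt_det_chiGrad_segreLift (h : IsHSPM Q Q' f g ft gt) (hQ : IsNormalDF Q)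
    (hQ' : IsNormalDF Q') :
    AnalyticAt ℂ (fun p : (Fin n → Fin n → ℂ) × (Fin n → ℂ) =>
      (Matrix.of fun i => chiGrad Q' (segreLift Q f ft gt (p.1 i, p.2, 0))).det) 0 :=
  analyticAt_det fun i => analyticAt_pi_iff.1 (analyticAt_chiGrad hQ'.analyticAt
    ((h.analyticAt_segreLift hQ).fun_comp_of_eq
      (analyticAt_mk_zero.fun_comp_of_eq
        ((analyticAt_pi_iff.1 analyticAt_fst i).prod analyticAt_snd) rfl) rfl)
    (h.segreLift_zero hQ))

theorem IsHSPM.frequently_segreFactor_ne_zero [NeZero n] (h : IsHSPM Q Q' f g ft gt)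
    (hQ : IsNormalDF Q) (hQ' : IsNormalDF Q') (hM' : FinNondeg Q')
    (hf : ∃ᶠ z in 𝓝 0, (jacz f z).det ≠ 0) (hft : ∃ᶠ χ in 𝓝 0, (jacz ft χ).det ≠ 0) :
    ∃ᶠ p : (Fin n → ℂ) × (Fin n → ℂ) in 𝓝 0, segreFactor Q Q' f g ft gt (p.1, p.2, 0) ≠ 0 := by
  intro hzero
  have hdet : ∃ᶠ p : (Fin n → Fin n → ℂ) × (Fin n → ℂ) in 𝓝 0,
      (Matrix.of fun i => chiGrad Q' (segreLift Q f ft gt (p.1 i, p.2, 0))).det ≠ 0 :=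
    frequently_of_zero_comp (e := fun zs => (zs, 0)) (by fun_prop) rfl
      (h.linearlyNondegenerate_chiGrad_segreLift hQ hQ' hM' hf).frequently_det_ne_zero
  have hdet_jacz : ∃ᶠ p : (Fin n → Fin n → ℂ) × (Fin n → ℂ) in 𝓝 0, (jacz ft p.2).det ≠ 0 :=
    frequently_of_zero_comp (e := fun χ => (0, χ)) (by fun_prop) rfl hft
  refine frequently_ne_zero_of_mul (h.analyticAt_det_chiGrad_segreLift hQ hQ')
    ((analyticAt_det (analyticAt_jacz h.analyticAt_ft)).fun_comp_of_eq analyticAt_snd rfl)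
    hdet hdet_jacz ?_
  filter_upwards [h.prod_segreFactor_mul_det_chiGrad hQ hQ', eventually_zero_comp
    (e := fun p : (Fin n → Fin n → ℂ) × (Fin n → ℂ) => (p.1 0, p.2)) (by fun_prop) rfl hzero]
    with p hp hzero_p
  rw [not_not, ← hp, Finset.prod_eq_zero (Finset.mem_univ 0) (not_not.1 hzero_p), zero_mul]

/-- The vector field `(-adj(f̃_χ) f̃_τ, det f̃_χ)` along `{τ = 0}` in the `(χ, τ)`-space, which
spans the kernel of `df̃` wherever `det f̃_χ ≠ 0`. -/
noncomputable def kernelField (ft : (Fin n → ℂ) → ℂ → Fin n → ℂ) (χ : Fin n → ℂ) :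
    (Fin n → ℂ) × ℂ :=
  (-(jacz ft χ).adjugate.mulVec (fderiv ℂ (Function.uncurry ft) (χ, 0) (0, 1)), (jacz ft χ).det)

theorem kernelField_eq_add (ft : (Fin n → ℂ) → ℂ → Fin n → ℂ) (χ : Fin n → ℂ) :
    kernelField ft χ = ((kernelField ft χ).1, 0) + (jacz ft χ).det • (0, 1) := by
  simp [kernelField]

theorem fderiv_kernelField {χ : Fin n → ℂ}
    (hft : DifferentiableAt ℂ (Function.uncurry ft) (χ, 0)) :
    fderiv ℂ (Function.uncurry ft) (χ, 0) (kernelField ft χ) = 0 := by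
  rw [kernelField_eq_add, map_add, map_smul, ← jacz_mulVec hft, kernelField, Matrix.mulVec_neg,
    Matrix.mulVec_mulVec, Matrix.mul_adjugate, Matrix.smul_mulVec, Matrix.one_mulVec,
    neg_add_cancel]

theorem analyticAt_kernelField (hft : AnalyticAt ℂ (Function.uncurry ft) 0) :
    AnalyticAt ℂ (kernelField ft) 0 := by
  have hJ := analyticAt_jacz hft
  have hftτ : AnalyticAt ℂ (fun χ => fderiv ℂ (Function.uncurry ft) (χ, 0) (0, 1)) 0 :=
    analyticAt_fderiv_apply hft (by fun_prop) analyticAt_const rfl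
  have hadj : AnalyticAt ℂ (fun χ => (jacz ft χ).adjugate.mulVec
      (fderiv ℂ (Function.uncurry ft) (χ, 0) (0, 1))) 0 := by
    refine analyticAt_pi_iff.2 fun i => ?_
    simp only [Matrix.mulVec, dotProduct]
    exact Finset.analyticAt_fun_sum _ fun j _ =>
      (analyticAt_adjugate hJ i j).mul (analyticAt_pi_iff.1 hftτ j)
  exact hadj.neg.prod (analyticAt_det hJ)

theorem IsHSPM.segreFactor_mul_fderiv_kernelField (h : IsHSPM Q Q' f g ft gt) (hQ : IsNormalDF Q)
    (hQ' : IsNormalDF Q') : ∀ᶠ p : (Fin n → ℂ) × (Fin n → ℂ) in 𝓝 0,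
      segreFactor Q Q' f g ft gt (p.1, p.2, 0) *
          fderiv ℂ (uncurry₃ Q) (p.1, p.2, 0) (0, kernelField ft p.2) =
        fderiv ℂ (uncurry₃ Q') (segreLift Q f ft gt (p.1, p.2, 0)) (0, 0, 1) *
          ((jacz ft p.2).det * fderiv ℂ (Function.uncurry gt) (p.2, 0) (0, 1)) := by
  filter_upwards [eventually_zero_comp (e := fun p => (p.1, p.2, 0)) (by fun_prop) rfl
      (h.segreFactor_mul_fderiv hQ hQ'),
    eventually_zero_comp continuousAt_snd rfl (h.fderiv_gt_eq_zero hQ hQ'),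
    eventually_zero_comp (e := fun p => (p.2, 0)) (by fun_prop) rfl
      h.analyticAt_ft.eventually_analyticAt] with p hS hgt hft
  have hgt_kernel : fderiv ℂ (Function.uncurry gt) (p.2, 0) (kernelField ft p.2) =
      (jacz ft p.2).det * fderiv ℂ (Function.uncurry gt) (p.2, 0) (0, 1) := by
    rw [kernelField_eq_add, map_add, map_smul, hgt, zero_add, smul_eq_mul]
  have hscale (c : ℂ) : ((0 : Fin n → ℂ), (0 : Fin n → ℂ), c) = c • (0, 0, 1) := by simp
  rw [hS, fderiv_kernelField hft.differentiableAt, hgt_kernel, hscale, map_smul, smul_eq_mul,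
    mul_comm]

theorem analyticAt_fderiv_kernelField (hQ : IsNormalDF Q)
    (hft : AnalyticAt ℂ (Function.uncurry ft) 0) :
    AnalyticAt ℂ (fun p : (Fin n → ℂ) × (Fin n → ℂ) =>
      fderiv ℂ (uncurry₃ Q) (p.1, p.2, 0) (0, kernelField ft p.2)) 0 :=
  analyticAt_fderiv_apply hQ.analyticAt analyticAt_mk_zero
    (analyticAt_const.prod ((analyticAt_kernelField hft).fun_comp_of_eq analyticAt_snd rfl)) rfl

theorem IsHSPM.frequently_fderiv_gt_ne_zero [NeZero n] (h : IsHSPM Q Q' f g ft gt)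
    (hQ : IsNormalDF Q) (hQ' : IsNormalDF Q') (hM' : FinNondeg Q')
    (hf : ∃ᶠ z in 𝓝 0, (jacz f z).det ≠ 0) (hft : ∃ᶠ χ in 𝓝 0, (jacz ft χ).det ≠ 0) :
    ∃ᶠ χ in 𝓝 0, fderiv ℂ (Function.uncurry gt) (χ, 0) (0, 1) ≠ 0 := by
  intro hgt
  have hkernel : ∃ᶠ p : (Fin n → ℂ) × (Fin n → ℂ) in 𝓝 0,
      fderiv ℂ (uncurry₃ Q) (p.1, p.2, 0) (0, kernelField ft p.2) ≠ 0 :=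
    frequently_of_zero_comp (e := fun χ => (0, χ)) (by fun_prop) rfl
      ((hft.and_eventually (eventually_zero_comp (e := fun χ => (χ, 0)) (by fun_prop) rfl
        hQ.fderiv_zero_left)).mono fun χ hχ => (hχ.2 _).trans_ne hχ.1)
  refine frequently_ne_zero_of_mul
    (a := fun p : (Fin n → ℂ) × (Fin n → ℂ) => segreFactor Q Q' f g ft gt (p.1, p.2, 0))
    ((h.analyticAt_segreFactor hQ hQ').fun_comp_of_eq analyticAt_mk_zero rfl)
    (analyticAt_fderiv_kernelField hQ h.analyticAt_ft)
    (h.frequently_segreFactor_ne_zero hQ hQ' hM' hf hft) hkernel ?_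
  filter_upwards [h.segreFactor_mul_fderiv_kernelField hQ hQ',
    eventually_zero_comp continuousAt_snd rfl hgt] with p hp hgt_p
  rw [not_not, hp, not_not.1 hgt_p, mul_zero, mul_zero]

theorem IsHSPM.segreFactor_eq_fderiv_g (h : IsHSPM Q Q' f g ft gt) (hQ : IsNormalDF Q)
    (hQ' : IsNormalDF Q') : ∀ᶠ z in 𝓝 0,
      segreFactor Q Q' f g ft gt (z, 0, 0) = fderiv ℂ (Function.uncurry g) (z, 0) (0, 1) := by
  have hfz : ContinuousAt (fun z => f z 0) 0 :=
    h.analyticAt_f.continuousAt.comp_of_eq (f := fun z => (z, 0)) (by fun_prop) rfl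
  filter_upwards [eventually_zero_comp (e := fun z => (z, 0, 0)) (by fun_prop) rfl hQ.2,
    eventually_zero_comp hfz h.f_zero hQ'.fderiv_zero_right] with z hz hfz
  simp only [segreFactor, segreLift, uncurry₃, hz.2, h.ft_zero, h.gt_zero]
  exact (congrArg _ (hfz _)).trans (sub_zero _)

theorem IsHSPM.segreFactor_zero_ne_zero [NeZero n] (h : IsHSPM Q Q' f g ft gt)
    (hQ : IsNormalDF Q) (hQ' : IsNormalDF Q') (hM' : FinNondeg Q')
    (hf : ∃ᶠ z in 𝓝 0, (jacz f z).det ≠ 0) (hft : ∃ᶠ χ in 𝓝 0, (jacz ft χ).det ≠ 0)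
    (hg : ∃ᶠ z in 𝓝 0, fderiv ℂ (Function.uncurry g) (z, 0) (0, 1) ≠ 0) :
    segreFactor Q Q' f g ft gt 0 ≠ 0 := by
  have hgtτ : AnalyticAt ℂ (fun χ => fderiv ℂ (Function.uncurry gt) (χ, 0) (0, 1)) 0 :=
    analyticAt_fderiv_apply h.analyticAt_gt (by fun_prop) analyticAt_const rfl
  have hψ := analyticAt_det (analyticAt_jacz h.analyticAt_ft)
  have hslice : AnalyticAt ℂ
      (fun p : (Fin n → ℂ) × (Fin n → ℂ) => segreLift Q f ft gt (p.1, p.2, 0)) 0 :=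
    (h.analyticAt_segreLift hQ).fun_comp_of_eq analyticAt_mk_zero rfl
  have hunit : fderiv ℂ (uncurry₃ Q') (segreLift Q f ft gt 0) (0, 0, 1) ≠ 0 := by
    rw [h.segreLift_zero hQ]
    exact (hQ'.fderiv_zero_left.self_of_nhds (0, 1)).trans_ne one_ne_zero
  exact ne_zero_of_mul_eq_unit_mul_snd
    (S := fun p => segreFactor Q Q' f g ft gt (p.1, p.2, 0))
    ((h.analyticAt_segreFactor hQ hQ').fun_comp_of_eq analyticAt_mk_zero rfl)
    (analyticAt_fderiv_kernelField hQ h.analyticAt_ft)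
    (analyticAt_fderiv_apply hQ'.analyticAt hslice analyticAt_const (h.segreLift_zero hQ))
    (hψ.mul hgtτ) (h.segreFactor_mul_fderiv_kernelField hQ hQ') hunit
    (frequently_ne_zero_of_mul hψ hgtτ hft (h.frequently_fderiv_gt_ne_zero hQ hQ' hM' hf hft))
    ((hg.and_eventually (h.segreFactor_eq_fderiv_g hQ hQ')).mono fun z hz => hz.2.trans_ne hz.1)

theorem IsHSPM.analyticAt_prod_segreFactor (h : IsHSPM Q Q' f g ft gt) (hQ : IsNormalDF Q)
    (hQ' : IsNormalDF Q') :
    AnalyticAt ℂ (fun p : (Fin n → Fin n → ℂ) × (Fin n → ℂ) =>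
      ∏ i, segreFactor Q Q' f g ft gt (p.1 i, p.2, 0)) 0 :=
  Finset.analyticAt_fun_prod _ fun i _ => (h.analyticAt_segreFactor hQ hQ').fun_comp_of_eq
    (analyticAt_mk_zero.fun_comp_of_eq
      ((analyticAt_pi_iff.1 analyticAt_fst i).prod analyticAt_snd) rfl) rfl

theorem IsHSPM.frequently_prod_segreFactor_mul_det_chiGrad_ne_zero
    {f₁ ft₁ f₂ ft₂ : (Fin n → ℂ) → ℂ → Fin n → ℂ} {g₁ gt₁ g₂ gt₂ : (Fin n → ℂ) → ℂ → ℂ}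
    (h₁ : IsHSPM Q Q' f₁ g₁ ft₁ gt₁) (h₂ : IsHSPM Q Q' f₂ g₂ ft₂ gt₂) (hQ : IsNormalDF Q)
    (hQ' : IsNormalDF Q') (hM' : FinNondeg Q') (hf₂ : ∃ᶠ z in 𝓝 0, (jacz f₂ z).det ≠ 0)
    (hS₁ : segreFactor Q Q' f₁ g₁ ft₁ gt₁ 0 ≠ 0) :
    ∃ᶠ zs : Fin n → Fin n → ℂ in 𝓝 0, (∏ i, segreFactor Q Q' f₁ g₁ ft₁ gt₁ (zs i, 0, 0)) *
      (Matrix.of fun i => chiGrad Q' (segreLift Q f₂ ft₂ gt₂ (zs i, 0, 0))).det ≠ 0 := by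
  have hprod : ∀ᶠ zs : Fin n → Fin n → ℂ in 𝓝 0,
      ∏ i, segreFactor Q Q' f₁ g₁ ft₁ gt₁ (zs i, 0, 0) ≠ 0 := by
    simp only [Finset.prod_ne_zero_iff, Finset.mem_univ, true_imp_iff]
    exact eventually_all.2 fun i => eventually_zero_comp
      (e := fun zs : Fin n → Fin n → ℂ => (zs i, 0, 0))
      ((continuousAt_apply i 0).prodMk continuousAt_const) rfl
      ((h₁.analyticAt_segreFactor hQ hQ').continuousAt.eventually_ne hS₁)
  exact ((h₂.linearlyNondegenerate_chiGrad_segreLift hQ hQ' hM' hf₂).frequently_det_ne_zero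
    |>.and_eventually hprod).mono fun zs hzs => mul_ne_zero hzs.2 hzs.1

theorem IsHSPM.exists_det_jacz_eq_unit_mul {f₁ ft₁ f₂ ft₂ : (Fin n → ℂ) → ℂ → Fin n → ℂ}
    {g₁ gt₁ g₂ gt₂ : (Fin n → ℂ) → ℂ → ℂ} (h₁ : IsHSPM Q Q' f₁ g₁ ft₁ gt₁)
    (h₂ : IsHSPM Q Q' f₂ g₂ ft₂ gt₂) (hQ : IsNormalDF Q) (hQ' : IsNormalDF Q')
    (hM' : FinNondeg Q') (hf₁ : ∃ᶠ z in 𝓝 0, (jacz f₁ z).det ≠ 0)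
    (hf₂ : ∃ᶠ z in 𝓝 0, (jacz f₂ z).det ≠ 0) (hS₁ : segreFactor Q Q' f₁ g₁ ft₁ gt₁ 0 ≠ 0)
    (hS₂ : segreFactor Q Q' f₂ g₂ ft₂ gt₂ 0 ≠ 0) :
    ∃ U : (Fin n → ℂ) → ℂ, AnalyticAt ℂ U 0 ∧ U 0 ≠ 0 ∧
      (fun χ => (jacz ft₁ χ).det) =ᶠ[𝓝 0] fun χ => U χ * (jacz ft₂ χ).det := by
  refine exists_eq_unit_mul_of_mul_snd_eq (φ := fun χ => (jacz ft₁ χ).det)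
    (ψ := fun χ => (jacz ft₂ χ).det)
    ((h₂.analyticAt_prod_segreFactor hQ hQ').fun_mul (h₁.analyticAt_det_chiGrad_segreLift hQ hQ'))
    ((h₁.analyticAt_prod_segreFactor hQ hQ').fun_mul (h₂.analyticAt_det_chiGrad_segreLift hQ hQ'))
    (h₂.frequently_prod_segreFactor_mul_det_chiGrad_ne_zero h₁ hQ hQ' hM' hf₁ hS₂)
    (h₁.frequently_prod_segreFactor_mul_det_chiGrad_ne_zero h₂ hQ hQ' hM' hf₂ hS₁) ?_
  filter_upwards [h₁.prod_segreFactor_mul_det_chiGrad hQ hQ',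
    h₂.prod_segreFactor_mul_det_chiGrad hQ hQ'] with p hp₁ hp₂
  rw [mul_assoc, ← hp₁, mul_assoc, ← hp₂, mul_left_comm]

end SegreDeterminants

section ConjugateMap

variable {Q Q' : (Fin n → ℂ) → (Fin n → ℂ) → ℂ → ℂ} {f ft : (Fin n → ℂ) → ℂ → Fin n → ℂ}
  {g gt : (Fin n → ℂ) → ℂ → ℂ}

/-- The conjugate of a function of `(z, w)`, the two-variable analogue of `QBar`. -/
def conj₂ {W : Type*} [Star W] (F : (Fin n → ℂ) → ℂ → W) : (Fin n → ℂ) → ℂ → W :=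
  fun z w => star (F (star z) (star w))

theorem eventually_analyticAt_conj₂ {W : Type*} [NormedAddCommGroup W] [NormedSpace ℂ W]
    [StarAddMonoid W] [NormedStarGroup W] [StarModule ℂ W] [CompleteSpace W]
    {F : (Fin n → ℂ) → ℂ → W} (hF : AnalyticAt ℂ (Function.uncurry F) 0) :
    ∀ᶠ p in 𝓝 0, AnalyticAt ℂ (Function.uncurry (conj₂ F)) p :=
  AnalyticAt.eventually_analyticAt (analyticAt_star_star_s4 hF (star_zero _))

theorem IsRealNormalDF.apply_star (hQ : IsRealNormalDF Q) :
    ∀ᶠ p in 𝓝 0, Q (star p.2.1) (star p.1) (star (uncurry₃ Q p)) = star p.2.2 := by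
  filter_upwards [eventually_zero_comp (e := fun p => (star p.2.1, star p.1, star p.2.2))
    (by fun_prop) (by simp [← Prod.zero_eq_mk]) hQ.2] with p hp
  have hQBar : QBar Q (star p.1) (star p.2.1) (star p.2.2) = star (uncurry₃ Q p) := by
    simp only [QBar, uncurry₃, starRingEnd_apply, star_star]
    rw [show conjV (star p.1) = p.1 from star_star _,
      show conjV (star p.2.1) = p.2.1 from star_star _]
  rwa [hQBar] at hp

theorem IsHSPM.conj (h : IsHSPM Q Q' f g ft gt) (hQ : IsRealNormalDF Q)
    (hQ' : IsRealNormalDF Q') : IsHSPM Q Q' (conj₂ ft) (conj₂ gt) (conj₂ f) (conj₂ g) := by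
  refine ⟨eventually_analyticAt_conj₂ h.analyticAt_ft, eventually_analyticAt_conj₂ h.analyticAt_gt,
    eventually_analyticAt_conj₂ h.analyticAt_f, eventually_analyticAt_conj₂ h.analyticAt_g,
    by simp [conj₂, h.ft_zero], by simp [conj₂, h.gt_zero], by simp [conj₂, h.f_zero],
    by simp [conj₂, h.g_zero], ?_⟩
  have hswap : ContinuousAt (fun p => (star p.2.1, star p.1, star (uncurry₃ Q p))) 0 := by
    have := hQ.1.analyticAt.continuousAt
    fun_prop
  have hswap0 : (star (0 : Fin n → ℂ), star (0 : Fin n → ℂ), star (uncurry₃ Q 0)) = 0 := by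
    simp [hQ.1.apply_zero, ← Prod.zero_eq_mk]
  filter_upwards [hQ.apply_star, eventually_zero_comp hswap hswap0 h.comp_segreLift,
    eventually_zero_comp hswap hswap0 (eventually_zero_comp
      (h.analyticAt_segreLift hQ.1).continuousAt (h.segreLift_zero hQ.1) hQ'.apply_star)]
    with p hreal hcomp hreal'
  rw [← hcomp] at hreal'
  simp only [uncurry₃, segreLift] at hreal hreal'
  rw [hreal] at hreal'
  exact hreal'.symm

theorem jacz_conj₂ (f : (Fin n → ℂ) → ℂ → Fin n → ℂ) (z : Fin n → ℂ) :
    jacz (conj₂ f) z = (jacz f (star z)).map (starRingEnd ℂ) := by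
  ext i j
  have hsingle : star (Pi.single j 1 : Fin n → ℂ) = Pi.single j 1 := by
    rw [← Pi.single_star, star_one]
  simp only [jacz, pd, conj₂, Matrix.of_apply, Matrix.map_apply, star_zero, Pi.star_apply]
  rw [fderiv_star_star_apply (fun z' => f z' 0 i), hsingle, starRingEnd_apply]

theorem det_jacz_conj₂ (f : (Fin n → ℂ) → ℂ → Fin n → ℂ) (z : Fin n → ℂ) :
    (jacz (conj₂ f) z).det = star ((jacz f (star z)).det) := by
  rw [jacz_conj₂]
  exact (RingHom.map_det _ _).symm

theorem frequently_det_jacz_conj₂_ne_zero (hf : ∃ᶠ z in 𝓝 0, (jacz f z).det ≠ 0) :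
    ∃ᶠ z in 𝓝 0, (jacz (conj₂ f) z).det ≠ 0 := by
  simpa only [det_jacz_conj₂] using frequently_star_ne_zero hf

theorem IsHSPM.frequently_fderiv_g_ne_zero [NeZero n] (h : IsHSPM Q Q' f g ft gt)
    (hQ : IsRealNormalDF Q) (hQ' : IsRealNormalDF Q') (hM' : FinNondeg Q')
    (hf : ∃ᶠ z in 𝓝 0, (jacz f z).det ≠ 0) (hft : ∃ᶠ χ in 𝓝 0, (jacz ft χ).det ≠ 0) :
    ∃ᶠ z in 𝓝 0, fderiv ℂ (Function.uncurry g) (z, 0) (0, 1) ≠ 0 := by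
  have hconj := (h.conj hQ hQ').frequently_fderiv_gt_ne_zero hQ.1 hQ'.1 hM'
    (frequently_det_jacz_conj₂_ne_zero hft) (frequently_det_jacz_conj₂_ne_zero hf)
  refine (frequently_star_ne_zero hconj).mono fun z hz => ?_
  have hfderiv : fderiv ℂ (Function.uncurry (conj₂ g)) (star z, 0) (0, 1) =
      star (fderiv ℂ (Function.uncurry g) (z, 0) (0, 1)) := by
    refine (fderiv_star_star_apply (Function.uncurry g) _ _).trans ?_
    simp [Prod.star_def]
  rwa [hfderiv, star_star] at hz

theorem IsHSPM.exists_det_jacz_conj₂_eq_unit_mul [NeZero n] (h : IsHSPM Q Q' f g ft gt)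
    (hQ : IsRealNormalDF Q) (hQ' : IsRealNormalDF Q') (hM' : FinNondeg Q')
    (hf : ∃ᶠ z in 𝓝 0, (jacz f z).det ≠ 0) (hft : ∃ᶠ χ in 𝓝 0, (jacz ft χ).det ≠ 0) :
    ∃ U : (Fin n → ℂ) → ℂ, AnalyticAt ℂ U 0 ∧ U 0 ≠ 0 ∧
      (fun z => (jacz (conj₂ f) z).det) =ᶠ[𝓝 0] fun z => U z * (jacz ft z).det := by
  have hS {f ft : (Fin n → ℂ) → ℂ → Fin n → ℂ} {g gt : (Fin n → ℂ) → ℂ → ℂ}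
      (h : IsHSPM Q Q' f g ft gt) (hf : ∃ᶠ z in 𝓝 0, (jacz f z).det ≠ 0)
      (hft : ∃ᶠ χ in 𝓝 0, (jacz ft χ).det ≠ 0) : segreFactor Q Q' f g ft gt 0 ≠ 0 :=
    h.segreFactor_zero_ne_zero hQ.1 hQ'.1 hM' hf hft
      (h.frequently_fderiv_g_ne_zero hQ hQ' hM' hf hft)
  have hf_conj := frequently_det_jacz_conj₂_ne_zero hf
  have hft_conj := frequently_det_jacz_conj₂_ne_zero hft
  exact (h.conj hQ hQ').exists_det_jacz_eq_unit_mul h hQ.1 hQ'.1 hM' hft_conj hf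
    (hS (h.conj hQ hQ') hft_conj hf_conj) (hS h hf hft)

end ConjugateMap

/-- Theorem 1.5: if `M'` is finitely nondegenerate at `0` and `ℋ` is totally
Segre nondegenerate at `0`, then the orders of vanishing of `det f_z(·,0)` and `det f̃_χ(·,0)`
agree, and their lowest order homogeneous Taylor terms agree up to conjugation and a nonzero
constant factor. -/
theorem statement4 (n : ℕ) (hn : 1 ≤ n)
    (Q Q' : (Fin n → ℂ) → (Fin n → ℂ) → ℂ → ℂ)
    (hQ : IsRealNormalDF Q) (hQ' : IsRealNormalDF Q')
    (hM' : FinNondeg Q')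
    (f ft : (Fin n → ℂ) → ℂ → Fin n → ℂ) (g gt : (Fin n → ℂ) → ℂ → ℂ)
    (hH : IsHSPM Q Q' f g ft gt)
    (hnd : TotallySegreNondeg f ft) :
    vanishOrder (fun z => (jacz f z).det) = vanishOrder (fun χ => (jacz ft χ).det) ∧
    ∃ c : ℂ, c ≠ 0 ∧ ∀ z : Fin n → ℂ,
      homogTerm (vanishOrder (fun z' => (jacz f z').det)) (fun z' => (jacz f z').det) z =
        c * starRingEnd ℂ
          (homogTerm (vanishOrder (fun χ => (jacz ft χ).det)) (fun χ => (jacz ft χ).det)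
            (conjV z)) := by
  have : NeZero n := ⟨Nat.one_le_iff_ne_zero.1 hn⟩
  have hf : ∃ᶠ z in 𝓝 0, (jacz f z).det ≠ 0 := not_eventually.1 hnd.1
  have hft : ∃ᶠ χ in 𝓝 0, (jacz ft χ).det ≠ 0 := not_eventually.1 hnd.2
  have hφ := analyticAt_det (analyticAt_jacz hH.analyticAt_f)
  have hψ := analyticAt_det (analyticAt_jacz hH.analyticAt_ft)
  obtain ⟨U, hU, hU0, hUψ⟩ := hH.exists_det_jacz_conj₂_eq_unit_mul hQ hQ' hM' hf hft
  simp only [det_jacz_conj₂] at hUψ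
  set φ := fun z => (jacz f z).det
  set ψ := fun χ => (jacz ft χ).det
  have horder : vanishOrder φ = vanishOrder ψ := by
    rw [← vanishOrder_star_star hφ, vanishOrder_congr hUψ, vanishOrder_unit_mul hU hψ hU0 hft]
  refine ⟨horder, star (U 0), star_ne_zero.2 hU0, fun z => ?_⟩
  have hterm : star (homogTerm (vanishOrder ψ) φ z) =
      U 0 * homogTerm (vanishOrder ψ) ψ (star z) := by
    rw [← homogTerm_mul_of_forall_lt hU hψ fun i hi =>
        congrFun (homogTerm_eq_zero_of_lt_vanishOrder hi) _,
      ← homogTerm_congr hUψ, homogTerm_star_star hφ, star_star]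
  rw [horder, ← star_star (homogTerm _ φ z), hterm, star_mul']
  rfl

end HSPMpaper
end
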